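/- arXiv:2512.23668 — 3 statements merged into one kernel-verified Lean document; each statement's English description precedes it below -/
import Mathlib

section
/- For positive integers a, b, c, the multiple zeta value identity ζ({2}^{a-1},3,{2}^{c-1},1,{2}^b) = ζ({2}^{a+b+c}) + ζ({2}^{a-1},3,{2}^{b-1},3,{2}^{c-1}) + ζ({2}^{b-1},3,{2}^{a-1},3,{2}^{c-1}) holds. -/
/-- The multiple zeta value `ζ(k₁,…,k_r) = ∑_{0<n₁<⋯<n_r} 1/(n₁^{k₁}⋯n_r^{k_r})`,
expressed as a `tsum` over tuples of positive, strictly increasing integers. -/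
noncomputable def mzv (ks : List ℕ) : ℝ :=
  ∑' n : Fin ks.length → ℕ,
    if (∀ i j : Fin ks.length, i < j → n i < n j) ∧ (∀ i, 0 < n i) then
      ∏ i, (1 : ℝ) / (n i : ℝ) ^ ks.get i
    else 0

open scoped ENNReal

namespace HS

noncomputable def rr (k n : ℕ) : ℝ≥0∞ := ENNReal.ofReal (1 / (n : ℝ) ^ k)

noncomputable def Z : List ℕ → ℕ → ℝ≥0∞
  | [], _ => 1
  | k :: ks, m => ∑' n : ℕ, if m < n then rr k n * Z ks n else 0

lemma Z_eq (ks : List ℕ) : ∀ m : ℕ, (∑' n : Fin ks.length → ℕ,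
    if (∀ i j : Fin ks.length, i < j → n i < n j) ∧ (∀ i, m < n i) then
      ∏ i, rr (ks.get i) (n i) else 0) = Z ks m := by
  induction ks with
  | nil => intro m; simp [Z]
  | cons k ks ih =>
    intro m
    rw [Z]
    have e := (Fin.consEquiv (fun _ : Fin (ks.length + 1) => ℕ)).tsum_eq
      (fun n : Fin (ks.length + 1) → ℕ =>
        if (∀ i j : Fin (ks.length+1), i < j → n i < n j) ∧ (∀ i, m < n i) then
      ∏ i, rr ((k :: ks).get i) (n i) else 0)
    refine e.symm.trans ?_
    rw [ENNReal.tsum_prod']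
    refine tsum_congr fun a => ?_
    rw [← ih a]
    split_ifs with h
    · rw [← ENNReal.tsum_mul_left]
      refine tsum_congr fun f => ?_
      rw [mul_ite, mul_zero]
      refine if_congr ?_ ((Fin.prod_univ_succ _).trans (by simp [Fin.consEquiv])) rfl
      change ((∀ i j : Fin (ks.length + 1), i < j →
        (Fin.cons a f : Fin (ks.length + 1) → ℕ) i < (Fin.cons a f : Fin (ks.length + 1) → ℕ) j) ∧
        ∀ i, m < (Fin.cons a f : Fin (ks.length + 1) → ℕ) i) ↔ _
      constructor
      · rintro ⟨h1, h2⟩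
        refine ⟨fun i j hij => ?_, fun i => ?_⟩
        · simpa using h1 i.succ j.succ (by simpa using hij)
        · simpa using h1 0 i.succ (Fin.succ_pos i)
      · rintro ⟨h1, h2⟩
        refine ⟨fun i j => ?_, fun i => ?_⟩
        · refine Fin.cases ?_ (fun i => ?_) i <;> refine Fin.cases ?_ (fun j => ?_) j
          · simp
          · intro _; simpa using h2 j
          · simp
          · intro hij; simpa using h1 i j (by simpa using hij)
        · refine Fin.cases ?_ (fun i => ?_) i
          · simpa using h
          · simpa using h.trans (h2 i)
    · rw [ENNReal.tsum_eq_zero]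
      intro f
      rw [if_neg]
      rintro ⟨-, h2⟩
      exact h (by simpa [Fin.consEquiv] using h2 0)

lemma mzv_eq (ks : List ℕ) : mzv ks = (Z ks 0).toReal := by
  rw [← Z_eq, ENNReal.tsum_toReal_eq, mzv]
  · refine tsum_congr fun n => ?_
    split_ifs
    · rw [ENNReal.toReal_prod]
      refine Finset.prod_congr rfl fun i _ => ?_
      rw [rr, ENNReal.toReal_ofReal (by positivity)]
    · simp
  · intro n
    split_ifs
    · exact ENNReal.prod_ne_top fun i _ => ENNReal.ofReal_ne_top
    · simp

lemma rr_le (k n : ℕ) (hk : 2 ≤ k) : rr k n ≤ rr 2 n := by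
  refine ENNReal.ofReal_le_ofReal ?_
  rcases Nat.eq_zero_or_pos n with rfl | hn
  · simp [show k ≠ 0 by omega]
  · have : (1:ℝ) ≤ n := by exact_mod_cast hn
    gcongr

lemma rr2_fin : (∑' n, rr 2 n) ≠ ⊤ := by
  have : Summable fun n : ℕ => 1 / (n : ℝ) ^ 2 := Real.summable_one_div_nat_pow.2 (by norm_num)
  exact this.tsum_ofReal_ne_top

lemma Z_le (ks : List ℕ) (h : ∀ k ∈ ks, 2 ≤ k) : ∀ m, Z ks m ≤ (∑' n, rr 2 n) ^ ks.length := by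
  induction ks with
  | nil => intro m; simp [Z]
  | cons k ks ih =>
    intro m
    have ih := ih fun k hk => h k (by simp [hk])
    rw [Z, List.length_cons, pow_succ', ← ENNReal.tsum_mul_right]
    refine ENNReal.tsum_le_tsum fun n => ?_
    split_ifs
    · exact mul_le_mul' (rr_le k n (h k (by simp))) (ih n)
    · simp

lemma Z_fin (ks : List ℕ) (h : ∀ k ∈ ks, 2 ≤ k) (m) : Z ks m ≠ ⊤ :=
  ne_top_of_le_ne_top (ENNReal.pow_ne_top rr2_fin) (Z_le ks h m)

noncomputable def ee : ℕ → ℕ → ℕ → ℝ≥0∞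
  | 0, _, _ => 1
  | k + 1, m, n => ∑' i : ℕ, if m < i ∧ i < n then ee k m i * rr 2 i else 0

lemma Z_rep (k : ℕ) : ∀ (s : ℕ) (ls : List ℕ) (m : ℕ), Z (List.replicate k 2 ++ s :: ls) m =
    ∑' n : ℕ, if m < n then ee k m n * rr s n * Z ls n else 0 := by
  induction k with
  | zero => intro s ls m; simp [Z, ee]
  | succ k ih =>
    intro s ls m
    rw [List.replicate_succ', List.append_assoc, List.singleton_append, ih]
    simp only [Z, ee]
    have h1 : ∀ n, (if m < n then ee k m n * rr 2 n *
        (∑' n_1, if n < n_1 then rr s n_1 * Z ls n_1 else 0) else 0) =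
        ∑' i, if m < n ∧ n < i then ee k m n * rr 2 n * (rr s i * Z ls i) else 0 := by
      intro n
      split_ifs with h
      · rw [← ENNReal.tsum_mul_left]
        refine tsum_congr fun i => ?_
        simp [h]
      · simp [h]
    simp_rw [h1]
    rw [ENNReal.tsum_comm]
    refine tsum_congr fun n => ?_
    split_ifs with h
    · rw [mul_assoc, ← ENNReal.tsum_mul_right]
      refine tsum_congr fun i => ?_
      split_ifs <;> simp
    · rw [ENNReal.tsum_eq_zero]
      intro i
      rw [if_neg]; omega

/-- telescoping -/
lemma tele_fin (g : ℕ → ℝ) (h : ∀ i, g i ≤ g (i+1)) (h0 : g 0 = 0) (n : ℕ) :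
    ∑' i : ℕ, (if i < n then ENNReal.ofReal (g i - g (i-1)) else 0) = ENNReal.ofReal (g (n-1)) := by
  rw [tsum_eq_sum (s := Finset.range n) (by intro b hb; simp at hb; simp [hb])]
  induction n with
  | zero => simp [h0]
  | succ n ih =>
    rw [Finset.sum_range_succ]
    have : ∑ i ∈ Finset.range n, (if i < n + 1 then ENNReal.ofReal (g i - g (i-1)) else 0)
        = ∑ i ∈ Finset.range n, (if i < n then ENNReal.ofReal (g i - g (i-1)) else 0) := by
      refine Finset.sum_congr rfl fun i hi => ?_
      simp at hi
      simp [hi, hi.trans (Nat.lt_succ_self n)]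
    have hm : Monotone g := monotone_nat_of_le_succ h
    rw [this, ih, if_pos (Nat.lt_succ_self n), ← ENNReal.ofReal_add]
    · simp
    · rw [← h0]; exact hm (Nat.zero_le _)
    · exact sub_nonneg.2 (hm (Nat.sub_le _ _))

lemma tele_inf (g : ℕ → ℝ) (h : ∀ i, g i ≤ g (i+1)) (h0 : g 0 = 0) (L : ℝ)
    (hL : Filter.Tendsto g Filter.atTop (nhds L)) :
    ∑' i : ℕ, ENNReal.ofReal (g i - g (i-1)) = ENNReal.ofReal L := by
  have h1 := ENNReal.tendsto_nat_tsum (fun i => ENNReal.ofReal (g i - g (i-1)))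
  have h2 : ∀ n, ∑ i ∈ Finset.range n, ENNReal.ofReal (g i - g (i-1)) =
      ENNReal.ofReal (g (n-1)) := by
    intro n
    rw [← tele_fin g h h0 n, tsum_eq_sum (s := Finset.range n) (by intro b hb; simp at hb; simp [hb])]
    refine Finset.sum_congr rfl fun i hi => ?_
    simp at hi
    simp [hi]
  simp_rw [h2] at h1
  refine tendsto_nhds_unique h1 ?_
  exact (ENNReal.tendsto_ofReal hL).comp (Filter.tendsto_sub_atTop_nat 1)

lemma tele_down (g : ℕ → ℝ) (h : ∀ i, g (i+1) ≤ g i)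
    (hL : Filter.Tendsto g Filter.atTop (nhds 0)) (m : ℕ) :
    ∑' i : ℕ, (if m < i then ENNReal.ofReal (g (i-1) - g i) else 0) = ENNReal.ofReal (g m) := by
  have hm : Antitone g := antitone_nat_of_succ_le h
  have := tele_inf (fun i => g m - g (max i m)) (fun i => by
      have := hm (show max i m ≤ max (i+1) m by omega); linarith) (by simp) (g m) (by
      have : Filter.Tendsto (fun i => g (max i m)) Filter.atTop (nhds 0) :=
        hL.comp (Filter.tendsto_atTop_mono (fun i => le_max_left i m) Filter.tendsto_id)
      simpa using this.const_sub (g m))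
  rw [← this]
  refine tsum_congr fun i => ?_
  split_ifs with hi
  · congr 1
    rw [max_eq_left (by omega : m ≤ i), max_eq_left (by omega : m ≤ i - 1)]; ring
  · rw [max_eq_right (by omega), max_eq_right (by omega)]; simp

open Nat in
noncomputable def ph (p q N : ℕ) : ℝ :=
  if p + q ≤ N then ((p ! : ℝ) * q ! * (N - p)! * (N - q)!) / ((p + q)! * N ! * (N - p - q)!) else 0

open Nat in
noncomputable def vv (p q n : ℕ) : ℝ :=
  if p + q ≤ n then ((p : ℝ) * q * n * p ! * q ! * (n - p - 1)! * (n - q - 1)!) /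
    ((p + q)! * (n - 1)! * (n - p - q)!) else 0

open Nat in
noncomputable def ff (p q : ℕ) : ℝ := (p ! * q ! : ℝ) / (p + q)!

lemma ph_nonneg (p q n) : 0 ≤ ph p q n := by unfold ph; split_ifs <;> positivity
lemma vv_nonneg (p q n) : 0 ≤ vv p q n := by unfold vv; split_ifs <;> positivity
lemma ff_nonneg (p q) : 0 ≤ ff p q := by unfold ff; positivity

lemma ph_symm (p q n) : ph p q n = ph q p n := by
  unfold ph
  rw [add_comm q p, Nat.sub_right_comm n q p]
  split_ifs
  · congr 1; ring
  · rfl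

lemma vv_symm (p q n) : vv p q n = vv q p n := by
  unfold vv
  rw [add_comm q p, Nat.sub_right_comm n q p]
  split_ifs
  · congr 1; ring
  · rfl

lemma ph_zero_of (p q n) (h : n < p + q) : ph p q n = 0 := by
  unfold ph; rw [if_neg (by omega)]

lemma vv_zero_of (p q n) (h : n < p + q) : vv p q n = 0 := by
  unfold vv; rw [if_neg (by omega)]

open Nat in
lemma ph_add (p q k : ℕ) : ph p q (p + q + k) =
    ((p ! : ℝ) * q ! * (q + k)! * (p + k)!) / ((p + q)! * (p + q + k)! * k !) := by
  unfold ph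
  rw [if_pos (by omega), show p + q + k - p = q + k by omega, show p + q + k - q = p + k by omega,
    show q + k - q = k by omega]

open Nat in
lemma vv_add (p q k : ℕ) : vv (p + 1) (q + 1) (p + q + k + 2) =
    (((p + 1 : ℕ) : ℝ) * (q + 1 : ℕ) * (p + q + k + 2 : ℕ) * (p + 1)! * (q + 1)! * (q + k)! * (p + k)!) /
      ((p + q + 2)! * (p + q + k + 1)! * k !) := by
  unfold vv
  rw [if_pos (by omega), show p + q + k + 2 - (p + 1) - 1 = q + k by omega,
    show p + q + k + 2 - (q + 1) - 1 = p + k by omega,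
    show p + q + k + 2 - (p + 1) - (q + 1) = k by omega, show p + 1 + (q + 1) = p + q + 2 by omega,
    show p + q + k + 2 - 1 = p + q + k + 1 by omega]

lemma ph_pzero (p n : ℕ) : ph p 0 n = if p ≤ n then 1 else 0 := by
  split_ifs with h
  · obtain ⟨k, rfl⟩ := Nat.exists_eq_add_of_le h
    have := ph_add p 0 k
    simp only [add_zero, zero_add, Nat.factorial_zero] at this
    rw [this, div_eq_one_iff_eq (by positivity)]
    push_cast
    ring
  · exact ph_zero_of _ _ _ (by omega)

lemma R1 (p q N : ℕ) :
    1 / ((N + 1 : ℕ) : ℝ) ^ 2 * vv (p+1) (q+1) (N+1) = ph (p+1) (q+1) (N+1) - ph (p+1) (q+1) N := by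
  rcases lt_or_ge (N + 1) (p + q + 2) with h | h
  · rw [vv_zero_of _ _ _ (by omega), ph_zero_of _ _ _ (by omega), ph_zero_of _ _ _ (by omega)]; simp
  · obtain ⟨k, hk⟩ := Nat.exists_eq_add_of_le h
    obtain rfl : N = p + q + k + 1 := by omega
    rw [vv_add, show p + q + k + 1 + 1 = (p+1) + (q + 1) + k by omega, ph_add]
    cases k with
    | zero =>
      rw [ph_zero_of _ _ _ (by omega)]
      simp only [show p + 1 + (q + 1) = p + q + 1 + 1 by omega, Nat.factorial_succ,
        show p + q + 2 = p + q + 1 + 1 by omega, add_zero]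
      push_cast
      field_simp
      ring
    | succ k =>
      rw [show p + q + (k + 1) + 1 = (p+1) + (q + 1) + k by omega, ph_add]
      simp only [show p + 1 + (q + 1) = p + q + 1 + 1 by omega,
        show p + q + 2 = p + q + 1 + 1 by omega,
        show p + q + 1 + 1 + (k + 1) = p + q + k + 1 + 1 + 1 by omega,
        show p + q + 1 + 1 + k = p + q + k + 1 + 1 by omega,
        show p + q + (k + 1) + 2 = p + q + k + 1 + 1 + 1 by omega,
        show q + 1 + (k + 1) = q + k + 1 + 1 by omega,
        show p + 1 + (k + 1) = p + k + 1 + 1 by omega,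
        show q + 1 + k = q + k + 1 by omega,
        show p + 1 + k = p + k + 1 by omega,
        show q + (k+1) = q + k + 1 by omega,
        show p + (k+1) = p + k + 1 by omega, Nat.factorial_succ]
      push_cast
      field_simp
      ring

lemma R2 (p q N : ℕ) :
    1 / ((q + 1 : ℕ) : ℝ) ^ 2 * vv (p+1) (q+1) (N+1) = ph (p+1) q N - ph (p+1) (q+1) N := by
  rcases lt_or_ge (N + 1) (p + q + 2) with h | h
  · rw [vv_zero_of _ _ _ (by omega), ph_zero_of _ _ _ (by omega), ph_zero_of _ _ _ (by omega)]; simp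
  · obtain ⟨k, hk⟩ := Nat.exists_eq_add_of_le h
    obtain rfl : N = p + q + k + 1 := by omega
    rw [vv_add, show p + q + k + 1 = (p+1) + q + k by omega, ph_add]
    cases k with
    | zero =>
      rw [ph_zero_of _ _ _ (by omega)]
      simp only [show p + 1 + q = p + q + 1 by omega, Nat.factorial_succ,
        show p + q + 2 = p + q + 1 + 1 by omega, add_zero]
      push_cast
      field_simp
      ring
    | succ k =>
      rw [show p + 1 + q + (k + 1) = (p+1) + (q + 1) + k by omega, ph_add]
      simp only [show p + 1 + (q + 1) = p + q + 1 + 1 by omega,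
        show p + 1 + q = p + q + 1 by omega,
        show p + q + 2 = p + q + 1 + 1 by omega,
        show p + q + 1 + 1 + (k + 1) = p + q + k + 1 + 1 + 1 by omega,
        show p + q + 1 + 1 + k = p + q + k + 1 + 1 by omega,
        show p + q + (k + 1) + 2 = p + q + k + 1 + 1 + 1 by omega,
        show q + 1 + (k + 1) = q + k + 1 + 1 by omega,
        show p + 1 + (k + 1) = p + k + 1 + 1 by omega,
        show q + 1 + k = q + k + 1 by omega,
        show p + 1 + k = p + k + 1 by omega,
        show q + (k+1) = q + k + 1 by omega,
        show p + (k+1) = p + k + 1 by omega, Nat.factorial_succ]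
      push_cast
      field_simp
      ring

lemma R3 (p q N : ℕ) :
    vv (p+1) (q+1) (N+1) * (((N + 1 : ℕ) : ℝ) - (p + 1 : ℕ) - (q + 1 : ℕ)) =
      (p + 1 : ℕ) * (q + 1 : ℕ) * (N + 1 : ℕ) * ph (p+1) (q+1) N := by
  rcases lt_or_ge (N + 1) (p + q + 2) with h | h
  · rw [vv_zero_of _ _ _ (by omega), ph_zero_of _ _ _ (by omega)]; simp
  · obtain ⟨k, hk⟩ := Nat.exists_eq_add_of_le h
    obtain rfl : N = p + q + k + 1 := by omega
    rw [vv_add]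
    cases k with
    | zero =>
      rw [ph_zero_of _ _ _ (by omega)]
      push_cast
      ring
    | succ k =>
      rw [show p + q + (k + 1) + 1 = (p+1) + (q + 1) + k by omega, ph_add]
      simp only [show p + 1 + (q + 1) = p + q + 1 + 1 by omega,
        show p + q + 2 = p + q + 1 + 1 by omega,
        show p + q + 1 + 1 + k = p + q + k + 1 + 1 by omega,
        show p + q + (k + 1) + 2 = p + q + k + 1 + 1 + 1 by omega,
        show q + 1 + k = q + k + 1 by omega,
        show p + 1 + k = p + k + 1 by omega,
        show q + (k+1) = q + k + 1 by omega,
        show p + (k+1) = p + k + 1 by omega, Nat.factorial_succ]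
      push_cast
      field_simp
      ring

lemma R3b (p q N : ℕ) :
    1 / ((p + 1 : ℕ) : ℝ) ^ 3 * (1 / ((q + 1 : ℕ) : ℝ) ^ 3) * vv (p+1) (q+1) (N+1) =
      1 / ((N + 1 : ℕ) : ℝ) * (1 / ((p + 1 : ℕ) : ℝ) ^ 3 * (1 / ((q + 1 : ℕ) : ℝ) ^ 2)
        + 1 / ((p + 1 : ℕ) : ℝ) ^ 2 * (1 / ((q + 1 : ℕ) : ℝ) ^ 3)) * vv (p+1) (q+1) (N+1)
      + 1 / ((p + 1 : ℕ) : ℝ) ^ 2 * (1 / ((q + 1 : ℕ) : ℝ) ^ 2) * ph (p+1) (q+1) N := by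
  have h := R3 p q N
  have hp : ((p + 1 : ℕ) : ℝ) ≠ 0 := by positivity
  have hq : ((q + 1 : ℕ) : ℝ) ≠ 0 := by positivity
  have hN : ((N + 1 : ℕ) : ℝ) ≠ 0 := by positivity
  generalize ((p + 1 : ℕ) : ℝ) = x at *
  generalize ((q + 1 : ℕ) : ℝ) = y at *
  generalize ((N + 1 : ℕ) : ℝ) = z at *
  field_simp
  linear_combination h

open Filter in
lemma R4 (p q : ℕ) : Tendsto (fun N => ph p q N) atTop (nhds (ff p q)) := by
  rw [← tendsto_add_atTop_iff_nat (p + q)]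
  have key : ∀ p : ℕ, Tendsto (fun k : ℕ => ((Nat.factorial (q + k) : ℝ) * Nat.factorial (p + k)) /
      (Nat.factorial (p + q + k) * Nat.factorial k)) atTop (nhds 1) := by
    intro p
    induction p with
    | zero =>
      refine tendsto_const_nhds.congr fun k => ?_
      simp only [zero_add]
      rw [div_self]; positivity
    | succ p ih =>
      have h2 : Tendsto (fun k : ℕ => 1 - (q : ℝ) / ((p + q + k : ℕ) + 1)) atTop (nhds (1 - 0)) := by
        refine tendsto_const_nhds.sub ?_
        have h3 : Tendsto (fun k : ℕ => (q : ℝ) / ((k : ℕ) + 1)) atTop (nhds 0) :=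
          tendsto_const_div_atTop_nhds_zero_nat (q : ℝ) |>.comp (tendsto_add_atTop_nat 1) |>.congr
            fun k => by simp
        exact h3.comp (tendsto_atTop_mono (fun k => Nat.le_add_left k (p + q)) tendsto_id)
      have := ih.mul h2
      rw [sub_zero, one_mul] at this
      refine this.congr fun k => ?_
      rw [show p + 1 + k = p + k + 1 by omega, show p + 1 + q + k = p + q + k + 1 by omega,
        Nat.factorial_succ, Nat.factorial_succ]
      push_cast
      field_simp
      ring
  have := (key p).const_mul (ff p q)
  rw [mul_one] at this
  refine this.congr fun k => ?_
  rw [add_comm k, ph_add, ff]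
  field_simp

lemma R5 (r q : ℕ) (hq : 0 < q) :
    1 / ((r + 1 : ℕ) : ℝ) * ff (r+1) q = 1 / (q : ℝ) * (ff r q - ff (r+1) q) := by
  unfold ff
  rw [show r + 1 + q = r + q + 1 by omega, Nat.factorial_succ, Nat.factorial_succ]
  push_cast
  field_simp
  ring

lemma ff_le (r q : ℕ) : ff r (q+1) ≤ 1 / ((r : ℝ) + 1) := by
  induction q with
  | zero =>
    unfold ff
    apply le_of_eq
    rw [zero_add, Nat.factorial_succ r, Nat.factorial_one]
    push_cast
    field_simp
  | succ q ih =>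
    refine le_trans ?_ ih
    have : ff r (q+1+1) = ff r (q+1) * ((q + 2) / (r + q + 2)) := by
      unfold ff
      rw [show r + (q + 1 + 1) = r + (q + 1) + 1 by omega, Nat.factorial_succ (r + (q + 1)),
        Nat.factorial_succ (q + 1)]
      push_cast
      field_simp
      ring
    rw [this]
    refine mul_le_of_le_one_right (ff_nonneg _ _) ?_
    rw [div_le_one (by positivity)]
    have : (0:ℝ) ≤ r := by positivity
    linarith

open Filter in
lemma ff_tendsto (q : ℕ) (hq : 0 < q) : Tendsto (fun r => ff r q) atTop (nhds 0) := by
  obtain ⟨q, rfl⟩ := Nat.exists_eq_succ_of_ne_zero hq.ne'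
  exact squeeze_zero (fun r => ff_nonneg r _) (fun r => ff_le r q)
    tendsto_one_div_add_atTop_nhds_zero_nat

noncomputable def V (p q n : ℕ) : ℝ≥0∞ := ENNReal.ofReal (vv p q n)
noncomputable def Ph (p q n : ℕ) : ℝ≥0∞ := ENNReal.ofReal (ph p q n)
noncomputable def FF (p q : ℕ) : ℝ≥0∞ := ENNReal.ofReal (ff p q)
noncomputable def lt (m n : ℕ) : ℝ≥0∞ := if m < n then 1 else 0

lemma ite_lt (m n : ℕ) (x : ℝ≥0∞) : (if m < n then x else 0) = lt m n * x := by
  unfold lt; split_ifs <;> simp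

lemma lt_rr (k n : ℕ) : lt 0 n * rr (k+1) n = rr (k+1) n := by
  unfold lt rr
  rcases Nat.eq_zero_or_pos n with rfl | h
  · simp
  · simp [h]

lemma lt_pos (n : ℕ) (h : 0 < n) : lt 0 n = 1 := by simp [lt, h]

lemma rr_zero (k : ℕ) : rr (k+1) 0 = 0 := by simp [rr]

lemma rr_mul (j k n : ℕ) : rr j n * rr k n = rr (j + k) n := by
  unfold rr
  rw [← ENNReal.ofReal_mul (by positivity), pow_add]
  congr 1
  ring

lemma V_symm (p q n) : V p q n = V q p n := by unfold V; rw [vv_symm]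
lemma Ph_symm (p q n) : Ph p q n = Ph q p n := by unfold Ph; rw [ph_symm]

lemma rrV1 (p q i : ℕ) : rr 2 i * V (p+1) (q+1) i =
    ENNReal.ofReal (ph (p+1) (q+1) i - ph (p+1) (q+1) (i-1)) := by
  cases i with
  | zero => simp [rr]
  | succ i => rw [rr, V, ← ENNReal.ofReal_mul (by positivity), R1]; simp

lemma ph_mono (p q i : ℕ) : ph (p+1) (q+1) i ≤ ph (p+1) (q+1) (i+1) := by
  have h := R1 p q i
  have : 0 ≤ 1 / ((i + 1 : ℕ) : ℝ) ^ 2 * vv (p+1) (q+1) (i+1) :=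
    mul_nonneg (by positivity) (vv_nonneg _ _ _)
  linarith

lemma S1 (p q n : ℕ) (hp : 0 < p) (hq : 0 < q) :
    ∑' i, lt i n * (rr 2 i * V p q i) = Ph p q (n-1) := by
  obtain ⟨p, rfl⟩ := Nat.exists_eq_succ_of_ne_zero hp.ne'
  obtain ⟨q, rfl⟩ := Nat.exists_eq_succ_of_ne_zero hq.ne'
  rw [Ph, ← tele_fin _ (ph_mono p q) (ph_zero_of _ _ _ (by omega))]
  refine tsum_congr fun i => ?_
  rw [ite_lt, ← rrV1]

lemma S3 (p q : ℕ) (hp : 0 < p) (hq : 0 < q) :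
    ∑' i, rr 2 i * V p q i = FF p q := by
  obtain ⟨p, rfl⟩ := Nat.exists_eq_succ_of_ne_zero hp.ne'
  obtain ⟨q, rfl⟩ := Nat.exists_eq_succ_of_ne_zero hq.ne'
  rw [FF, ← tele_inf _ (ph_mono p q) (ph_zero_of _ _ _ (by omega)) _ (R4 _ _)]
  refine tsum_congr fun i => ?_
  rw [← rrV1]

lemma S2 (p q n : ℕ) (hp : 0 < p) :
    ∑' i, lt q i * (rr 2 i * V p i n) = Ph p q (n-1) := by
  obtain ⟨p, rfl⟩ := Nat.exists_eq_succ_of_ne_zero hp.ne'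
  cases n with
  | zero =>
    have h1 : ∀ i, V (p+1) i 0 = 0 := fun i => by
      rw [V, vv_zero_of _ _ _ (by omega), ENNReal.ofReal_zero]
    have h2 : Ph (p+1) q (0-1) = 0 := by
      rw [Ph, ph_zero_of _ _ _ (by omega), ENNReal.ofReal_zero]
    rw [h2]; simp [h1]
  | succ n =>
    rw [Nat.add_sub_cancel, Ph, ← tele_down (fun q => ph (p+1) q n)]
    · refine tsum_congr fun i => ?_
      rw [← ite_lt]
      split_ifs with h
      · obtain ⟨i, rfl⟩ := Nat.exists_eq_succ_of_ne_zero (show i ≠ 0 by omega)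
        rw [rr, V, ← ENNReal.ofReal_mul (by positivity)]
        simp only [Nat.succ_eq_add_one]
        rw [R2]; simp
      · rfl
    · intro i
      have h := R2 p i n
      have : 0 ≤ 1 / ((i + 1 : ℕ) : ℝ) ^ 2 * vv (p+1) (i+1) (n+1) :=
        mul_nonneg (by positivity) (vv_nonneg _ _ _)
      linarith
    · refine tendsto_const_nhds.congr' ?_
      filter_upwards [Filter.eventually_ge_atTop (n+1)] with i hi
      rw [ph_zero_of _ _ _ (by omega)]

lemma S4 (p q : ℕ) (hq : 0 < q) :
    ∑' r, lt p r * (rr 1 r * FF r q) = rr 1 q * FF p q := by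
  have hm : ∀ i, ff (i+1) q ≤ ff i q := fun i => by
    have h := R5 i q hq
    have h1 : 0 ≤ 1 / ((i + 1 : ℕ) : ℝ) * ff (i+1) q := mul_nonneg (by positivity) (ff_nonneg _ _)
    rw [h] at h1
    have := (mul_nonneg_iff_of_pos_left (by positivity)).1 h1
    linarith
  rw [FF, ← tele_down (fun r => ff r q) hm (ff_tendsto q hq), ← ENNReal.tsum_mul_left]
  refine tsum_congr fun r => ?_
  rw [← ite_lt]
  split_ifs with h
  · obtain ⟨r, rfl⟩ := Nat.exists_eq_succ_of_ne_zero (show r ≠ 0 by omega)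
    rw [rr, rr, FF, ← ENNReal.ofReal_mul (by positivity), ← ENNReal.ofReal_mul (by positivity),
      pow_one, pow_one]
    simp only [Nat.succ_eq_add_one]
    rw [R5 r q hq]; simp
  · simp

lemma ee_succ (b m n : ℕ) :
    ee (b+1) m n = ∑' i, lt m i * lt i n * (ee b m i * rr 2 i) := by
  rw [ee]
  refine tsum_congr fun i => ?_
  unfold lt
  split_ifs <;> simp_all

lemma Z_cons (k : ℕ) (ks : List ℕ) (m : ℕ) : Z (k :: ks) m = ∑' n, lt m n * (rr k n * Z ks n) := by
  rw [Z]; exact tsum_congr fun n => ite_lt _ _ _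

lemma Z_rep' (k s : ℕ) (ls : List ℕ) (m : ℕ) : Z (List.replicate k 2 ++ s :: ls) m =
    ∑' n, lt m n * (ee k m n * rr s n * Z ls n) := by
  rw [Z_rep]; exact tsum_congr fun n => ite_lt _ _ _

lemma lt_trans3 (p m n : ℕ) : lt p n * (lt p m * lt m n) = lt p m * lt m n := by
  unfold lt
  split_ifs <;> first | omega | simp

lemma E1 (b p n : ℕ) (hp : 0 < p) :
    ∑' q, rr 2 q * ee b 0 q * V p q n = lt p n * ee b p n := by
  induction b generalizing n with
  | zero =>
    have h : Ph p 0 (n-1) = lt p n := by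
      rw [Ph, ph_pzero, lt]
      by_cases h : p < n
      · rw [if_pos (by omega), if_pos h]; simp
      · rw [if_neg (by omega), if_neg h]; simp
    simp only [ee, mul_one]
    rw [← h, ← S2 p 0 n hp]
    refine tsum_congr fun q => ?_
    rw [← mul_assoc, lt_rr]
  | succ b ih =>
    symm
    calc lt p n * ee (b+1) p n
        = ∑' m, ∑' q, rr 2 q * ee b 0 q * (lt m n * (rr 2 m * V p q m)) := by
          rw [ee_succ, ← ENNReal.tsum_mul_left]
          refine tsum_congr fun m => ?_
          calc _ = (lt p n * (lt p m * lt m n)) * (ee b p m * rr 2 m) := by ring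
            _ = lt m n * rr 2 m * (lt p m * ee b p m) := by rw [lt_trans3]; ring
            _ = _ := by
              rw [← ih, ← ENNReal.tsum_mul_left]
              refine tsum_congr fun q => ?_
              ring
      _ = ∑' q, ∑' i, (rr 2 i * V p i n) * (lt 0 q * lt q i * (ee b 0 q * rr 2 q)) := by
          rw [ENNReal.tsum_comm]
          refine tsum_congr fun q => ?_
          rcases Nat.eq_zero_or_pos q with rfl | hq
          · simp [rr_zero]
          · rw [ENNReal.tsum_mul_left, S1 p q n hp hq, ← S2 p q n hp, ← ENNReal.tsum_mul_left]
            refine tsum_congr fun i => ?_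
            rw [lt_pos q hq]
            ring
      _ = _ := by
          rw [ENNReal.tsum_comm]
          refine tsum_congr fun i => ?_
          rw [ENNReal.tsum_mul_left, ← ee_succ]
          ring

lemma T_eq (b r : ℕ) (hr : 0 < r) : Z (List.replicate (b+1) 2) r =
    ∑' q, rr 2 q * ee b 0 q * FF r q := by
  rw [List.replicate_succ', Z_rep']
  calc _ = ∑' n, ∑' q, rr 2 q * ee b 0 q * (rr 2 n * V r q n) := by
        refine tsum_congr fun n => ?_
        rw [Z]
        calc _ = rr 2 n * (lt r n * ee b r n) := by ring
          _ = _ := by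
            rw [← E1 b r n hr, ← ENNReal.tsum_mul_left]
            refine tsum_congr fun q => ?_
            ring
    _ = _ := by
        rw [ENNReal.tsum_comm]
        refine tsum_congr fun q => ?_
        rw [ENNReal.tsum_mul_left]
        rcases Nat.eq_zero_or_pos q with rfl | hq
        · simp [rr_zero]
        · rw [S3 r q hr hq]

lemma Y_zero (b p : ℕ) : Z (1 :: List.replicate (b+1) 2) p =
    ∑' q, ee b 0 q * rr 3 q * FF p q := by
  rw [Z_cons]
  calc _ = ∑' r, ∑' q, rr 2 q * ee b 0 q * (lt p r * (rr 1 r * FF r q)) := by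
        refine tsum_congr fun r => ?_
        rcases Nat.eq_zero_or_pos r with rfl | hr
        · simp [rr_zero 0]
        · rw [T_eq b r hr, ← ENNReal.tsum_mul_left, ← ENNReal.tsum_mul_left]
          refine tsum_congr fun q => ?_
          ring
    _ = _ := by
        rw [ENNReal.tsum_comm]
        refine tsum_congr fun q => ?_
        rw [ENNReal.tsum_mul_left]
        rcases Nat.eq_zero_or_pos q with rfl | hq
        · simp [rr_zero]
        · rw [S4 p q hq, ← rr_mul 2 1]
          ring

lemma Y_eq (b c p : ℕ) (hp : 0 < p) :
    Z (List.replicate c 2 ++ 1 :: List.replicate (b+1) 2) p =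
    ∑' q, ee b 0 q * rr 3 q * ∑' n, rr 2 n * V p q n * Z (List.replicate c 2) n := by
  induction c generalizing p with
  | zero =>
    simp only [List.replicate_zero, List.nil_append, Z, mul_one]
    rw [← Z, Y_zero]
    refine tsum_congr fun q => ?_
    rcases Nat.eq_zero_or_pos q with rfl | hq
    · simp [rr_zero]
    · rw [S3 p q hp hq]
  | succ c ih =>
    rw [List.replicate_succ, List.cons_append, Z_cons]
    calc _ = ∑' p', ∑' q, ∑' n, ee b 0 q * rr 3 q * (rr 2 n * Z (List.replicate c 2) n *
              (lt p p' * (rr 2 p' * V q p' n))) := by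
          refine tsum_congr fun p' => ?_
          rcases Nat.eq_zero_or_pos p' with rfl | hp'
          · simp [rr_zero]
          · rw [ih p' hp', ← ENNReal.tsum_mul_left, ← ENNReal.tsum_mul_left]
            refine tsum_congr fun q => ?_
            rw [← ENNReal.tsum_mul_left, ← ENNReal.tsum_mul_left, ← ENNReal.tsum_mul_left]
            refine tsum_congr fun n => ?_
            rw [V_symm q p']
            ring
      _ = _ := by
          rw [ENNReal.tsum_comm]
          refine tsum_congr fun q => ?_
          rcases Nat.eq_zero_or_pos q with rfl | hq
          · simp [rr_zero]
          rw [ENNReal.tsum_comm]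
          simp_rw [ENNReal.tsum_mul_left]
          congr 1
          calc _ = ∑' n, ∑' i, rr 2 i * V p q i * (lt i n * (rr 2 n * Z (List.replicate c 2) n)) := by
                refine tsum_congr fun n => ?_
                rw [S2 q p n hq, Ph_symm, ← S1 p q n hp hq, ← ENNReal.tsum_mul_left]
                refine tsum_congr fun i => ?_
                ring
            _ = _ := by
                rw [ENNReal.tsum_comm]
                refine tsum_congr fun i => ?_
                rw [ENNReal.tsum_mul_left, ← Z_cons]

lemma split (p q n : ℕ) : rr 3 p * rr 3 q * (rr 2 n * V p q n) =
    rr 3 p * rr 2 q * (rr 3 n * V p q n) + rr 3 q * rr 2 p * (rr 3 n * V q p n) +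
    rr 2 p * rr 2 q * (rr 2 n * Ph p q (n-1)) := by
  rcases Nat.eq_zero_or_pos p with rfl | hp
  · simp [rr_zero]
  rcases Nat.eq_zero_or_pos q with rfl | hq
  · simp [rr_zero]
  rcases Nat.eq_zero_or_pos n with rfl | hn
  · simp [rr_zero]
  obtain ⟨p, rfl⟩ := Nat.exists_eq_succ_of_ne_zero hp.ne'
  obtain ⟨q, rfl⟩ := Nat.exists_eq_succ_of_ne_zero hq.ne'
  obtain ⟨n, rfl⟩ := Nat.exists_eq_succ_of_ne_zero hn.ne'
  simp only [Nat.succ_eq_add_one, Nat.add_sub_cancel]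
  have h : rr 3 (p+1) * rr 3 (q+1) * V (p+1) (q+1) (n+1) =
      rr 1 (n+1) * (rr 3 (p+1) * rr 2 (q+1) + rr 2 (p+1) * rr 3 (q+1)) * V (p+1) (q+1) (n+1)
      + rr 2 (p+1) * rr 2 (q+1) * Ph (p+1) (q+1) n := by
    have h0 := R3b p q n
    have hv := vv_nonneg (p+1) (q+1) (n+1)
    have hf := ph_nonneg (p+1) (q+1) n
    unfold rr V Ph
    rw [pow_one]
    rw [← ENNReal.ofReal_mul (by positivity), ← ENNReal.ofReal_mul (by positivity),
      ← ENNReal.ofReal_mul (by positivity), ← ENNReal.ofReal_mul (by positivity),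
      ← ENNReal.ofReal_add (by positivity) (by positivity),
      ← ENNReal.ofReal_mul (by positivity), ← ENNReal.ofReal_mul (by positivity),
      ← ENNReal.ofReal_mul (by positivity), ← ENNReal.ofReal_mul (by positivity),
      ← ENNReal.ofReal_add (by positivity) (by positivity), h0]
  calc _ = rr 2 (n+1) * (rr 3 (p+1) * rr 3 (q+1) * V (p+1) (q+1) (n+1)) := by ring
    _ = _ := by
      rw [h, V_symm (q+1) (p+1), ← rr_mul 2 1 (n+1)]
      ring

noncomputable def MM (a b c : ℕ) : ℝ≥0∞ := ∑' p, ∑' q, ∑' n,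
  ee a 0 p * ee b 0 q * Z (List.replicate c 2) n * (rr 3 p * rr 2 q * (rr 3 n * V p q n))

lemma MM_eq (a b c : ℕ) : MM a b c =
    Z (List.replicate a 2 ++ 3 :: (List.replicate b 2 ++ 3 :: List.replicate c 2)) 0 := by
  rw [Z_rep', MM]
  refine tsum_congr fun p => ?_
  rcases Nat.eq_zero_or_pos p with rfl | hp
  · simp [rr_zero]
  rw [ENNReal.tsum_comm, Z_rep', ← ENNReal.tsum_mul_left, ← ENNReal.tsum_mul_left]
  refine tsum_congr fun n => ?_
  rw [lt_pos p hp]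
  calc _ = ∑' q, ee a 0 p * rr 3 p * rr 3 n * Z (List.replicate c 2) n *
            (rr 2 q * ee b 0 q * V p q n) := by
        refine tsum_congr fun q => ?_
        ring
    _ = _ := by
        rw [ENNReal.tsum_mul_left, E1 b p n hp]
        ring

lemma NN_eq (a b c : ℕ) : (∑' p, ∑' q, ∑' n,
  ee a 0 p * ee b 0 q * Z (List.replicate c 2) n * (rr 2 p * rr 2 q * (rr 2 n * Ph p q (n-1)))) =
    Z (List.replicate a 2 ++ 2 :: (List.replicate b 2 ++ 2 :: 2 :: List.replicate c 2)) 0 := by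
  rw [Z_rep']
  refine tsum_congr fun p => ?_
  rcases Nat.eq_zero_or_pos p with rfl | hp
  · simp [rr_zero]
  rw [Z_rep', ← ENNReal.tsum_mul_left, ← ENNReal.tsum_mul_left]
  calc _ = ∑' q, ∑' m, ee a 0 p * rr 2 p * rr 2 m * Z (2 :: List.replicate c 2) m *
            (rr 2 q * ee b 0 q * V p q m) := by
        refine tsum_congr fun q => ?_
        rcases Nat.eq_zero_or_pos q with rfl | hq
        · simp [rr_zero]
        calc _ = ∑' n, ∑' m, ee a 0 p * rr 2 p * rr 2 m * (rr 2 q * ee b 0 q * V p q m) *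
                  (lt m n * (rr 2 n * Z (List.replicate c 2) n)) := by
              refine tsum_congr fun n => ?_
              rw [← S1 p q n hp hq, ← ENNReal.tsum_mul_left, ← ENNReal.tsum_mul_left,
                ← ENNReal.tsum_mul_left]
              refine tsum_congr fun m => ?_
              ring
          _ = _ := by
              rw [ENNReal.tsum_comm]
              refine tsum_congr fun m => ?_
              rw [ENNReal.tsum_mul_left, ← Z_cons]
              ring
    _ = _ := by
        rw [ENNReal.tsum_comm]
        refine tsum_congr fun m => ?_
        rw [ENNReal.tsum_mul_left, E1 b p m hp, lt_pos p hp]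
        ring

lemma main (a b c : ℕ) :
    Z (List.replicate a 2 ++ 3 :: (List.replicate c 2 ++ 1 :: List.replicate (b+1) 2)) 0 =
    Z (List.replicate a 2 ++ 3 :: (List.replicate b 2 ++ 3 :: List.replicate c 2)) 0 +
    Z (List.replicate b 2 ++ 3 :: (List.replicate a 2 ++ 3 :: List.replicate c 2)) 0 +
    Z (List.replicate a 2 ++ 2 :: (List.replicate b 2 ++ 2 :: 2 :: List.replicate c 2)) 0 := by
  rw [← MM_eq, ← MM_eq, ← NN_eq]
  have h2 : MM b a c = ∑' p, ∑' q, ∑' n,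
      ee a 0 p * ee b 0 q * Z (List.replicate c 2) n * (rr 3 q * rr 2 p * (rr 3 n * V q p n)) := by
    rw [MM, ENNReal.tsum_comm]
    refine tsum_congr fun p => tsum_congr fun q => tsum_congr fun n => ?_
    ring
  rw [h2, MM, ← ENNReal.tsum_add, ← ENNReal.tsum_add, Z_rep']
  refine tsum_congr fun p => ?_
  rcases Nat.eq_zero_or_pos p with rfl | hp
  · simp [rr_zero]
  rw [Y_eq b c p hp, ← ENNReal.tsum_add, ← ENNReal.tsum_add, ← ENNReal.tsum_mul_left,
    ← ENNReal.tsum_mul_left]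
  refine tsum_congr fun q => ?_
  rw [← ENNReal.tsum_add, ← ENNReal.tsum_add, ← ENNReal.tsum_mul_left,
    ← ENNReal.tsum_mul_left, ← ENNReal.tsum_mul_left]
  refine tsum_congr fun n => ?_
  rw [← mul_add, ← mul_add, ← split]
  calc _ = (ee a 0 p * ee b 0 q * Z (List.replicate c 2) n *
            ((lt 0 p * rr 3 p) * rr 3 q * (rr 2 n * V p q n))) := by ring
    _ = _ := by rw [lt_rr]

end HS

theorem mzv_hirose_sato_one (a b c : ℕ) (ha : 0 < a) (hb : 0 < b) (hc : 0 < c) :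
    mzv (List.replicate (a - 1) 2 ++ [3] ++ List.replicate (c - 1) 2 ++ [1] ++
        List.replicate b 2)
      = mzv (List.replicate (a + b + c) 2)
        + mzv (List.replicate (a - 1) 2 ++ [3] ++ List.replicate (b - 1) 2 ++ [3] ++
            List.replicate (c - 1) 2)
        + mzv (List.replicate (b - 1) 2 ++ [3] ++ List.replicate (a - 1) 2 ++ [3] ++
            List.replicate (c - 1) 2) := by
  obtain ⟨a, rfl⟩ := Nat.exists_eq_succ_of_ne_zero ha.ne'
  obtain ⟨b, rfl⟩ := Nat.exists_eq_succ_of_ne_zero hb.ne'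
  obtain ⟨c, rfl⟩ := Nat.exists_eq_succ_of_ne_zero hc.ne'
  simp only [Nat.succ_eq_add_one, Nat.add_sub_cancel]
  have h := HS.main a b c
  have e : List.replicate a 2 ++ 2 :: (List.replicate b 2 ++ 2 :: 2 :: List.replicate c 2)
      = List.replicate (a + 1 + (b + 1) + (c + 1)) 2 := by
    rw [← List.replicate_succ, ← List.replicate_succ, List.replicate_append_replicate,
      ← List.replicate_succ, List.replicate_append_replicate]
    congr 1
    omega
  rw [e] at h
  simp only [HS.mzv_eq, List.append_assoc, List.cons_append, List.nil_append]
  rw [h, ENNReal.toReal_add, ENNReal.toReal_add]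
  · ring
  · refine HS.Z_fin _ (fun k hk => ?_) _
    simp only [List.mem_append, List.mem_cons, List.mem_replicate] at hk
    omega
  · refine HS.Z_fin _ (fun k hk => ?_) _
    simp only [List.mem_append, List.mem_cons, List.mem_replicate] at hk
    omega
  · refine ENNReal.add_ne_top.2 ⟨?_, ?_⟩ <;>
    · refine HS.Z_fin _ (fun k hk => ?_) _
      simp only [List.mem_append, List.mem_cons, List.mem_replicate] at hk
      omega
  · refine HS.Z_fin _ (fun k hk => ?_) _
    simp only [List.mem_replicate] at hk
    omega
end

section
/- For every positive integer c, ζ(3,{2}^{c-1},1,2) = ζ({2}^{c+2}) + 2ζ(3,3,{2}^{c-1}) (Hoffman's conjectural identity). -/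
namespace Hof
open Finset Filter Topology

noncomputable def U : List ℕ → ℕ → ℕ → ℝ
  | [], _, _ => 1
  | a :: ks, m, N => ∑ n ∈ Ioc m N, (1 / (n : ℝ) ^ a) * U ks n N

noncomputable def fS (ks : List ℕ) (m : ℕ) (n : Fin ks.length → ℕ) : ℝ :=
    if (∀ i j : Fin ks.length, i < j → n i < n j) ∧ (∀ i, m < n i) then
      ∏ i, (1 : ℝ) / (n i : ℝ) ^ ks.get i
    else 0

lemma fS_cons (a : ℕ) (ks : List ℕ) (m x : ℕ) (n : Fin ks.length → ℕ) :
    fS (a :: ks) m (Fin.cons x n : Fin (ks.length + 1) → ℕ)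
      = if m < x then (1 / (x : ℝ) ^ a) * fS ks x n else 0 := by
  have key : ((∀ i j : Fin (ks.length + 1), i < j →
      (Fin.cons x n : Fin (ks.length + 1) → ℕ) i < (Fin.cons x n : Fin (ks.length + 1) → ℕ) j) ∧
      (∀ i, m < (Fin.cons x n : Fin (ks.length + 1) → ℕ) i)) ↔
      (m < x ∧ ((∀ i j : Fin ks.length, i < j → n i < n j) ∧ (∀ i, x < n i))) := by
    constructor
    · rintro ⟨h1, h2⟩
      refine ⟨by simpa using h2 0, ?_, ?_⟩
      · intro i j hij
        simpa using h1 i.succ j.succ (by simpa using hij)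
      · intro i
        simpa using h1 0 i.succ (Fin.succ_pos i)
    · rintro ⟨h0, h1, h2⟩
      constructor
      · intro i j
        refine Fin.cases ?_ (fun i => ?_) i <;> refine Fin.cases ?_ (fun j => ?_) j
        · simp
        · intro _; simpa using h2 j
        · simp
        · intro h; simpa using h1 i j (by simpa using h)
      · intro i
        refine Fin.cases ?_ (fun i => ?_) i
        · simpa using h0
        · simpa using h0.trans (h2 i)
  have hp : (∏ i : Fin (ks.length + 1), (1 : ℝ) / (((Fin.cons x n : Fin (ks.length + 1) → ℕ) i : ℕ) : ℝ) ^ (a :: ks).get i)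
      = (1 / (x : ℝ) ^ a) * ∏ i, (1 : ℝ) / (n i : ℝ) ^ ks.get i := by
    rw [Fin.prod_univ_succ]; simp
  unfold fS
  have e1 := if_congr key hp (rfl : (0:ℝ) = 0)
  refine Eq.trans ?_ (e1.trans ?_)
  · congr
  · by_cases h : m < x
    · simp [h]
    · simp [h]

lemma fS_nonneg (ks : List ℕ) (m : ℕ) (n : Fin ks.length → ℕ) : 0 ≤ fS ks m n := by
  unfold fS
  split_ifs
  · positivity
  · exact le_rfl

lemma box_sum (ks : List ℕ) (N : ℕ) : ∀ m, 
    ∑ n ∈ Fintype.piFinset (fun _ : Fin ks.length => range (N + 1)), fS ks m n = U ks m N := by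
  induction ks with
  | nil => intro m; simp [U, fS]
  | cons a ks ih =>
    intro m
    have : ∑ n ∈ Fintype.piFinset (fun _ : Fin (ks.length + 1) => range (N + 1)), fS (a :: ks) m n
        = ∑ p ∈ range (N+1) ×ˢ Fintype.piFinset (fun _ : Fin ks.length => range (N + 1)),
          fS (a :: ks) m (Fin.cons p.1 p.2 : Fin (ks.length + 1) → ℕ) := by
      symm
      refine Finset.sum_nbij' (fun p => (Fin.cons p.1 p.2 : Fin (ks.length + 1) → ℕ))
        (fun n => (n 0, fun i => n i.succ)) ?_ ?_ ?_ ?_ ?_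
      · rintro ⟨x, n⟩ h
        simp only [mem_product, Fintype.mem_piFinset] at h ⊢
        intro i
        refine Fin.cases ?_ (fun i => ?_) i
        · simpa using h.1
        · simpa using h.2 i
      · intro n h
        simp only [mem_product, Fintype.mem_piFinset] at h ⊢
        exact ⟨h 0, fun i => h _⟩
      · rintro ⟨x, n⟩ h
        simp
      · intro n h
        exact Fin.cons_self_tail n
      · intros; rfl
    refine this.trans ?_
    rw [Finset.sum_product]
    simp only [fS_cons]
    rw [U]
    have h2 : Ioc m N = (range (N+1)).filter (fun x => m < x) := by
      ext x; simp; omega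
    rw [h2, Finset.sum_filter]
    refine Finset.sum_congr rfl fun x hx => ?_
    split_ifs with h
    · rw [← Finset.mul_sum, ih]
    · simp

lemma mzv_eq (ks : List ℕ) (L : ℝ) (h : Tendsto (fun N => U ks 0 N) atTop (𝓝 L)) : mzv ks = L := by
  have hm : mzv ks = ∑' n, fS ks 0 n := rfl
  have hmono : Monotone (fun N : ℕ => Fintype.piFinset (fun _ : Fin ks.length => range (N + 1))) := by
    intro a b hab
    refine Fintype.piFinset_subset _ _ fun i => ?_
    simpa using hab
  have hcov : ∀ n : Fin ks.length → ℕ, ∃ N : ℕ, n ∈ Fintype.piFinset (fun _ : Fin ks.length => range (N + 1)) := by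
    intro n
    refine ⟨∑ i, n i, ?_⟩
    simp only [Fintype.mem_piFinset, mem_range]
    intro i
    have := Finset.single_le_sum (f := n) (fun i _ => Nat.zero_le _) (Finset.mem_univ i)
    omega
  have ht := Filter.tendsto_atTop_finset_of_monotone hmono hcov
  have hUm : Monotone (fun N => U ks 0 N) := by
    intro a b hab
    simp only [← box_sum]
    exact Finset.sum_le_sum_of_subset_of_nonneg (hmono hab) fun i _ _ => fS_nonneg _ _ _
  have hs : Summable (fS ks 0) := by
    refine summable_of_sum_le (c := L) (fS_nonneg ks 0) fun u => ?_
    obtain ⟨N, hN⟩ := (ht.eventually (eventually_ge_atTop u)).exists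
    calc _ ≤ _ := Finset.sum_le_sum_of_subset_of_nonneg hN fun i _ _ => fS_nonneg _ _ _
      _ = U ks 0 N := box_sum ks N 0
      _ ≤ L := hUm.ge_of_tendsto h N
  have := hs.hasSum.comp ht
  rw [hm]
  refine tendsto_nhds_unique this ?_
  refine h.congr fun N => ?_
  simp [box_sum]

/-- snoc recursion -/
lemma U_snoc (ks : List ℕ) (a : ℕ) : ∀ m N, m ≤ N → 
    U (ks ++ [a]) m (N+1) = U (ks ++ [a]) m N + (1 / ((N:ℝ)+1) ^ a) * U ks m N := by
  induction ks with
  | nil =>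
    intro m N h
    simp only [List.nil_append, U]
    rw [← Finset.insert_Ioc_right_eq_Ioc_add_one (by omega), Finset.sum_insert (by simp)]
    push_cast
    ring
  | cons b ks ih =>
    intro m N h
    simp only [List.cons_append, U]
    rw [← Finset.insert_Ioc_right_eq_Ioc_add_one (by omega), Finset.sum_insert (by simp)]
    have h0 : U (ks ++ [a]) (N+1) (N+1) = 0 := by
      cases ks <;> simp [U]
    rw [h0, mul_zero, zero_add, Finset.mul_sum, ← Finset.sum_add_distrib]
    refine Finset.sum_congr rfl fun x hx => ?_
    rw [ih x N (by simp at hx; omega)]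
    ring

noncomputable def t (ks : List ℕ) (N : ℕ) : ℝ := U ks 0 N

lemma t_nil (N : ℕ) : t [] N = 1 := rfl
lemma t_zero (ks : List ℕ) (a : ℕ) : t (ks ++ [a]) 0 = 0 := by
  cases ks <;> simp [t, U]
lemma t_succ (ks : List ℕ) (a N : ℕ) :
    t (ks ++ [a]) (N+1) = t (ks ++ [a]) N + (1 / ((N:ℝ)+1) ^ a) * t ks N :=
  U_snoc ks a 0 N (Nat.zero_le _)
lemma mzv_of_t (ks : List ℕ) (L : ℝ) (h : Tendsto (fun N => t ks N) atTop (𝓝 L)) : mzv ks = L :=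
  mzv_eq ks L h
end Hof

namespace Hof
open Finset Filter Topology

noncomputable def ep (n : ℕ) : ℝ := if n = 0 then 0 else -2 * (-1) ^ n
noncomputable def c (n q : ℕ) : ℝ := ∏ i ∈ range n, ((q : ℝ) - i) / ((q : ℝ) + i + 1)
noncomputable def pe (m q : ℕ) : ℝ := ∏ k ∈ range q, (1 - (m : ℝ) ^ 2 * (((k : ℝ) + 1) ^ 2)⁻¹)

lemma ep_zero : ep 0 = 0 := by simp [ep]
lemma ep_succ (n : ℕ) : ep (n+1) = 2 * (-1) ^ n := by simp [ep, pow_succ]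
lemma ep_abs (n : ℕ) : |ep n| ≤ 2 := by
  cases n with
  | zero => simp [ep]
  | succ n => rw [ep_succ]; simp [abs_mul]

lemma c_zero (q : ℕ) : c 0 q = 1 := by simp [c]
lemma c_succ (n q : ℕ) : c (n+1) q = c n q * (((q : ℝ) - n) / ((q : ℝ) + n + 1)) := by
  rw [c, prod_range_succ, ← c]
lemma c_eq_zero {n q : ℕ} (h : q < n) : c n q = 0 := by
  refine Finset.prod_eq_zero (i := q) (by simpa using h) (by simp)
lemma c_nonneg (n q : ℕ) : 0 ≤ c n q := by
  rcases lt_or_ge q n with h | h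
  · rw [c_eq_zero h]
  · refine Finset.prod_nonneg fun i hi => ?_
    have : (i : ℝ) ≤ q := by exact_mod_cast (by simp at hi; omega)
    have : 0 ≤ (q : ℝ) - i := by linarith
    positivity
lemma c_le_one (n q : ℕ) : c n q ≤ 1 := by
  rcases lt_or_ge q n with h | h
  · rw [c_eq_zero h]; norm_num
  · refine Finset.prod_le_one (fun i hi => ?_) (fun i hi => ?_)
    · have : (i : ℝ) ≤ q := by exact_mod_cast (by simp at hi; omega)
      have : 0 ≤ (q : ℝ) - i := by linarith
      positivity
    · have : (0:ℝ) ≤ i := by positivity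
      have : (0:ℝ) ≤ q := by positivity
      rw [div_le_one (by positivity)]; linarith
lemma c_step (n q : ℕ) : c n q = c n (q+1) * (1 - (n : ℝ) ^ 2 * (((q : ℝ) + 1) ^ 2)⁻¹) := by
  induction n with
  | zero => simp [c_zero]
  | succ n ih =>
    rw [c_succ, c_succ, ih]
    have : (q:ℝ) + n + 1 ≠ 0 := by positivity
    have : (q:ℝ) + 1 + n + 1 ≠ 0 := by positivity
    have : (q:ℝ) + 1 ≠ 0 := by positivity
    push_cast
    field_simp
    ring
lemma c_tendsto (n : ℕ) : Tendsto (fun q => c n q) atTop (𝓝 1) := by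
  induction n with
  | zero => simp [c_zero]
  | succ n ih =>
    simp only [c_succ]
    have h : Tendsto (fun q : ℕ => ((q : ℝ) - n) / ((q : ℝ) + n + 1)) atTop (𝓝 1) := by
      have h1 : Tendsto (fun q : ℕ => 1 - (2 * (n:ℝ) + 1) / ((q : ℝ) + n + 1)) atTop (𝓝 (1 - 0)) := by
        refine tendsto_const_nhds.sub (Tendsto.div_atTop tendsto_const_nhds ?_)
        exact tendsto_atTop_add_const_right _ _ (tendsto_atTop_add_const_right _ _ tendsto_natCast_atTop_atTop)
      rw [sub_zero] at h1
      refine h1.congr fun q => ?_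
      have : (q:ℝ) + n + 1 ≠ 0 := by positivity
      field_simp; ring
    simpa using ih.mul h

lemma pe_zero (m : ℕ) : pe m 0 = 1 := by simp [pe]
lemma pe_succ (m q : ℕ) : pe m (q+1) = pe m q * (1 - (m : ℝ) ^ 2 * (((q : ℝ) + 1) ^ 2)⁻¹) := by
  simp [pe, prod_range_succ]
lemma pe_eq_zero {m q : ℕ} (h0 : 1 ≤ m) (h : m ≤ q) : pe m q = 0 := by
  refine Finset.prod_eq_zero (i := m - 1) (by simp; omega) ?_
  obtain ⟨k, rfl⟩ : ∃ k, m = k + 1 := ⟨m - 1, by omega⟩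
  have : (k:ℝ) + 1 ≠ 0 := by positivity
  push_cast
  simp [this]

lemma norm_base (M : ℕ) : ep (M+1) * c (M+1) (M+1) * pe (M+1) M = 1 := by
  have h1 : pe (M+1) M = (-1) ^ M * (∏ k ∈ range M, ((M:ℝ) + k + 2)) / (∏ k ∈ range M, ((k:ℝ) + 1)) := by
    have hr : (∏ k ∈ range M, ((M:ℝ) - k)) = ∏ k ∈ range M, ((k:ℝ) + 1) := by
      rw [← Finset.prod_range_reflect]
      refine Finset.prod_congr rfl fun k hk => ?_
      have : k < M := by simpa using hk
      rw [Nat.cast_sub (by omega), Nat.cast_sub (by omega)]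
      push_cast; ring
    have hne : (∏ k ∈ range M, ((k:ℝ) + 1)) ≠ 0 := Finset.prod_ne_zero_iff.2 fun k _ => by positivity
    have : pe (M+1) M = (-1) ^ M * (∏ k ∈ range M, ((M:ℝ) - k)) * (∏ k ∈ range M, ((M:ℝ) + k + 2)) / ((∏ k ∈ range M, ((k:ℝ) + 1)) * (∏ k ∈ range M, ((k:ℝ) + 1))) := by
      have : (-1:ℝ) ^ M = ∏ k ∈ range M, (-1:ℝ) := by simp
      rw [this, ← Finset.prod_mul_distrib, ← Finset.prod_mul_distrib, ← Finset.prod_mul_distrib, ← Finset.prod_div_distrib]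
      refine Finset.prod_congr rfl fun k hk => ?_
      have : (k:ℝ) + 1 ≠ 0 := by positivity
      push_cast
      field_simp; ring
    rw [this, hr]
    field_simp
  have h2 : c (M+1) (M+1) = (∏ k ∈ range M, ((k:ℝ) + 1)) / 2 / (∏ k ∈ range M, ((M:ℝ) + k + 2)) := by
    have hr : (∏ k ∈ range (M+1), (((M:ℝ) + 1) - k)) = ∏ k ∈ range (M+1), ((k:ℝ) + 1) := by
      rw [← Finset.prod_range_reflect]
      refine Finset.prod_congr rfl fun k hk => ?_
      have : k < M + 1 := by simpa using hk
      rw [Nat.cast_sub (by omega), Nat.cast_sub (by omega)]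
      push_cast; ring
    have hne : (∏ k ∈ range M, ((M:ℝ) + k + 2)) ≠ 0 := Finset.prod_ne_zero_iff.2 fun k _ => by positivity
    have : (M:ℝ) + 1 ≠ 0 := by positivity
    unfold c
    push_cast
    rw [Finset.prod_div_distrib, hr, prod_range_succ, prod_range_succ]
    have : ∏ x ∈ range M, ((M:ℝ) + 1 + x + 1) = ∏ k ∈ range M, ((M:ℝ) + k + 2) :=
      Finset.prod_congr rfl fun k _ => by ring
    rw [this, show (M:ℝ) + 1 + M + 1 = 2 * (M + 1) by ring]
    field_simp
  have hne : (∏ k ∈ range M, ((k:ℝ) + 1)) ≠ 0 := Finset.prod_ne_zero_iff.2 fun k _ => by positivity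
  have hne : (∏ k ∈ range M, ((M:ℝ) + k + 2)) ≠ 0 := Finset.prod_ne_zero_iff.2 fun k _ => by positivity
  rw [h1, h2, ep_succ]
  field_simp
  rw [← pow_mul, mul_comm, pow_mul]; simp

lemma norm_all (m p : ℕ) (h0 : 1 ≤ m) (h : m ≤ p) :
    ep m * c m p * ∏ k ∈ (Ioc 0 p).erase m, (1 - (m : ℝ) ^ 2 * ((k : ℝ) ^ 2)⁻¹) = 1 := by
  induction p, h using Nat.le_induction with
  | base =>
    obtain ⟨M, rfl⟩ : ∃ k, m = k + 1 := ⟨m - 1, by omega⟩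
    refine Eq.trans ?_ (norm_base M)
    congr 1
    unfold pe
    have : (Ioc 0 (M+1)).erase (M+1) = (range M).image (fun k => k + 1) := by
      ext x; simp
      constructor
      · intro h; exact ⟨x - 1, by omega, by omega⟩
      · rintro ⟨a, h, rfl⟩; omega
    rw [this, Finset.prod_image (by intro a _ b _ h; simpa using h)]
    push_cast; rfl
  | succ p hp ih =>
    have : (Ioc 0 (p+1)).erase m = insert (p+1) ((Ioc 0 p).erase m) := by
      ext x; simp; omega
    rw [this, Finset.prod_insert (by simp)]
    rw [c_step m p] at ih
    refine Eq.trans ?_ ih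
    push_cast; ring

noncomputable def PL (n : ℕ) : Polynomial ℝ := 1 - Polynomial.C (((n:ℝ)^2)⁻¹) * Polynomial.X

lemma PL_deg (n : ℕ) : (PL n).natDegree ≤ 1 := by
  unfold PL; compute_degree

lemma lagr (q p : ℕ) (h : q < p) : ∏ k ∈ range q, PL (k+1) =
    ∑ n ∈ Ioc 0 p, Polynomial.C (ep n * c n p * pe n q) * ∏ k ∈ (Ioc 0 p).erase n, PL k := by
  refine Polynomial.eq_of_degrees_lt_of_eval_index_eq (v := fun n : ℕ => (n:ℝ)^2) (Ioc 0 p) ?_ ?_ ?_ ?_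
  · intro a _ b _ h
    have h : (a:ℝ)^2 = (b:ℝ)^2 := h
    have : a ^ 2 = b ^ 2 := by exact_mod_cast h
    exact Nat.pow_left_injective (by norm_num) this
  · rw [Nat.card_Ioc, Nat.sub_zero]
    refine lt_of_le_of_lt Polynomial.degree_le_natDegree ?_
    refine WithBot.coe_lt_coe.2 ?_
    refine lt_of_le_of_lt (Polynomial.natDegree_prod_le _ _) ?_
    refine lt_of_le_of_lt (Finset.sum_le_sum fun i _ => PL_deg _) ?_
    simpa using h
  · rw [Nat.card_Ioc, Nat.sub_zero]
    refine lt_of_le_of_lt (Polynomial.degree_sum_le _ _) ?_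
    refine (Finset.sup_lt_iff (WithBot.bot_lt_coe _)).2 fun n hn => ?_
    refine lt_of_le_of_lt Polynomial.degree_le_natDegree ?_
    refine WithBot.coe_lt_coe.2 ?_
    refine lt_of_le_of_lt (Polynomial.natDegree_C_mul_le _ _) ?_
    refine lt_of_le_of_lt (Polynomial.natDegree_prod_le _ _) ?_
    refine lt_of_le_of_lt (Finset.sum_le_sum fun i _ => PL_deg _) ?_
    rw [Finset.sum_const, Finset.card_erase_of_mem hn]
    simp; omega
  · intro m hm
    rw [Polynomial.eval_prod, Polynomial.eval_finsetSum, Finset.sum_eq_single m]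
    · rw [Polynomial.eval_mul, Polynomial.eval_prod, Polynomial.eval_C]
      have := norm_all m p (by simp at hm; omega) (by simp at hm; omega)
      have e : ∀ k : ℕ, Polynomial.eval ((m:ℝ)^2) (PL k) = 1 - (m : ℝ) ^ 2 * ((k : ℝ) ^ 2)⁻¹ := by
        intro k; simp [PL]; ring
      simp only [e]
      have h2 : ∏ x ∈ range q, (1 - (m:ℝ)^2 * (((x+1 : ℕ):ℝ)^2)⁻¹) = pe m q := by
        unfold pe; push_cast; rfl
      rw [h2]
      linear_combination (-pe m q) * this
    · intro n hn hne
      rw [Polynomial.eval_mul, Polynomial.eval_prod, Finset.prod_eq_zero (i := m), mul_zero]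
      · simp at hm hn ⊢; exact ⟨Ne.symm hne, hm⟩
      · have : (m:ℝ) ≠ 0 := by simp at hm; have : m ≠ 0 := by omega
                               exact_mod_cast this
        simp [PL, this]
    · intro h; exact absurd hm h

open PowerSeries

noncomputable def e (n : ℕ) : ℝ⟦X⟧ := PowerSeries.mk (fun j => (((n:ℝ)^2)⁻¹)^j)
noncomputable def L (n : ℕ) : ℝ⟦X⟧ := 1 - C (((n:ℝ)^2)⁻¹) * X
lemma L_e (n : ℕ) : L n * e n = 1 := by
  ext j
  cases j with
  | zero => simp [L, e, sub_mul, mul_assoc]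
  | succ j =>
    rw [L, sub_mul, mul_assoc, map_sub, coeff_C_mul, one_mul, mul_comm X, coeff_succ_mul_X]
    simp [e, coeff_one, pow_succ, mul_comm]
noncomputable def P (N : ℕ) : ℝ⟦X⟧ := ∏ k ∈ range N, L (k+1)
noncomputable def Pinv (N : ℕ) : ℝ⟦X⟧ := ∏ k ∈ range N, e (k+1)
lemma P_zero : P 0 = 1 := by simp [P]
lemma Pinv_zero : Pinv 0 = 1 := by simp [Pinv]
lemma P_succ (N : ℕ) : P (N+1) = P N * L (N+1) := by simp [P, prod_range_succ]
lemma Pinv_succ (N : ℕ) : Pinv (N+1) = Pinv N * e (N+1) := by simp [Pinv, prod_range_succ]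
lemma P_Pinv (N : ℕ) : P N * Pinv N = 1 := by
  rw [P, Pinv, ← prod_mul_distrib]
  exact prod_eq_one fun k _ => L_e _

lemma PF (q p : ℕ) (h : q < p) : P q * Pinv p = ∑ n ∈ range (p+1), C (ep n * c n p * pe n q) * e n := by
  have h1 := congrArg (Polynomial.coeToPowerSeries.ringHom (R := ℝ)) (lagr q p h)
  have hL : ∀ n, Polynomial.coeToPowerSeries.ringHom (PL n) = L n := by
    intro n; simp [PL, L]
  simp only [map_prod, map_sum, map_mul, hL] at h1
  have hP : ∀ p, P p = ∏ k ∈ Ioc 0 p, L k := by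
    intro p
    have : Ioc 0 p = (range p).image (fun k => k + 1) := by
      ext x; simp
      constructor
      · intro h; exact ⟨x - 1, by omega, by omega⟩
      · rintro ⟨a, h, rfl⟩; omega
    rw [this, Finset.prod_image (by intro a _ b _ h; simpa using h), P]
  change P q = _ at h1
  have h2 : P q = P p * ∑ n ∈ range (p+1), C (ep n * c n p * pe n q) * e n := by
    rw [h1, Finset.mul_sum, Finset.sum_range_succ']
    simp only [ep_zero, zero_mul, map_zero, mul_zero, add_zero]
    have : Ioc 0 p = (range p).image (fun k => k + 1) := by
      ext x; simp
      constructor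
      · intro h; exact ⟨x - 1, by omega, by omega⟩
      · rintro ⟨a, h, rfl⟩; omega
    conv_lhs => rw [Finset.sum_congr this (fun _ _ => rfl)]
    rw [Finset.sum_image (by intro a _ b _ h; simpa using h)]
    refine Finset.sum_congr rfl fun n hn => ?_
    rw [hP p, ← Finset.mul_prod_erase (Ioc 0 p) L (a := n+1) (by simp at hn ⊢; omega)]
    have := L_e (n+1)
    simp only [Polynomial.coeToPowerSeries.ringHom_apply, Polynomial.coe_C, map_mul]
    linear_combination (-C (ep (n + 1)) * C (c (n + 1) p) * C (pe (n + 1) q) * ∏ x ∈ (Ioc 0 p).erase (n+1), L x) * this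
  rw [h2, mul_right_comm, P_Pinv, one_mul]
end Hof

namespace Hof
open Finset Filter Topology
open PowerSeries

lemma coeff_L_mul (n : ℕ) (F : ℝ⟦X⟧) (j : ℕ) :
    coeff (j+1) (L n * F) = coeff (j+1) F - ((n:ℝ)^2)⁻¹ * coeff j F := by
  rw [L, sub_mul, mul_assoc, map_sub, coeff_C_mul, one_mul, mul_comm X, coeff_succ_mul_X]
lemma coeff_L_mul_zero (n : ℕ) (F : ℝ⟦X⟧) :
    coeff 0 (L n * F) = coeff 0 F := by
  simp [L]

noncomputable def S (w : ℕ → ℝ) (N : ℕ) : ℝ⟦X⟧ := P N * ∑ q ∈ range N, C (w q) * Pinv (q+1)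
lemma S_succ (w : ℕ → ℝ) (N : ℕ) : S w (N+1) = L (N+1) * S w N + C (w N) := by
  rw [S, S, sum_range_succ, mul_add, mul_left_comm, P_Pinv, P_succ]
  ring
lemma S_coeff (w : ℕ → ℝ) (u : ℕ → ℕ → ℝ) (h0 : ∀ j, u j 0 = 0)
    (h1 : ∀ N, u 0 (N+1) = u 0 N + w N)
    (h2 : ∀ j N, u (j+1) (N+1) = u (j+1) N + (1 / ((N:ℝ)+1)^2) * u j N) (j N : ℕ) :
    coeff j (S w N) = (-1)^j * u j N := by
  induction N generalizing j with
  | zero => simp [S, h0]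
  | succ N ih =>
    rw [S_succ, map_add]
    cases j with
    | zero => rw [coeff_L_mul_zero, ih, h1]; simp
    | succ j =>
      rw [coeff_L_mul, ih, ih, h2, coeff_C]
      push_cast
      simp
      ring

lemma P_coeff (j N : ℕ) : coeff j (P N) = (-1)^j * t (List.replicate j 2) N := by
  induction N generalizing j with
  | zero =>
    cases j with
    | zero => simp [P, t_nil]
    | succ j => rw [List.replicate_succ', t_zero]; simp [P, coeff_one]
  | succ N ih =>
    rw [P_succ, mul_comm]
    cases j with
    | zero => rw [coeff_L_mul_zero, ih]; simp [t_nil]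
    | succ j =>
      rw [coeff_L_mul, ih, ih, List.replicate_succ', t_succ]
      push_cast; ring

noncomputable def w3 (q : ℕ) : ℝ := 1 / ((q:ℝ)+1)^3
noncomputable def w33 (q : ℕ) : ℝ := 1 / ((q:ℝ)+1)^3 * t [3] q
lemma rep_app (l : List ℕ) (j : ℕ) : l ++ List.replicate (j+1) 2 = (l ++ List.replicate j 2) ++ [2] := by
  rw [List.replicate_succ', List.append_assoc]

lemma B_coeff (j N : ℕ) : coeff j (S w3 N) = (-1)^j * t ([3] ++ List.replicate j 2) N := by
  refine S_coeff w3 (fun j N => t ([3] ++ List.replicate j 2) N) ?_ ?_ ?_ j N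
  · intro j
    cases j with
    | zero => exact t_zero [] 3
    | succ j => simp only [rep_app]; exact t_zero _ _
  · intro N
    have := t_succ [] 3 N
    simpa [t_nil, w3] using this
  · intro j N
    simp only [rep_app]
    exact t_succ _ _ _
lemma A_coeff (j N : ℕ) : coeff j (S w33 N) = (-1)^j * t ([3,3] ++ List.replicate j 2) N := by
  refine S_coeff w33 (fun j N => t ([3,3] ++ List.replicate j 2) N) ?_ ?_ ?_ j N
  · intro j
    cases j with
    | zero => exact t_zero [3] 3
    | succ j => simp only [rep_app]; exact t_zero _ _
  · intro N
    have := t_succ [3] 3 N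
    simpa [w33] using this
  · intro j N
    simp only [rep_app]
    exact t_succ _ _ _

lemma t_sum (ks : List ℕ) (a N : ℕ) : t (ks ++ [a]) N = ∑ r ∈ range N, (1 / ((r:ℝ)+1)^a) * t ks r := by
  induction N with
  | zero => simp [t_zero]
  | succ N ih => rw [t_succ, ih, sum_range_succ]

noncomputable def tau (N q : ℕ) : ℝ := ∑ r ∈ Ioo q N, 1 / ((r:ℝ)+1)^2
noncomputable def T (N q : ℕ) : ℝ := tau N q / ((q:ℝ)+1)
lemma t12 (ks : List ℕ) (N : ℕ) : t (ks ++ [1,2]) N = ∑ q ∈ range N, T N q * t ks q := by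
  have : ks ++ [1,2] = (ks ++ [1]) ++ [2] := by simp
  rw [this, t_sum]
  simp only [t_sum, Finset.mul_sum, T, tau, Finset.sum_mul, Finset.sum_div]
  rw [Finset.sum_comm' (t' := range N) (s' := fun q => Ioo q N) (by intro x y; simp; omega)]
  refine sum_congr rfl fun q _ => sum_congr rfl fun r _ => ?_
  field_simp
noncomputable def FN (N : ℕ) : ℝ⟦X⟧ := ∑ q ∈ range N, C (T N q) * S w3 q
lemma F_coeff (j N : ℕ) : coeff j (FN N) = (-1)^j * t ([3] ++ List.replicate j 2 ++ [1,2]) N := by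
  rw [t12, FN, map_sum, mul_sum]
  refine sum_congr rfl fun q _ => ?_
  rw [coeff_C_mul, B_coeff]; ring

lemma PFext (q p N : ℕ) (h : q < p) (h2 : p ≤ N) :
    P q * Pinv p = ∑ n ∈ range (N+1), C (ep n * c n p * pe n q) * e n := by
  rw [PF q p h]
  refine Finset.sum_subset (by simpa using h2) ?_
  intro n _ hn
  rw [c_eq_zero (by simpa using hn)]; simp

noncomputable def WN (w : ℕ → ℝ) (n N : ℕ) : ℝ := ∑ p ∈ range N, w p * c n (p+1)
noncomputable def Zh (n N : ℕ) : ℝ := ∑ q ∈ range N, T N q * pe n q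

lemma EN_eq (w : ℕ → ℝ) (N : ℕ) : ∑ q ∈ range N, C (w q) * Pinv (q+1) = ∑ n ∈ range (N+1), C (ep n * WN w n N) * e n := by
  have : ∀ q ∈ range N, C (w q) * Pinv (q+1) = ∑ n ∈ range (N+1), C (w q * (ep n * c n (q+1))) * e n := by
    intro q hq
    have := PFext 0 (q+1) N (by omega) (by simp at hq; omega)
    rw [P_zero, one_mul] at this
    rw [this, mul_sum]
    refine sum_congr rfl fun n _ => ?_
    simp [pe_zero, mul_assoc]
  rw [sum_congr rfl this, sum_comm]
  refine sum_congr rfl fun n _ => ?_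
  rw [← sum_mul, ← map_sum]
  congr 2
  rw [WN, mul_sum]
  exact sum_congr rfl fun _ _ => by ring

noncomputable def HN (N : ℕ) : ℝ⟦X⟧ := ∑ n ∈ range (N+1), C (ep n * c n N * Zh n N) * e n
noncomputable def EN (N : ℕ) : ℝ⟦X⟧ := ∑ n ∈ range (N+1), C (ep n * WN w3 n N) * e n
noncomputable def QN (N : ℕ) : ℝ⟦X⟧ := ∑ n ∈ range (N+1), C (ep n * Zh n N * WN w3 n N) * e n

lemma FN_eq (N : ℕ) : FN N = P N * HN N * EN N - QN N := by
  have h1 : ∑ q ∈ range N, C (T N q) * P q = P N * HN N := by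
    have : ∀ q ∈ range N, C (T N q) * P q = P N * ∑ n ∈ range (N+1), C (ep n * c n N * (T N q * pe n q)) * e n := by
      intro q hq
      have h := PFext q N N (by simpa using hq) le_rfl
      have h' : P q = P N * (P q * Pinv N) := by
        rw [mul_left_comm, P_Pinv, mul_one]
      rw [h', h, mul_left_comm, mul_sum]
      congr 1
      refine sum_congr rfl fun n _ => ?_
      simp only [map_mul]; ring
    rw [sum_congr rfl this, ← mul_sum, sum_comm, HN]
    congr 1
    refine sum_congr rfl fun n _ => ?_
    rw [← sum_mul, ← map_sum, ← mul_sum, Zh]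
  have h2 : ∀ q ∈ range N, C (T N q) * S w3 q = C (T N q) * P q * EN N -
      ∑ n ∈ range (N+1), C (ep n * (T N q * pe n q) * WN w3 n N) * e n := by
    intro q hq
    have hq' : q < N := by simpa using hq
    have e1 : EN N = ∑ p ∈ range q, C (w3 p) * Pinv (p+1) + ∑ p ∈ Ico q N, C (w3 p) * Pinv (p+1) := by
      rw [EN, ← EN_eq, Finset.sum_range_add_sum_Ico _ hq'.le]
    have e2 : P q * ∑ p ∈ Ico q N, C (w3 p) * Pinv (p+1) = ∑ n ∈ range (N+1), C (ep n * pe n q * WN w3 n N) * e n := by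
      rw [mul_sum]
      have : ∀ p ∈ Ico q N, P q * (C (w3 p) * Pinv (p+1)) = ∑ n ∈ range (N+1), C (ep n * pe n q * (w3 p * c n (p+1))) * e n := by
        intro p hp
        rw [mul_left_comm, PFext q (p+1) N (by simp at hp; omega) (by simp at hp; omega), mul_sum]
        refine sum_congr rfl fun n _ => ?_
        simp only [map_mul]; ring
      rw [sum_congr rfl this, sum_comm]
      refine sum_congr rfl fun n _ => ?_
      rw [← sum_mul, ← map_sum, ← mul_sum]
      congr 2
      rw [WN, ← Finset.sum_range_add_sum_Ico _ hq'.le, mul_add]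
      have : ep n * pe n q * ∑ k ∈ range q, w3 k * c n (k+1) = 0 := by
        rw [mul_sum]
        refine sum_eq_zero fun k hk => ?_
        rcases Nat.eq_zero_or_pos n with rfl | hn
        · simp [ep_zero]
        · rcases lt_or_ge (k+1) n with h | h
          · rw [c_eq_zero h]; simp
          · rw [pe_eq_zero hn (by simp at hk; omega)]; simp
      rw [this, zero_add]
    have e3 : ∑ n ∈ range (N+1), C (ep n * (T N q * pe n q) * WN w3 n N) * e n
        = C (T N q) * ∑ n ∈ range (N+1), C (ep n * pe n q * WN w3 n N) * e n := by
      rw [mul_sum]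
      refine sum_congr rfl fun n _ => ?_
      simp only [map_mul]; ring
    rw [e3, ← e2, e1, S]
    ring
  rw [FN, sum_congr rfl h2, sum_sub_distrib, ← sum_mul, h1, QN, sum_comm]
  congr 1
  refine sum_congr rfl fun n _ => ?_
  rw [← sum_mul, ← map_sum, ← sum_mul, ← mul_sum, Zh]

lemma S_eq (w : ℕ → ℝ) (N : ℕ) : S w N = P N * ∑ n ∈ range (N+1), C (ep n * WN w n N) * e n := by
  rw [S, EN_eq]
end Hof

namespace Hof
open Finset Filter Topology

noncomputable def W (w : ℕ → ℝ) (n : ℕ) : ℝ := ∑' p, w p * c n (p+1)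
lemma W_summable {w : ℕ → ℝ} (hw : ∀ p, 0 ≤ w p) (hs : Summable w) (n : ℕ) : Summable (fun p => w p * c n (p+1)) :=
  Summable.of_nonneg_of_le (fun p => mul_nonneg (hw p) (c_nonneg _ _))
    (fun p => mul_le_of_le_one_right (hw p) (c_le_one _ _)) hs
lemma W_tendsto {w : ℕ → ℝ} (hw : ∀ p, 0 ≤ w p) (hs : Summable w) (n : ℕ) : Tendsto (fun N => WN w n N) atTop (𝓝 (W w n)) :=
  (W_summable hw hs n).hasSum.tendsto_sum_nat
lemma WN_nonneg {w : ℕ → ℝ} (hw : ∀ p, 0 ≤ w p) (n N : ℕ) : 0 ≤ WN w n N :=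
  sum_nonneg fun p _ => mul_nonneg (hw p) (c_nonneg _ _)
lemma W_nonneg {w : ℕ → ℝ} (hw : ∀ p, 0 ≤ w p) (n : ℕ) : 0 ≤ W w n :=
  tsum_nonneg fun p => mul_nonneg (hw p) (c_nonneg _ _)
lemma WN_le {w : ℕ → ℝ} (hw : ∀ p, 0 ≤ w p) (hs : Summable w) (n N : ℕ) : WN w n N ≤ W w n :=
  (W_summable hw hs n).sum_le_tsum _ fun p _ => mul_nonneg (hw p) (c_nonneg _ _)
lemma WN_succ (w : ℕ → ℝ) (n N : ℕ) : WN w n (N+1) = WN w n N + w N * c n (N+1) := by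
  simp [WN, sum_range_succ]

lemma w3_nonneg (p : ℕ) : 0 ≤ w3 p := by unfold w3; positivity
lemma inv_summable (k : ℕ) (hk : 2 ≤ k) : Summable (fun p : ℕ => 1 / ((p:ℝ)+1)^k) := by
  have := (summable_nat_add_iff 1).2 (Real.summable_one_div_nat_pow.2 (by omega : 1 < k))
  simpa using this
lemma w3_summable : Summable w3 := inv_summable 3 (by norm_num)
noncomputable def z3 : ℝ := ∑' p, w3 p
noncomputable def z2 : ℝ := ∑' p : ℕ, 1 / ((p:ℝ)+1)^2
lemma t3_sum (N : ℕ) : t [3] N = ∑ p ∈ range N, w3 p := by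
  have := t_sum [] 3 N
  simpa [t_nil, w3] using this
lemma t3_le (N : ℕ) : t [3] N ≤ z3 := by
  rw [t3_sum]; exact w3_summable.sum_le_tsum _ fun p _ => w3_nonneg p
lemma t3_nonneg (N : ℕ) : 0 ≤ t [3] N := by
  rw [t3_sum]; exact sum_nonneg fun p _ => w3_nonneg p
lemma t3_tendsto : Tendsto (fun N => t [3] N) atTop (𝓝 z3) := by
  simp only [t3_sum]; exact w3_summable.hasSum.tendsto_sum_nat
lemma w33_eq (p : ℕ) : w33 p = w3 p * t [3] p := rfl
lemma w33_nonneg (p : ℕ) : 0 ≤ w33 p := mul_nonneg (w3_nonneg p) (t3_nonneg p)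
lemma w33_le (p : ℕ) : w33 p ≤ w3 p * z3 := mul_le_mul_of_nonneg_left (t3_le p) (w3_nonneg p)
lemma w33_summable : Summable w33 :=
  Summable.of_nonneg_of_le w33_nonneg w33_le (w3_summable.mul_right _)

noncomputable def Z (n : ℕ) : ℝ := W w3 n
noncomputable def G (n : ℕ) : ℝ := W w33 n
lemma Z_nonneg (n : ℕ) : 0 ≤ Z n := W_nonneg w3_nonneg n
lemma G_nonneg (n : ℕ) : 0 ≤ G n := W_nonneg w33_nonneg n
lemma Z_tendsto (n : ℕ) : Tendsto (fun N => WN w3 n N) atTop (𝓝 (Z n)) := W_tendsto w3_nonneg w3_summable n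
lemma G_tendsto (n : ℕ) : Tendsto (fun N => WN w33 n N) atTop (𝓝 (G n)) := W_tendsto w33_nonneg w33_summable n
lemma z3_nonneg : 0 ≤ z3 := tsum_nonneg w3_nonneg
lemma G_le (n : ℕ) : G n ≤ z3 * Z n := by
  unfold G Z W
  rw [← tsum_mul_left]
  refine (W_summable w33_nonneg w33_summable n).tsum_le_tsum (fun p => ?_) ((W_summable w3_nonneg w3_summable n).mul_left _)
  have := mul_le_mul_of_nonneg_right (w33_le p) (c_nonneg n (p+1))
  linarith

lemma c_diff (n K : ℕ) (hn : 1 ≤ n) : c n (K+1) / (n:ℝ)^2 - c n K / (n:ℝ)^2 = c n (K+1) / ((K:ℝ)+1)^2 := by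
  rw [c_step n K]
  have : (n:ℝ) ≠ 0 := by positivity
  have : (K:ℝ)+1 ≠ 0 := by positivity
  field_simp; ring
lemma ZN_rec (n K : ℕ) (hn : 1 ≤ n) : n * WN w3 n K + (n+1) * WN w3 (n+1) K
    = c n K / (n:ℝ)^2 - c (n+1) K / ((n:ℝ)+1)^2 := by
  induction K with
  | zero => simp [WN, c_eq_zero (show 0 < n by omega), c_eq_zero (show 0 < n+1 by omega)]
  | succ K ih =>
    rw [WN_succ, WN_succ]
    have h1 := c_diff n K hn
    have h2 := c_diff (n+1) K (by omega)
    push_cast at h2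
    have h3 : w3 K * (n * c n (K+1) + (n+1) * c (n+1) (K+1)) = c n (K+1) / ((K:ℝ)+1)^2 - c (n+1) (K+1) / ((K:ℝ)+1)^2 := by
      rw [c_succ, w3]
      have : (K:ℝ)+1 ≠ 0 := by positivity
      have : (K:ℝ)+1+n+1 ≠ 0 := by positivity
      push_cast
      field_simp; ring
    linear_combination ih + h3 - h1 + h2
lemma Z_rec (n : ℕ) (hn : 1 ≤ n) : n * Z n + (n+1) * Z (n+1) = 1 / (n:ℝ)^2 - 1 / ((n:ℝ)+1)^2 := by
  have h1 := ((Z_tendsto n).const_mul (n:ℝ)).add ((Z_tendsto (n+1)).const_mul ((n:ℝ)+1))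
  have h2 := ((c_tendsto n).div_const ((n:ℝ)^2)).sub ((c_tendsto (n+1)).div_const (((n:ℝ)+1)^2))
  exact tendsto_nhds_unique (h1.congr fun K => ZN_rec n K hn) h2
lemma YN_rec (n K : ℕ) (hn : 1 ≤ n) :
    n * (t [3] K * WN w3 n K - WN w33 n K) + (n+1) * (t [3] K * WN w3 (n+1) K - WN w33 (n+1) K)
    = WN w3 n K / (n:ℝ)^2 - WN w3 (n+1) K / ((n:ℝ)+1)^2 := by
  induction K with
  | zero => simp [WN]
  | succ K ih =>
    have h1 := ZN_rec n (K+1) hn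
    have ht : t [3] (K+1) = t [3] K + w3 K := by rw [t3_sum, t3_sum, sum_range_succ]
    rw [WN_succ w3, WN_succ w3] at h1 ⊢
    rw [WN_succ w33, WN_succ w33, ht, w33_eq]
    linear_combination ih + w3 K * h1
lemma Y_rec (n : ℕ) (hn : 1 ≤ n) :
    n * (z3 * Z n - G n) + (n+1) * (z3 * Z (n+1) - G (n+1))
    = Z n / (n:ℝ)^2 - Z (n+1) / ((n:ℝ)+1)^2 := by
  have hh : ∀ n, Tendsto (fun K => t [3] K * WN w3 n K - WN w33 n K) atTop (𝓝 (z3 * Z n - G n)) :=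
    fun n => (t3_tendsto.mul (Z_tendsto n)).sub (G_tendsto n)
  have h1 := ((hh n).const_mul (n:ℝ)).add ((hh (n+1)).const_mul ((n:ℝ)+1))
  have h2 := ((Z_tendsto n).div_const ((n:ℝ)^2)).sub ((Z_tendsto (n+1)).div_const (((n:ℝ)+1)^2))
  exact tendsto_nhds_unique (h1.congr fun K => YN_rec n K hn) h2
lemma nZ_le (n : ℕ) (hn : 1 ≤ n) : n * Z n ≤ 2 / (n:ℝ)^3 := by
  have h1 := Z_rec n hn
  have h2 : 0 ≤ ((n:ℝ)+1) * Z (n+1) := mul_nonneg (by positivity) (Z_nonneg _)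
  have hn' : (0:ℝ) < n := by positivity
  have h3 : 1 / (n:ℝ)^2 - 1 / ((n:ℝ)+1)^2 ≤ 2 / (n:ℝ)^3 := by
    rw [div_sub_div _ _ (by positivity) (by positivity), div_le_div_iff₀ (by positivity) (by positivity)]
    have : 0 ≤ (n:ℝ)^2 * (3 * n + 2) := by positivity
    nlinarith
  linarith
lemma Z_le (n : ℕ) (hn : 1 ≤ n) : Z n ≤ 2 / (n:ℝ)^4 := by
  have hn' : (0:ℝ) < n := by positivity
  have := nZ_le n hn
  rw [le_div_iff₀ (by positivity)] at this ⊢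
  linarith [show Z n * (n:ℝ)^4 = n * Z n * (n:ℝ)^3 by ring]

lemma ZN_one (K : ℕ) : WN w3 1 K = ∑ p ∈ range K, 1 / ((p:ℝ)+1)^2 - (1 - 1 / ((K:ℝ)+1)) := by
  induction K with
  | zero => simp [WN]
  | succ K ih =>
    rw [WN_succ, ih, sum_range_succ, c_succ, c_zero, w3]
    have : (K:ℝ)+1 ≠ 0 := by positivity
    have : (K:ℝ)+1+1 ≠ 0 := by positivity
    push_cast
    simp only [add_zero, sub_zero]
    field_simp
    ring
lemma z2_tendsto : Tendsto (fun K : ℕ => ∑ p ∈ range K, 1 / ((p:ℝ)+1)^2) atTop (𝓝 z2) :=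
  (inv_summable 2 le_rfl).hasSum.tendsto_sum_nat
lemma Z_one : Z 1 = z2 - 1 := by
  have h1 := z2_tendsto.sub ((tendsto_const_nhds (x := (1:ℝ))).sub (tendsto_one_div_add_atTop_nhds_zero_nat (𝕜 := ℝ)))
  rw [sub_zero] at h1
  refine tendsto_nhds_unique (Z_tendsto 1) (h1.congr fun K => (ZN_one K).symm)

lemma z2_tail (N : ℕ) (hN : 1 ≤ N) : z2 - ∑ p ∈ range N, 1 / ((p:ℝ)+1)^2 ≤ 1 / (N:ℝ) := by
  have hm : ∀ M : ℕ, N ≤ M → ∑ p ∈ range M, 1 / ((p:ℝ)+1)^2 ≤ ∑ p ∈ range N, 1 / ((p:ℝ)+1)^2 + 1 / (N:ℝ) - 1 / (M:ℝ) := by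
    intro M hM
    induction M, hM using Nat.le_induction with
    | base => linarith
    | succ M hM ih =>
      rw [sum_range_succ]
      have hM0 : (0:ℝ) < M := by exact_mod_cast (by omega)
      have : 1 / ((M:ℝ)+1)^2 ≤ 1 / (M:ℝ) - 1 / (M+1) := by
        rw [div_sub_div _ _ (by positivity) (by positivity), div_le_div_iff₀ (by positivity) (by positivity)]
        nlinarith
      push_cast
      linarith
  have : z2 ≤ ∑ p ∈ range N, 1 / ((p:ℝ)+1)^2 + 1 / (N:ℝ) := by
    refine le_of_tendsto z2_tendsto ?_
    filter_upwards [eventually_ge_atTop N] with M hM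
    have := hm M hM
    have : 0 ≤ 1 / (M:ℝ) := by positivity
    linarith
  linarith
lemma z2_head (N : ℕ) : 0 ≤ z2 - ∑ p ∈ range N, 1 / ((p:ℝ)+1)^2 := by
  have := (inv_summable 2 le_rfl).sum_le_tsum (range N) fun p _ => by positivity
  unfold z2; linarith

lemma pe_rel (n q : ℕ) : ((n:ℝ)+1) * pe (n+1) q * (n - q) = n * pe n q * (n + q + 1) := by
  induction q with
  | zero => simp [pe_zero]; ring
  | succ q ih =>
    rw [pe_succ, pe_succ]
    have : (q:ℝ)+1 ≠ 0 := by positivity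
    push_cast
    have h1 : (1 - ((n:ℝ)+1)^2 * (((q:ℝ)+1)^2)⁻¹) = - (n - q) * (n + q + 2) * (((q:ℝ)+1)^2)⁻¹ := by
      field_simp; ring
    have h2 : (1 - (n:ℝ)^2 * (((q:ℝ)+1)^2)⁻¹) = - (n - q - 1) * (n + q + 1) * (((q:ℝ)+1)^2)⁻¹ := by
      field_simp; ring
    rw [h1, h2]
    linear_combination (- (n + q + 2) * (((q:ℝ)+1)^2)⁻¹ * (n - q - 1)) * ih
lemma A_rec (n r : ℕ) : n * ∑ q ∈ range r, pe n q / ((q:ℝ)+1) + (n+1) * ∑ q ∈ range r, pe (n+1) q / ((q:ℝ)+1)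
    = pe n r - pe (n+1) r := by
  induction r with
  | zero => simp [pe_zero]
  | succ r ih =>
    rw [sum_range_succ, sum_range_succ, pe_succ, pe_succ]
    have := pe_rel n r
    have h0 : (r:ℝ)+1 ≠ 0 := by positivity
    push_cast
    have h3 : (n * pe n r + (n+1) * pe (n+1) r) / ((r:ℝ)+1) = - pe n r * ((n:ℝ)^2 * (((r:ℝ)+1)^2)⁻¹) + pe (n+1) r * (((n:ℝ)+1)^2 * (((r:ℝ)+1)^2)⁻¹) := by
      field_simp
      linear_combination -this
    linear_combination ih + h3
lemma Zh_eq (n N : ℕ) : Zh n N = ∑ r ∈ range N, 1 / ((r:ℝ)+1)^2 * ∑ q ∈ range r, pe n q / ((q:ℝ)+1) := by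
  simp only [Zh, T, tau, mul_sum, sum_mul, sum_div]
  symm
  rw [Finset.sum_comm' (t' := range N) (s' := fun q => Ioo q N) (by intro x y; simp; omega)]
  refine sum_congr rfl fun q _ => sum_congr rfl fun r _ => ?_
  field_simp
lemma pe_tel (n N : ℕ) (hn : 1 ≤ n) : ∑ r ∈ range N, 1 / ((r:ℝ)+1)^2 * pe n r = (1 - pe n N) / (n:ℝ)^2 := by
  have : (n:ℝ) ≠ 0 := by positivity
  induction N with
  | zero => simp [pe_zero]
  | succ N ih =>
    rw [sum_range_succ, ih, pe_succ]
    have : (N:ℝ)+1 ≠ 0 := by positivity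
    field_simp; ring
lemma Zh_rec (n N : ℕ) (hn : 1 ≤ n) (hN : n + 1 ≤ N) :
    n * Zh n N + (n+1) * Zh (n+1) N = 1 / (n:ℝ)^2 - 1 / ((n:ℝ)+1)^2 := by
  have h1 := pe_tel n N hn
  have h2 := pe_tel (n+1) N (by omega)
  rw [pe_eq_zero hn (by omega), sub_zero] at h1
  rw [pe_eq_zero (by omega) hN, sub_zero] at h2
  push_cast at h2
  rw [← h1, ← h2, Zh_eq, Zh_eq, mul_sum, mul_sum, ← sum_add_distrib, ← sum_sub_distrib]
  refine sum_congr rfl fun r _ => ?_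
  linear_combination (1 / ((r:ℝ)+1)^2) * A_rec n r
lemma Zh_one (N : ℕ) (hN : 1 ≤ N) : Zh 1 N = ∑ p ∈ range N, 1 / ((p:ℝ)+1)^2 - 1 := by
  obtain ⟨M, rfl⟩ : ∃ k, N = k + 1 := ⟨N - 1, by omega⟩
  rw [Zh, sum_range_succ']
  have : ∀ q ∈ range M, T (M+1) (q+1) * pe 1 (q+1) = 0 := by
    intro q _; rw [pe_eq_zero le_rfl (by omega), mul_zero]
  rw [sum_eq_zero this, pe_zero, T, tau, sum_range_succ']
  have h2 : Ioo 0 (M+1) = (range M).image (fun k => k + 1) := by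
    ext x; simp
    constructor
    · intro h; exact ⟨x - 1, by omega, by omega⟩
    · rintro ⟨a, h, rfl⟩; omega
  rw [h2, Finset.sum_image (by intro a _ b _ h; simpa using h)]
  simp
lemma Zh_sub (n N : ℕ) (hn : 1 ≤ n) (hN : n ≤ N) : |n * (Zh n N - Z n)| ≤ 1 / N := by
  induction n, hn using Nat.le_induction with
  | base =>
    rw [Zh_one N hN, Z_one]
    have h1 := z2_tail N hN
    have h2 := z2_head N
    rw [abs_le]
    push_cast
    constructor <;> linarith
  | succ n hn ih =>
    have h1 := Z_rec n hn
    have h2 := Zh_rec n N hn hN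
    have h3 := ih (by omega)
    have : ((n+1 : ℕ):ℝ) * (Zh (n+1) N - Z (n+1)) = -(n * (Zh n N - Z n)) := by
      push_cast; linear_combination h2 - h1
    rw [this, abs_neg]; exact h3
lemma Zh_tendsto (n : ℕ) (hn : 1 ≤ n) : Tendsto (fun N => Zh n N) atTop (𝓝 (Z n)) := by
  rw [tendsto_iff_norm_sub_tendsto_zero]
  refine squeeze_zero' (Eventually.of_forall fun _ => norm_nonneg _) ?_ (tendsto_one_div_atTop_nhds_zero_nat (𝕜 := ℝ))
  filter_upwards [eventually_ge_atTop n] with N hN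
  refine le_trans ?_ (Zh_sub n N hn hN)
  rw [abs_mul, Real.norm_eq_abs, Nat.abs_cast]
  have : (1:ℝ) ≤ n := by exact_mod_cast hn
  nlinarith [abs_nonneg (Zh n N - Z n)]
lemma Zh_bound (n N : ℕ) (hn : 1 ≤ n) (hN : n ≤ N) : |Zh n N| ≤ 3 / (n:ℝ)^2 := by
  have h1 := Zh_sub n N hn hN
  have h2 := Z_le n hn
  have h3 := Z_nonneg n
  have hn' : (1:ℝ) ≤ n := by exact_mod_cast hn
  have hN' : (n:ℝ) ≤ N := by exact_mod_cast hN
  have h4 : |Zh n N - Z n| ≤ 1 / (n:ℝ)^2 := by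
    rw [abs_mul, Nat.abs_cast] at h1
    have h5 : 1 / (N:ℝ) ≤ 1 / n := one_div_le_one_div_of_le (by linarith) hN'
    have h6 := h1.trans h5
    rw [le_div_iff₀ (by linarith)] at h6
    rw [le_div_iff₀ (by positivity)]
    linarith [show |Zh n N - Z n| * (n:ℝ)^2 = n * |Zh n N - Z n| * n by ring]
  have h5 : 2 / (n:ℝ)^4 ≤ 2 / (n:ℝ)^2 := by
    gcongr; norm_num
  have h6 : |Z n| ≤ 2 / (n:ℝ)^2 := by rw [abs_of_nonneg h3]; linarith
  calc |Zh n N| = |(Zh n N - Z n) + Z n| := by ring_nf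
    _ ≤ _ := abs_add_le _ _
    _ ≤ 1 / (n:ℝ)^2 + 2 / (n:ℝ)^2 := add_le_add h4 h6
    _ = _ := by ring
end Hof

namespace Hof
open Finset Filter Topology
open PowerSeries

noncomputable def D (a : ℕ → ℝ) : ℝ⟦X⟧ := PowerSeries.mk (fun j => ∑' n, ep n * a n * (((n:ℝ)^2)⁻¹)^j)

lemma inv_pow_le (n j : ℕ) : (((n:ℝ)^2)⁻¹)^j ≤ 1 := by
  refine pow_le_one₀ (by positivity) ?_
  rcases Nat.eq_zero_or_pos n with rfl | h
  · simp
  · have : (1:ℝ) ≤ n := by exact_mod_cast h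
    exact inv_le_one_of_one_le₀ (by nlinarith)

lemma term_bound (K a : ℝ) (n j : ℕ) (h : 1 ≤ n → |a| ≤ K / (n:ℝ)^2) :
    |ep n * a * (((n:ℝ)^2)⁻¹)^j| ≤ 2 * (K * (1 / (n:ℝ)^2)) := by
  rcases Nat.eq_zero_or_pos n with rfl | hn
  · simp [ep_zero]
  · have h1 := h hn
    rw [abs_mul, abs_mul, abs_of_nonneg (show 0 ≤ (((n:ℝ)^2)⁻¹)^j by positivity)]
    have h2 := ep_abs n
    have h3 := inv_pow_le n j
    calc |ep n| * |a| * (((n:ℝ)^2)⁻¹)^j ≤ |ep n| * |a| * 1 := by gcongr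
      _ ≤ 2 * (K / (n:ℝ)^2) * 1 := by gcongr
      _ = _ := by ring

lemma D_summable (a : ℕ → ℝ) (K : ℝ) (h : ∀ n, 1 ≤ n → |a n| ≤ K / (n:ℝ)^2) (j : ℕ) :
    Summable (fun n => ep n * a n * (((n:ℝ)^2)⁻¹)^j) := by
  refine Summable.of_norm_bounded (((Real.summable_one_div_nat_pow.2 (by norm_num : 1 < 2)).mul_left K).mul_left 2) fun n => ?_
  exact term_bound K (a n) n j (h n)

def Conv (F : ℕ → ℝ⟦X⟧) (f : ℝ⟦X⟧) : Prop := ∀ j, Tendsto (fun N => coeff j (F N)) atTop (𝓝 (coeff j f))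
lemma Conv.mul {F G : ℕ → ℝ⟦X⟧} {f g : ℝ⟦X⟧} (h : Conv F f) (h' : Conv G g) : Conv (fun N => F N * G N) (f * g) := by
  intro j
  simp only [coeff_mul]
  exact tendsto_finsetSum _ fun i _ => (h _).mul (h' _)
lemma Conv.sub {F G : ℕ → ℝ⟦X⟧} {f g : ℝ⟦X⟧} (h : Conv F f) (h' : Conv G g) : Conv (fun N => F N - G N) (f - g) := by
  intro j
  simp only [map_sub]
  exact (h _).sub (h' _)

lemma D_conv (aN : ℕ → ℕ → ℝ) (a : ℕ → ℝ) (K : ℝ)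
    (ht : ∀ n, 1 ≤ n → Tendsto (fun N => aN n N) atTop (𝓝 (a n)))
    (hb : ∀ n N, 1 ≤ n → n ≤ N → |aN n N| ≤ K / (n:ℝ)^2) :
    Conv (fun N => ∑ n ∈ range (N+1), C (ep n * aN n N) * e n) (D a) := by
  intro j
  simp only [map_sum, coeff_C_mul, e, D, coeff_mk]
  have h1 : ∀ N, ∑ n ∈ range (N+1), ep n * aN n N * (((n:ℝ)^2)⁻¹)^j
      = ∑' n, if n ≤ N then ep n * aN n N * (((n:ℝ)^2)⁻¹)^j else 0 := by
    intro N
    rw [tsum_eq_sum (s := range (N+1))]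
    · refine sum_congr rfl fun n hn => ?_
      rw [if_pos (by simp at hn; omega)]
    · intro n hn
      rw [if_neg (by simp at hn; omega)]
  simp only [h1]
  refine tendsto_tsum_of_dominated_convergence (bound := fun n => 2 * (max K 0 * (1 / (n:ℝ)^2)))
    (((Real.summable_one_div_nat_pow.2 (by norm_num : 1 < 2)).mul_left _).mul_left 2) ?_ ?_
  · intro n
    rcases Nat.eq_zero_or_pos n with rfl | hn
    · simp [ep_zero]
    · have := ((ht n hn).const_mul (ep n)).mul_const ((((n:ℝ)^2)⁻¹)^j)
      refine this.congr' ?_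
      filter_upwards [eventually_ge_atTop n] with N hN
      rw [if_pos hN]
  · refine Eventually.of_forall fun N n => ?_
    split_ifs with h
    · refine term_bound (max K 0) _ n j fun hn => (hb n N hn h).trans ?_
      gcongr; exact le_max_left _ _
    · simp; positivity

noncomputable def iv (n : ℕ) : ℝ := ((n:ℝ)^2)⁻¹
noncomputable def eta : ℝ⟦X⟧ := 1 + X * D iv
noncomputable def s : ℝ⟦X⟧ := eta⁻¹
lemma eta_cc : constantCoeff eta = 1 := by simp [eta]
lemma eta_s : eta * s = 1 := PowerSeries.mul_inv_cancel _ (by rw [eta_cc]; norm_num)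
lemma coeff_eta_succ (j : ℕ) : coeff (j+1) eta = ∑' n, ep n * (((n:ℝ)^2)⁻¹)^(j+1) := by
  rw [eta, map_add, mul_comm, coeff_succ_mul_X]
  simp [D, coeff_one, iv, pow_succ', mul_assoc]

lemma Pinv_cc (N : ℕ) : constantCoeff (Pinv N) = 1 := by
  simp only [Pinv, map_prod]
  refine prod_eq_one fun k _ => ?_
  rw [← coeff_zero_eq_constantCoeff_apply]; simp [e]

lemma Pinv_conv : Conv Pinv eta := by
  intro j
  cases j with
  | zero => simp [Pinv_cc, eta_cc]
  | succ j =>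
    have h := D_conv (fun n N => c n N * iv n) iv 1 (fun n _ => by simpa using (c_tendsto n).mul_const (iv n))
      (by
        intro n N hn hN
        rw [abs_of_nonneg (mul_nonneg (c_nonneg _ _) (by unfold iv; positivity)), one_div]
        exact mul_le_of_le_one_left (by unfold iv; positivity) (c_le_one _ _)) j
    rw [eta, map_add, mul_comm, coeff_succ_mul_X, coeff_one, if_neg (by omega), zero_add]
    refine h.congr' ?_
    filter_upwards [eventually_ge_atTop 1] with N hN
    have := PFext 0 N N (by omega) le_rfl
    rw [P_zero, one_mul] at this
    rw [this, map_sum, map_sum]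
    refine sum_congr rfl fun n _ => ?_
    rw [coeff_C_mul, coeff_C_mul]
    simp only [e, coeff_mk, pe_zero, iv, pow_succ]
    ring

lemma P_inv (N : ℕ) : P N = (Pinv N)⁻¹ := by
  rw [PowerSeries.eq_inv_iff_mul_eq_one (by rw [Pinv_cc]; norm_num)]
  exact P_Pinv N

lemma P_conv : Conv P s := by
  intro j
  induction j using Nat.strong_induction_on with
  | _ j ih =>
    simp only [P_inv] at ih ⊢
    simp only [s, PowerSeries.coeff_inv j, Pinv_cc, eta_cc]
    by_cases hj : j = 0
    · simp [hj]
    · simp only [hj, if_false]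
      refine Tendsto.const_mul _ (tendsto_finsetSum _ fun x hx => ?_)
      split_ifs with hx2
      · exact (Pinv_conv _).mul (ih _ hx2)
      · exact tendsto_const_nhds

noncomputable def Ee : ℝ⟦X⟧ := D Z
noncomputable def Qq : ℝ⟦X⟧ := D (fun n => Z n * Z n)
noncomputable def Ph : ℝ⟦X⟧ := D G

lemma four_two (n : ℕ) (hn : 1 ≤ n) : 2 / (n:ℝ)^4 ≤ 2 / (n:ℝ)^2 := by
  have hn' : (1:ℝ) ≤ n := by exact_mod_cast hn
  gcongr; norm_num
lemma Z_bound (n : ℕ) (hn : 1 ≤ n) : |Z n| ≤ 2 / (n:ℝ)^2 := by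
  rw [abs_of_nonneg (Z_nonneg n)]
  exact (Z_le n hn).trans (four_two n hn)
lemma ZN_bound (n N : ℕ) (hn : 1 ≤ n) : |WN w3 n N| ≤ 2 / (n:ℝ)^2 := by
  rw [abs_of_nonneg (WN_nonneg w3_nonneg _ _)]
  exact (WN_le w3_nonneg w3_summable n N).trans ((Z_le n hn).trans (four_two n hn))
lemma two_le_two (n : ℕ) (hn : 1 ≤ n) : 2 / (n:ℝ)^2 ≤ 2 := by
  have hn' : (1:ℝ) ≤ n := by exact_mod_cast hn
  exact div_le_self (by norm_num) (by nlinarith)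
lemma EN_conv : Conv EN Ee :=
  D_conv _ _ 2 (fun n _ => Z_tendsto n) (fun n N hn _ => ZN_bound n N hn)
lemma HN_conv : Conv HN Ee := by
  have := D_conv (fun n N => c n N * Zh n N) Z 3 (fun n hn => by simpa using (c_tendsto n).mul (Zh_tendsto n hn))
    (fun n N hn hN => by
      rw [abs_mul, abs_of_nonneg (c_nonneg _ _)]
      exact (mul_le_of_le_one_left (abs_nonneg _) (c_le_one _ _)).trans (Zh_bound n N hn hN))
  intro j
  refine (this j).congr fun N => ?_
  simp only [HN, mul_assoc]
lemma QN_conv : Conv QN Qq := by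
  have := D_conv (fun n N => Zh n N * WN w3 n N) (fun n => Z n * Z n) 6 (fun n hn => (Zh_tendsto n hn).mul (Z_tendsto n))
    (fun n N hn hN => by
      rw [abs_mul]
      calc _ ≤ 3 / (n:ℝ)^2 * 2 := mul_le_mul (Zh_bound n N hn hN) ((ZN_bound n N hn).trans (two_le_two n hn)) (abs_nonneg _) (by positivity)
        _ = _ := by ring)
  intro j
  refine (this j).congr fun N => ?_
  simp only [QN, mul_assoc]
lemma PhN_conv : Conv (fun N => ∑ n ∈ range (N+1), C (ep n * WN w33 n N) * e n) Ph := 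
  D_conv _ _ (z3 * 2) (fun n _ => G_tendsto n) (fun n N hn _ => by
    rw [abs_of_nonneg (WN_nonneg w33_nonneg _ _)]
    refine (WN_le w33_nonneg w33_summable n N).trans ((G_le n).trans ?_)
    have := (Z_le n hn).trans (four_two n hn)
    have := mul_le_mul_of_nonneg_left this z3_nonneg
    rw [mul_div_assoc]; exact this)

lemma mzv_conv (F : ℕ → ℝ⟦X⟧) (f : ℝ⟦X⟧) (h : Conv F f) (ks : List ℕ) (j : ℕ)
    (hk : ∀ N, coeff j (F N) = (-1)^j * t ks N) : mzv ks = (-1)^j * coeff j f := by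
  refine mzv_of_t _ _ (((h j).const_mul ((-1)^j)).congr fun N => ?_)
  rw [hk, ← mul_assoc, ← mul_pow]; simp

lemma mzv_two (j : ℕ) : mzv (List.replicate j 2) = (-1)^j * coeff j s :=
  mzv_conv P s P_conv _ j (P_coeff j)
lemma mzv_33 (j : ℕ) : mzv ([3,3] ++ List.replicate j 2) = (-1)^j * coeff j (s * Ph) :=
  mzv_conv _ _ (P_conv.mul PhN_conv) _ j (fun N => by rw [← A_coeff, S_eq])
lemma mzv_12 (j : ℕ) : mzv ([3] ++ List.replicate j 2 ++ [1,2]) = (-1)^j * coeff j (s * Ee * Ee - Qq) :=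
  mzv_conv _ _ (((P_conv.mul HN_conv).mul EN_conv).sub QN_conv) _ j (fun N => by rw [← F_coeff, FN_eq])

lemma s_zero : coeff 0 s = 1 := by
  have h := P_conv 0
  simp only [P_coeff, List.replicate_zero, t_nil] at h
  exact tendsto_nhds_unique h (by simp)
lemma Ee_zero : ∑' n, ep n * Z n = z3 := by
  have h := (P_conv.mul EN_conv) 0
  have h2 : ∀ N, coeff 0 (P N * EN N) = t [3] N := by
    intro N; rw [EN, ← S_eq, B_coeff]; simp
  simp only [h2] at h
  have h3 := tendsto_nhds_unique h t3_tendsto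
  rw [coeff_mul] at h3
  simp [Ee, D] at h3
  rw [← coeff_zero_eq_constantCoeff_apply, s_zero, one_mul] at h3
  exact h3
lemma s_one : coeff 1 s = -z2 := by
  have h := P_conv 1
  have h2 : ∀ N, coeff 1 (P N) = - ∑ p ∈ range N, 1 / ((p:ℝ)+1)^2 := by
    intro N
    have := t_sum [] 2 N
    simp only [List.nil_append, t_nil, mul_one] at this
    rw [P_coeff]; simp [this]
  simp only [h2] at h
  exact tendsto_nhds_unique h z2_tendsto.neg
lemma eta_one : coeff 1 eta = z2 := by
  have h := congrArg (coeff 1) eta_s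
  rw [coeff_mul, Finset.Nat.antidiagonal_succ] at h
  simp [coeff_one, eta_cc] at h
  rw [s_one, ← coeff_zero_eq_constantCoeff_apply, s_zero] at h
  linarith
lemma s_two : coeff 2 s = z2^2 - coeff 2 eta := by
  have h := congrArg (coeff 2) eta_s
  rw [coeff_mul, Finset.Nat.sum_antidiagonal_eq_sum_range_succ_mk, sum_range_succ, sum_range_succ, sum_range_succ] at h
  simp [coeff_one, eta_cc] at h
  rw [s_one, ← coeff_zero_eq_constantCoeff_apply, s_zero, eta_one] at h
  linarith
end Hof

namespace Hof
open Finset Filter Topology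

noncomputable def sg (k : ℤ) : ℝ := (-1:ℝ)^k
lemma sg_succ (k : ℤ) : sg (k+1) = - sg k := by
  unfold sg; rw [zpow_add_one₀ (by norm_num)]; ring
lemma sg_neg (k : ℤ) : sg (-k) = sg k := by
  unfold sg; rw [zpow_neg, ← inv_zpow]; norm_num
lemma sg_abs (k : ℤ) : |sg k| = 1 := by
  unfold sg; rw [abs_zpow]; simp
lemma sg_nat (n : ℕ) : sg n = (-1)^n := by unfold sg; exact zpow_natCast _ _
lemma sg_sq (k : ℤ) : sg k * sg k = 1 := by
  rw [← abs_mul_abs_self, sg_abs]; norm_num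

lemma int_inv_le (k : ℤ) : |(k:ℝ)⁻¹| ≤ 1 := by
  rcases eq_or_ne k 0 with rfl | h
  · simp
  · rw [abs_inv]
    refine inv_le_one_of_one_le₀ ?_
    exact_mod_cast Int.one_le_abs h

noncomputable def K (u : ℤ → ℝ) (n : ℤ) : ℝ := ∑' k : ℤ, sg k * u k * ((k:ℝ) - n)⁻¹
lemma K_bound (u : ℤ → ℝ) (n k : ℤ) : |sg k * u k * ((k:ℝ) - n)⁻¹| ≤ |u k| := by
  rw [abs_mul, abs_mul, sg_abs, one_mul]
  have := int_inv_le (k - n)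
  push_cast at this
  exact mul_le_of_le_one_right (abs_nonneg _) this
lemma K_summable {u : ℤ → ℝ} (hu : Summable u) (n : ℤ) : Summable (fun k : ℤ => sg k * u k * ((k:ℝ) - n)⁻¹) :=
  Summable.of_norm_bounded hu.abs (fun k => K_bound u n k)
lemma K_add {u v : ℤ → ℝ} (hu : Summable u) (hv : Summable v) (n : ℤ) : K (fun k => u k + v k) n = K u n + K v n := by
  unfold K
  rw [← (K_summable hu n).tsum_add (K_summable hv n)]
  exact tsum_congr fun k => by ring
lemma K_smul (a : ℝ) (u : ℤ → ℝ) (n : ℤ) : K (fun k => a * u k) n = a * K u n := by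
  unfold K
  rw [← tsum_mul_left]
  exact tsum_congr fun k => by ring
lemma K_shift (u : ℤ → ℝ) (n : ℤ) : K (fun k => u (k+1)) n = - K u (n+1) := by
  unfold K
  rw [← tsum_neg, ← (Equiv.addRight (1:ℤ)).tsum_eq (fun k : ℤ => -(sg k * u k * ((k:ℝ) - ((n+1 : ℤ):ℝ))⁻¹))]
  refine tsum_congr fun k => ?_
  simp only [Equiv.coe_addRight, sg_succ]
  push_cast
  rw [show (k:ℝ) + 1 - (n + 1) = k - n by ring]; ring
lemma K_tendsto {u : ℤ → ℝ} (hu : Summable u) : Tendsto (fun n : ℕ => K u n) atTop (𝓝 0) := by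
  have : Tendsto (fun n : ℕ => K u n) atTop (𝓝 (∑' k : ℤ, (0:ℝ))) := by
    refine tendsto_tsum_of_dominated_convergence hu.abs ?_ (Eventually.of_forall fun n k => K_bound u n k)
    intro k
    have h : Tendsto (fun n : ℕ => ((k:ℝ) - n)⁻¹) atTop (𝓝 0) := by
      refine tendsto_inv_atBot_zero.comp ?_
      exact tendsto_atBot_add_const_left _ _ (tendsto_neg_atTop_atBot.comp tendsto_natCast_atTop_atTop)
    simpa using h.const_mul (sg k * u k)
  simpa using this

noncomputable def zz (k : ℤ) : ℝ := k * Z k.natAbs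
noncomputable def ii (k : ℤ) : ℝ := if k = 0 then z2 else ((k:ℝ)^2)⁻¹
lemma zz_zero : zz 0 = 0 := by simp [zz]
lemma zz_nat (n : ℕ) : zz n = n * Z n := by simp [zz]
lemma zz_neg (k : ℤ) : zz (-k) = - zz k := by simp [zz]
lemma ii_neg (k : ℤ) : ii (-k) = ii k := by simp [ii]

lemma zz_rec (k : ℤ) : zz k + zz (k+1) = ii k - ii (k+1) := by
  have hpos : ∀ n : ℕ, 1 ≤ n → zz n + zz ((n:ℤ)+1) = ii n - ii ((n:ℤ)+1) := by
    intro n hn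
    have h := Z_rec n hn
    have e1 := zz_nat (n+1)
    push_cast at e1
    rw [zz_nat, e1, ii, ii, if_neg (by omega), if_neg (by omega)]
    push_cast
    rw [h, one_div, one_div]
  have h0 : zz 1 = z2 - 1 := by have := zz_nat 1; simpa [Z_one] using this
  rcases lt_trichotomy k 0 with h | h | h
  · rcases eq_or_ne k (-1) with rfl | h1
    · simp [zz_neg, zz_zero, h0, ii]
    · obtain ⟨n, rfl⟩ : ∃ n : ℕ, k = -((n:ℤ) + 1) := ⟨(-k-1).toNat, by omega⟩
      have := hpos n (by omega)
      rw [show -((n:ℤ)+1) + 1 = -(n:ℤ) by ring, zz_neg, zz_neg, ii_neg, ii_neg]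
      linarith
  · subst h; simp [zz_zero, h0, ii]
  · obtain ⟨n, rfl⟩ : ∃ n : ℕ, k = (n:ℤ) := ⟨k.toNat, by omega⟩
    exact hpos n (by omega)

lemma zz_bound (k : ℤ) : |zz k| ≤ 2 * (1 / (k:ℝ)^2) := by
  have hpos : ∀ n : ℕ, |zz n| ≤ 2 * (1 / ((n:ℤ):ℝ)^2) := by
    intro n
    rcases Nat.eq_zero_or_pos n with rfl | hn
    · simp [zz_zero]
    · rw [zz_nat, abs_of_nonneg (mul_nonneg (by positivity) (Z_nonneg n))]
      refine (nZ_le n hn).trans ?_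
      have hn' : (1:ℝ) ≤ n := by exact_mod_cast hn
      rw [← mul_div_assoc, mul_one]
      push_cast
      gcongr; norm_num
  rcases Int.eq_nat_or_neg k with ⟨n, rfl | rfl⟩
  · exact hpos n
  · rw [zz_neg, abs_neg]; simpa using hpos n
lemma int_sq_summable : Summable (fun k : ℤ => 1 / (k:ℝ)^2) := Real.summable_one_div_int_pow.2 (by norm_num)
lemma zz_summable : Summable zz := Summable.of_norm_bounded (int_sq_summable.mul_left 2) zz_bound
lemma zz_le_two (k : ℤ) : |zz k| ≤ 2 := by
  refine (zz_bound k).trans ?_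
  have := int_inv_le k
  have h : 1 / (k:ℝ)^2 = |(k:ℝ)⁻¹|^2 := by rw [sq_abs, inv_pow, one_div]
  rw [h]
  nlinarith [abs_nonneg ((k:ℝ)⁻¹)]
lemma mul_summable {u v : ℤ → ℝ} (C : ℝ) (hu : Summable u) (hv : ∀ k, |v k| ≤ C) : Summable (fun k => u k * v k) := by
  refine Summable.of_norm_bounded (hu.abs.mul_right C) fun k => ?_
  rw [Real.norm_eq_abs, abs_mul]
  exact mul_le_mul_of_nonneg_left (hv k) (abs_nonneg _)
lemma zz2_summable : Summable (fun k => zz k * zz k) := mul_summable 2 zz_summable zz_le_two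
/-- junk inverse square -/
noncomputable def i0 (k : ℤ) : ℝ := ((k:ℝ)^2)⁻¹
noncomputable def dl (k : ℤ) : ℝ := if k = 0 then 1 else 0
lemma ii_eq (k : ℤ) : ii k = i0 k + z2 * dl k := by
  unfold ii i0 dl; split_ifs with h
  · simp [h]
  · simp
lemma i0_summable : Summable i0 := by 
  refine int_sq_summable.congr fun k => ?_
  rw [i0, one_div]
lemma dl_summable : Summable dl := summable_of_ne_finset_zero (s := {0}) (by intro k hk; simp at hk; simp [dl, hk])
lemma i0_le (k : ℤ) : |i0 k| ≤ 1 := by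
  have := int_inv_le k
  have h : i0 k = |(k:ℝ)⁻¹|^2 := by rw [sq_abs, inv_pow, i0]
  rw [h, abs_of_nonneg (by positivity)]
  nlinarith [abs_nonneg ((k:ℝ)⁻¹)]
lemma ii_summable : Summable ii := by
  have : ii = fun k => i0 k + z2 * dl k := funext ii_eq
  rw [this]; exact i0_summable.add (dl_summable.mul_left _)
lemma i02_summable : Summable (fun k => i0 k * i0 k) := mul_summable 1 i0_summable i0_le
lemma ii2_eq (k : ℤ) : ii k * ii k = i0 k * i0 k + z2^2 * dl k := by
  rw [ii_eq]; unfold i0 dl; split_ifs with h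
  · simp [h]; ring
  · simp
lemma ii2_summable : Summable (fun k => ii k * ii k) := by
  have : (fun k => ii k * ii k) = fun k => i0 k * i0 k + z2^2 * dl k := funext ii2_eq
  rw [this]; exact i02_summable.add (dl_summable.mul_left _)
lemma iz_summable : Summable (fun k => ii k * zz k) := mul_summable 2 ii_summable zz_le_two

lemma sh {u : ℤ → ℝ} (hu : Summable u) : Summable (fun k => u (k+1)) :=
  (Equiv.addRight (1:ℤ)).summable_iff.2 hu

lemma S1_rec (n : ℤ) : K zz n - K zz (n+1) = K ii n + K ii (n+1) := by
  have h1 := K_add zz_summable (sh zz_summable) n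
  have h2 := K_add ii_summable ((sh ii_summable).mul_left (-1)) n
  rw [K_smul, K_shift] at h2
  rw [K_shift] at h1
  have : (fun k => zz k + zz (k+1)) = fun k => ii k + -1 * ii (k+1) := by
    funext k; rw [zz_rec]; ring
  rw [this] at h1
  linarith
lemma S2_rec (n : ℤ) : K (fun k => zz k * zz k) n + K (fun k => zz k * zz k) (n+1)
    = 2 * (K (fun k => ii k * zz k) n - K (fun k => ii k * zz k) (n+1))
      - (K (fun k => ii k * ii k) n + K (fun k => ii k * ii k) (n+1)) := by
  have h1 := K_add zz2_summable ((sh zz2_summable).mul_left (-1)) n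
  have h2 := K_add (iz_summable.mul_left 2) ((sh iz_summable).mul_left 2) n
  have h3 := K_add (ii2_summable.mul_left (-1)) ((sh ii2_summable)) n
  have h4 := K_add ((iz_summable.mul_left 2).add ((sh iz_summable).mul_left 2)) ((ii2_summable.mul_left (-1)).add ((sh ii2_summable))) n
  rw [h2, h3] at h4
  rw [K_smul, K_shift (fun k => zz k * zz k)] at h1
  rw [K_smul, K_smul, K_smul, K_shift (fun k => ii k * ii k), K_shift (fun k => ii k * zz k)] at h4
  have : (fun k => zz k * zz k + -1 * (zz (k+1) * zz (k+1))) = fun k => 2 * (ii k * zz k) + 2 * (ii (k+1) * zz (k+1)) + (-1 * (ii k * ii k) + ii (k+1) * ii (k+1)) := by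
    funext k
    have h := zz_rec k
    have h' : zz (k+1) = ii k - ii (k+1) - zz k := by linarith
    rw [h']; ring
  rw [this] at h1
  linarith

/-- odd sums vanish -/
lemma odd_tsum (f : ℤ → ℝ) (h : ∀ k, f (-k) = - f k) : ∑' k, f k = 0 := by
  have := (Equiv.neg ℤ).tsum_eq f
  simp only [Equiv.neg_apply, h, tsum_neg] at this
  linarith

noncomputable def gt (n k : ℤ) : ℝ := sg k * (((k:ℝ) - n)⁻¹ - (k:ℝ)⁻¹)
lemma inv_sub_bound (n k : ℤ) : |((k:ℝ) - n)⁻¹ - (k:ℝ)⁻¹| ≤ |(n:ℝ)| * (1 + |(n:ℝ)|) * (1 / (k:ℝ)^2) + |(n:ℝ)⁻¹| * (dl k + dl (k - n)) := by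
  have hp : ∀ k, 0 ≤ dl k := by intro k; unfold dl; split_ifs <;> norm_num
  rcases eq_or_ne k 0 with rfl | hk
  · have := hp (0 - n)
    simp only [Int.cast_zero, zero_sub, inv_neg, inv_zero, sub_zero, abs_neg]
    have : dl 0 = 1 := by simp [dl]
    rw [this]
    have : 0 ≤ |(n:ℝ)⁻¹| * dl (0 - n) := mul_nonneg (abs_nonneg _) (hp _)
    simp at this ⊢
    linarith
  rcases eq_or_ne k n with rfl | hn
  · have h1 : dl (k - k) = 1 := by simp [dl]
    rw [h1]
    simp only [sub_self, inv_zero, zero_sub, abs_neg]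
    have : 0 ≤ |(k:ℝ)⁻¹| * dl k := mul_nonneg (abs_nonneg _) (hp _)
    have : 0 ≤ |(k:ℝ)| * (1 + |(k:ℝ)|) * (1 / (k:ℝ)^2) := by positivity
    linarith
  · have hk' : (k:ℝ) ≠ 0 := by exact_mod_cast hk
    have hkn : (k:ℝ) - n ≠ 0 := sub_ne_zero.2 (by exact_mod_cast hn)
    have h2 : 0 ≤ |(n:ℝ)⁻¹| * (dl k + dl (k-n)) := mul_nonneg (abs_nonneg _) (add_nonneg (hp _) (hp _))
    have e : ((k:ℝ) - n)⁻¹ - (k:ℝ)⁻¹ = n * (1 + n * ((k:ℝ) - n)⁻¹) * (1 / (k:ℝ)^2) := by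
      field_simp; ring
    rw [e, abs_mul, abs_mul, abs_of_nonneg (show 0 ≤ 1 / (k:ℝ)^2 by positivity)]
    have h3 : |1 + (n:ℝ) * ((k:ℝ) - n)⁻¹| ≤ 1 + |(n:ℝ)| := by
      refine (abs_add_le _ _).trans ?_
      rw [abs_one, abs_mul]
      have := int_inv_le (k - n)
      push_cast at this
      have := mul_le_of_le_one_right (abs_nonneg (n:ℝ)) this
      linarith
    have : |(n:ℝ)| * |1 + (n:ℝ) * ((k:ℝ) - n)⁻¹| * (1 / (k:ℝ)^2) ≤ |(n:ℝ)| * (1 + |(n:ℝ)|) * (1 / (k:ℝ)^2) := by gcongr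
    linarith
lemma gt_summable (n : ℤ) : Summable (gt n) := by
  have hs : Summable (fun k => dl (k - n)) := 
    dl_summable.comp_injective (i := fun k : ℤ => k - n) (fun a b h => by simpa using h)
  refine Summable.of_norm_bounded ((int_sq_summable.mul_left (|(n:ℝ)| * (1 + |(n:ℝ)|))).add ((dl_summable.add hs).mul_left (|(n:ℝ)⁻¹|))) fun k => ?_
  rw [gt, Real.norm_eq_abs, abs_mul, sg_abs, one_mul]
  exact inv_sub_bound n k
lemma gt_one : ∑' k, gt 1 k = 0 := by
  have := (Equiv.subLeft (1:ℤ)).tsum_eq (gt 1)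
  have h : ∀ k, gt 1 (1 - k) = - gt 1 k := by
    intro k
    unfold gt
    rw [show (1:ℤ) - k = -k + 1 by ring, sg_succ, sg_neg]
    push_cast
    rw [show -(k:ℝ) + 1 - 1 = -k by ring, show -(k:ℝ) + 1 = -(k - 1) by ring, inv_neg, inv_neg]
    ring
  simp only [Equiv.subLeft_apply, h, tsum_neg] at this
  linarith
lemma gt_all (n : ℕ) : ∑' k, gt n k = 0 := by
  induction n with
  | zero => simp [gt]
  | succ n ih =>
    have h : ∀ k, gt (n+1) (k + 1) = - gt n k + gt 1 (k+1) := by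
      intro k
      unfold gt
      rw [sg_succ]
      push_cast
      rw [show (k:ℝ) + 1 - (n + 1) = k - n by ring, show (k:ℝ) + 1 - 1 = k by ring]
      ring
    have h1 := (Equiv.addRight (1:ℤ)).tsum_eq (gt (n+1))
    have h2 := (Equiv.addRight (1:ℤ)).tsum_eq (gt 1)
    simp only [Equiv.coe_addRight] at h1 h2
    simp only [h] at h1
    rw [(gt_summable n).neg.tsum_add (sh (gt_summable 1)), tsum_neg, ih, h2, gt_one] at h1
    push_cast
    rw [← h1]; simp
end Hof

namespace Hof
open Finset Filter Topology

lemma P0 (n k : ℤ) (hn : n ≠ 0) : i0 k * ((k:ℝ) - n)⁻¹ = (1/(n:ℝ)^2) * (((k:ℝ) - n)⁻¹ - (k:ℝ)⁻¹) - (1/(n:ℝ)) * i0 k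
    + (1/(n:ℝ)^3) * dl k + (2/(n:ℝ)^3) * dl (k - n) := by
  have hn' : (n:ℝ) ≠ 0 := by exact_mod_cast hn
  rcases eq_or_ne k 0 with rfl | hk
  · have : dl (0 - n) = 0 := by simp [dl, hn]
    rw [this]
    simp [i0, dl]
    field_simp; ring
  rcases eq_or_ne k n with rfl | hkn
  · simp [i0, dl, hk]
    field_simp; ring
  · have hk' : (k:ℝ) ≠ 0 := by exact_mod_cast hk
    have hkn' : (k:ℝ) - n ≠ 0 := sub_ne_zero.2 (by exact_mod_cast hkn)
    have h1 : dl (k - n) = 0 := by simp [dl, sub_ne_zero.2 hkn]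
    have h2 : dl k = 0 := by simp [dl, hk]
    rw [h1, h2, i0]
    field_simp; ring

lemma dl_sum (f : ℤ → ℝ) (n : ℤ) : HasSum (fun k => f k * dl (k - n)) (f n) := by
  have : HasSum (fun k => f k * dl (k - n)) (f n * dl (n - n)) :=
    hasSum_single n fun k hk => by simp [dl, sub_ne_zero.2 hk]
  simpa [dl] using this
lemma sg_mul_summable {u : ℤ → ℝ} (hu : Summable u) : Summable (fun k => sg k * u k) :=
  Summable.of_norm_bounded hu.abs fun k => by rw [Real.norm_eq_abs, abs_mul, sg_abs, one_mul]
lemma K_i0_mul {u : ℤ → ℝ} (hu : Summable u) (h0 : u 0 = 0) (n : ℤ) (hn : n ≠ 0) :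
    K (fun k => i0 k * u k) n = (1/(n:ℝ)^2) * (K u n - K u 0) - (1/(n:ℝ)) * (∑' k, sg k * (u k * i0 k)) + (2/(n:ℝ)^3) * (sg n * u n) := by
  have h1 := (K_summable hu n).hasSum
  have h2 := (K_summable hu 0).hasSum
  have h3 := (sg_mul_summable (mul_summable 1 hu i0_le)).hasSum
  have h4 := dl_sum (fun k => sg k * u k) n
  have h5 := (((h1.sub h2).mul_left (1/(n:ℝ)^2)).sub (h3.mul_left (1/(n:ℝ)))).add (h4.mul_left (2/(n:ℝ)^3))
  refine Eq.trans ?_ h5.tsum_eq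
  unfold K
  refine tsum_congr fun k => ?_
  have hp := P0 n k hn
  have hd : u k * dl k = 0 := by
    unfold dl; split_ifs with h
    · simp [h, h0]
    · simp
  push_cast
  rw [sub_zero]
  linear_combination (sg k * u k) * hp + sg k * (1 / (n:ℝ)^3) * hd

lemma int_to_nat {f : ℤ → ℝ} (hf : Summable f) (h0 : f 0 = 0) : ∑' k, f k = ∑' n : ℕ, (f n + f (-n)) := by
  have := hf.hasSum.nat_add_neg
  rw [h0, add_zero] at this
  exact this.tsum_eq.symm
lemma ep_sg (n : ℕ) (hn : 1 ≤ n) : ep n = -2 * sg n := by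
  rw [sg_nat, ep, if_neg (by omega)]
lemma S1_zero : K zz 0 = -z3 := by
  rw [K, int_to_nat (K_summable zz_summable 0) (by simp [zz_zero]), ← Ee_zero, ← tsum_neg]
  refine tsum_congr fun n => ?_
  rcases Nat.eq_zero_or_pos n with rfl | hn
  · simp [zz_zero, ep_zero]
  · rw [sg_neg, zz_neg, zz_nat, ep_sg n hn]
    have : (n:ℝ) ≠ 0 := by positivity
    push_cast
    rw [sub_zero, sub_zero, inv_neg]
    field_simp
    ring
lemma A1 : ∑' k, sg k * i0 k = -z2 := by
  rw [int_to_nat (sg_mul_summable i0_summable) (by simp [i0]), ← eta_one, coeff_eta_succ 0, ← tsum_neg]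
  refine tsum_congr fun n => ?_
  rcases Nat.eq_zero_or_pos n with rfl | hn
  · simp [i0, ep_zero]
  · rw [sg_neg, ep_sg n hn]
    simp [i0]; ring
lemma A2 : ∑' k, sg k * (i0 k * i0 k) = - PowerSeries.coeff 2 eta := by
  rw [int_to_nat (sg_mul_summable i02_summable) (by simp [i0]), coeff_eta_succ 1, ← tsum_neg]
  refine tsum_congr fun n => ?_
  rcases Nat.eq_zero_or_pos n with rfl | hn
  · simp [i0, ep_zero]
  · rw [sg_neg, ep_sg n hn]
    simp [i0]; ring

lemma J_eq (n : ℤ) (hn : n ≠ 0) : K (fun k => ii k * zz k) n = (1/(n:ℝ)^2) * (K zz n + z3) + (2/(n:ℝ)^3) * (sg n * zz n) := by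
  have h := K_i0_mul zz_summable zz_zero n hn
  have e : (fun k => ii k * zz k) = fun k => i0 k * zz k := by
    funext k
    rcases eq_or_ne k 0 with rfl | hk
    · simp [zz_zero]
    · simp [ii, i0, hk]
  rw [e, h, S1_zero, odd_tsum (fun k => sg k * (zz k * i0 k)) (fun k => by rw [sg_neg, zz_neg]; simp [i0])]
  ring
lemma K_dl (n : ℤ) : K dl n = -(1/(n:ℝ)) := by
  have := dl_sum (fun k => sg k * ((k:ℝ) - n)⁻¹) 0
  have h := this.tsum_eq
  simp only [sub_zero] at h
  unfold K
  refine Eq.trans (tsum_congr fun k => by ring) (h.trans ?_)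
  simp [sg, inv_neg]
lemma K_i0 (n : ℕ) (hn : 1 ≤ n) : K i0 n = (1 + 2 * sg n) / (n:ℝ)^3 + z2 / n := by
  have hn' : (n:ℝ) ≠ 0 := by positivity
  have h1 := (gt_summable n).hasSum
  rw [gt_all] at h1
  have h3 := (sg_mul_summable i0_summable).hasSum
  rw [A1] at h3
  have h4 := dl_sum sg n
  have h5 := dl_sum sg 0
  have h6 := (((h1.mul_left (1/(n:ℝ)^2)).sub (h3.mul_left (1/(n:ℝ)))).add (h5.mul_left (1/(n:ℝ)^3))).add (h4.mul_left (2/(n:ℝ)^3))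
  have h7 : K i0 n = _ := Eq.trans (by
    unfold K
    refine tsum_congr fun k => ?_
    have hp := P0 n k (by omega)
    rw [sub_zero, gt]
    push_cast at hp ⊢
    linear_combination (sg k) * hp) h6.tsum_eq
  rw [h7]
  have : sg 0 = 1 := by simp [sg]
  rw [this]
  field_simp; ring
lemma rho0 (n : ℕ) (hn : 1 ≤ n) : K ii n = (1 + 2 * sg n) / (n:ℝ)^3 := by
  have e : ii = fun k => i0 k + z2 * dl k := funext ii_eq
  rw [e, K_add i0_summable (dl_summable.mul_left _), K_smul, K_dl, K_i0 n hn]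
  push_cast; ring
lemma kap0 (n : ℕ) (hn : 1 ≤ n) : K (fun k => ii k * ii k) n = (1 + 4 * sg n) / (n:ℝ)^5 + z2 / (n:ℝ)^3 + (PowerSeries.coeff 2 eta - z2^2) / n := by
  have hn' : (n:ℝ) ≠ 0 := by positivity
  have e : (fun k => ii k * ii k) = fun k => i0 k * i0 k + z2^2 * dl k := funext ii2_eq
  have hodd : K i0 0 = 0 := by
    unfold K
    refine odd_tsum _ fun k => ?_
    rw [sg_neg]
    simp [i0]
  rw [e, K_add i02_summable (dl_summable.mul_left _), K_smul, K_dl,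
    K_i0_mul i0_summable (by simp [i0]) n (by omega), A2, hodd, K_i0 n hn]
  simp only [i0]
  push_cast
  field_simp; ring

noncomputable def M (n : ℕ) : ℝ := K (fun k => zz k * zz k) n - 2 * zz n * K zz n
noncomputable def Tn (n : ℕ) : ℝ := 2 * z3 * zz n - 2 * (n * (z3 * Z n - G n)) + 1 / (n:ℝ)^5 - z2 / (n:ℝ)^3 + (z2^2 - PowerSeries.coeff 2 eta) / n

lemma M_rec (n : ℕ) (hn : 1 ≤ n) : M n + M (n+1) = Tn n + Tn (n+1) := by
  have hn' : (n:ℝ) ≠ 0 := by positivity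
  have hn1 : (n:ℝ) + 1 ≠ 0 := by positivity
  have h1 := S1_rec n
  have h2 := S2_rec n
  have j1 := J_eq n (by omega)
  have j2 := J_eq (n+1) (by omega)
  have r1 := rho0 n hn
  have r2 := rho0 (n+1) (by omega)
  have k1 := kap0 n hn
  have k2 := kap0 (n+1) (by omega)
  have y := Y_rec n hn
  have z := Z_rec n hn
  unfold M Tn
  have z1 := zz_nat n
  have z1' := zz_nat (n+1)
  push_cast at *
  rw [sg_succ] at r2 k2 j2
  rw [z1] at j1 ⊢
  rw [z1'] at j2 ⊢
  rw [r1, r2] at h1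
  rw [k1, k2, j1, j2] at h2
  generalize K (fun k => zz k * zz k) n = S2 at *
  generalize K (fun k => zz k * zz k) (n+1) = S2' at *
  generalize K zz (n:ℤ) = S1 at *
  generalize K zz ((n:ℤ)+1) = S1' at *
  generalize Z n = a at *
  generalize Z (n+1) = b at *
  generalize G n = g at *
  generalize G (n+1) = g' at *
  generalize sg n = σ at *
  generalize PowerSeries.coeff 2 eta = η at *
  have e1 : S1' = S1 - ((1 + 2 * σ) / (n:ℝ)^3 + (1 + 2 * -σ) / ((n:ℝ)+1)^3) := by linarith
  have e2 : S2' = 2 * (1 / (n:ℝ) ^ 2 * (S1 + z3) + 2 / (n:ℝ) ^ 3 * (σ * (n * a)) - (1 / ((n:ℝ) + 1) ^ 2 * (S1' + z3) + 2 / ((n:ℝ) + 1) ^ 3 * (-σ * ((n + 1) * b)))) -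
      ((1 + 4 * σ) / (n:ℝ) ^ 5 + z2 / (n:ℝ) ^ 3 + (η - z2 ^ 2) / n + ((1 + 4 * -σ) / ((n:ℝ) + 1) ^ 5 + z2 / ((n:ℝ) + 1) ^ 3 + (η - z2 ^ 2) / (n + 1))) - S2 := by linarith
  have e3 : a = (1 / (n:ℝ)^2 - 1 / ((n:ℝ)+1)^2 - (n+1) * b) / n := by
    rw [eq_div_iff hn']; linarith
  have e4 : g = z3 * a - (a / (n:ℝ)^2 - b / ((n:ℝ)+1)^2 - (n+1) * (z3 * b - g')) / n := by
    field_simp at y ⊢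
    linear_combination -y
  rw [e2, e1, e4, e3]
  field_simp
  ring
end Hof

namespace Hof
open Finset Filter Topology

lemma inv_pow_tendsto (p : ℕ) (hp : p ≠ 0) (a : ℝ) : Tendsto (fun n : ℕ => a / (n:ℝ)^p) atTop (𝓝 0) :=
  Tendsto.div_atTop tendsto_const_nhds ((tendsto_pow_atTop hp).comp tendsto_natCast_atTop_atTop)
lemma zzn_tendsto : Tendsto (fun n : ℕ => zz n) atTop (𝓝 0) := by
  refine tendsto_of_tendsto_of_tendsto_of_le_of_le' tendsto_const_nhds (inv_pow_tendsto 3 (by norm_num) 2) ?_ ?_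
  · exact Eventually.of_forall fun n => by rw [zz_nat]; exact mul_nonneg (by positivity) (Z_nonneg n)
  · filter_upwards [eventually_ge_atTop 1] with n hn
    rw [zz_nat]; exact nZ_le n hn
lemma Tn_tendsto : Tendsto Tn atTop (𝓝 0) := by
  have h1 := zzn_tendsto.const_mul (2 * z3)
  have h2 : Tendsto (fun n : ℕ => (n:ℝ) * (z3 * Z n - G n)) atTop (𝓝 0) := by
    have h := zzn_tendsto.const_mul z3
    rw [mul_zero] at h
    refine tendsto_of_tendsto_of_tendsto_of_le_of_le' tendsto_const_nhds h ?_ ?_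
    · exact Eventually.of_forall fun n => mul_nonneg (by positivity) (sub_nonneg.2 (G_le n))
    · refine Eventually.of_forall fun n => ?_
      simp only [zz_nat]
      have := mul_nonneg (Nat.cast_nonneg (α := ℝ) n) (G_nonneg n)
      linarith
  have h3 := inv_pow_tendsto 5 (by norm_num) 1
  have h4 := inv_pow_tendsto 3 (by norm_num) z2
  have h5 := inv_pow_tendsto 1 (by norm_num) (z2^2 - PowerSeries.coeff 2 eta)
  have := (((h1.sub (h2.const_mul 2)).add h3).sub h4).add h5
  simp only [mul_zero, sub_zero, add_zero, pow_one] at this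
  exact this
lemma M_tendsto : Tendsto M atTop (𝓝 0) := by
  have h1 := K_tendsto zz2_summable
  have h2 := (zzn_tendsto.const_mul 2).mul (K_tendsto zz_summable)
  have := h1.sub h2
  simp only [mul_zero, sub_zero] at this
  exact this
lemma M_eq (n : ℕ) (hn : 1 ≤ n) : M n = Tn n := by
  have h : Tendsto (fun k : ℕ => |M (n + k) - Tn (n + k)|) atTop (𝓝 0) := by
    have h0 := ((M_tendsto.sub Tn_tendsto).abs).comp (tendsto_add_atTop_nat n)
    simpa [Function.comp_def, add_comm] using h0
  have hc : ∀ k : ℕ, |M (n + k) - Tn (n + k)| = |M n - Tn n| := by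
    intro k
    induction k with
    | zero => rfl
    | succ k ih =>
      rw [← ih, ← abs_neg]
      congr 1
      have := M_rec (n + k) (by omega)
      rw [← add_assoc]; linarith
  simp only [hc] at h
  have := tendsto_nhds_unique h tendsto_const_nhds
  exact (sub_eq_zero.1 (abs_eq_zero.1 this.symm))
noncomputable def gam (n : ℕ) : ℝ := ep n * Z n ^ 2 - Z n ^ 2 +
  ∑' m : ℕ, ep m * ((2 * Z n * Z m * (m:ℝ)^2 - Z m ^2 * (m:ℝ)^2 - Z n ^2 * (n:ℝ)^2) / ((m:ℝ)^2 - (n:ℝ)^2))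

lemma gam_M (n : ℕ) (hn : 1 ≤ n) : n * gam n = M n := by
  have hn' : (n:ℝ) ≠ 0 := by positivity
  have h1 := (K_summable zz2_summable n).hasSum
  have h2 := ((K_summable zz_summable n).hasSum).mul_left (2 * zz n)
  have h3 := (gt_summable n).hasSum
  rw [gt_all] at h3
  have h4 := (h1.sub h2).add (h3.mul_left (zz n ^ 2))
  have h5 := h4.nat_add_neg
  have h6 := hasSum_ite_eq n (ep n * n * Z n ^2)
  have h7 := hasSum_ite_eq 0 (-(2 * n * Z n ^2))
  have h8 := (h5.sub h6).sub h7
  have h9 := h8.tsum_eq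
  unfold gam
  rw [mul_add, ← tsum_mul_left]
  rw [show M n = _ from rfl, M]
  have e : ∀ m : ℕ, (n:ℝ) * (ep m * ((2 * Z n * Z m * (m:ℝ)^2 - Z m ^2 * (m:ℝ)^2 - Z n ^2 * (n:ℝ)^2) / ((m:ℝ)^2 - (n:ℝ)^2))) = _ := fun m => by
    have : _ = sg m * (zz m * zz m) * (((m:ℤ):ℝ) - ((n:ℤ):ℝ))⁻¹ - 2 * zz n * (sg m * zz m * (((m:ℤ):ℝ) - ((n:ℤ):ℝ))⁻¹) + zz n ^ 2 * gt n m +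
      (sg (-m) * (zz (-m) * zz (-m)) * (((-(m:ℤ) : ℤ):ℝ) - ((n:ℤ):ℝ))⁻¹ - 2 * zz n * (sg (-m) * zz (-m) * (((-(m:ℤ) : ℤ):ℝ) - ((n:ℤ):ℝ))⁻¹) + zz n ^ 2 * gt n (-m)) - (if m = n then ep n * n * Z n ^2 else 0) - (if m = 0 then -(2 * n * Z n ^2) else 0) := rfl
    refine Eq.trans ?_ this.symm
    simp only [gt, sg_neg, zz_neg, zz_nat]
    push_cast
    rcases Nat.eq_zero_or_pos m with rfl | hm
    · rw [if_neg (by omega), if_pos rfl, ep_zero]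
      simp [sg]
      field_simp; ring
    have hm' : (m:ℝ) ≠ 0 := by positivity
    have hmn' : -(m:ℝ) - n ≠ 0 := by
      have : 0 < (m:ℝ) + n := by positivity
      intro h; linarith
    have hmn'' : (m:ℝ) + n ≠ 0 := by positivity
    rw [if_neg (by omega : m ≠ 0), ep_sg m hm]
    rcases eq_or_ne m n with rfl | hmn
    · rw [if_pos rfl, ep_sg m hm, sub_self, sub_self, div_zero, inv_zero, inv_neg,
        show (-(m:ℝ) - m)⁻¹ = -(1/(2*m)) by field_simp; ring]
      field_simp; ring
    · rw [if_neg hmn]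
      have h : (m:ℝ) - n ≠ 0 := sub_ne_zero.2 (by exact_mod_cast hmn)
      rw [show (m:ℝ)^2 - (n:ℝ)^2 = (m-n)*(m+n) by ring, show -(m:ℝ) - n = -(m+n) by ring, inv_neg, inv_neg]
      field_simp; ring
  rw [tsum_congr e, h9]
  simp [gt, sg, K, zz_zero, zz_nat]
  field_simp
  ring
lemma gam_eq (n : ℕ) (hn : 1 ≤ n) : gam n = 2 * G n + (((n:ℝ)^2)⁻¹)^3 - z2 * (((n:ℝ)^2)⁻¹)^2 + (z2^2 - PowerSeries.coeff 2 eta) * ((n:ℝ)^2)⁻¹ := by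
  have hn' : (n:ℝ) ≠ 0 := by positivity
  have h := gam_M n hn
  rw [M_eq n hn, Tn, zz_nat] at h
  refine mul_left_cancel₀ hn' (h.trans ?_)
  field_simp; ring
end Hof

namespace Hof
open Finset Filter Topology
open PowerSeries

noncomputable def hh (j : ℕ) (x y : ℝ) : ℝ := ∑ p ∈ antidiagonal j, x ^ p.1 * y ^ p.2
lemma hh_zero (x y : ℝ) : hh 0 x y = 1 := by simp [hh]
lemma hh_succ (j : ℕ) (x y : ℝ) : hh (j+1) x y = x * hh j x y + y ^ (j+1) := by
  unfold hh
  rw [Finset.Nat.sum_antidiagonal_succ, mul_sum, add_comm]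
  simp only [pow_zero, one_mul]
  congr 1
  exact sum_congr rfl fun p _ => by ring
lemma hh_mul (j : ℕ) (x y : ℝ) : (x - y) * hh j x y = x ^ (j+1) - y ^ (j+1) := by
  induction j with
  | zero => rw [hh_zero]; ring
  | succ j ih => rw [hh_succ]; linear_combination x * ih

lemma D_mul (a b : ℕ → ℝ) (K L : ℝ) (ha : ∀ n, 1 ≤ n → |a n| ≤ K / (n:ℝ)^2) (hb : ∀ n, 1 ≤ n → |b n| ≤ L / (n:ℝ)^2) (j : ℕ) :
    HasSum (fun p : ℕ × ℕ => ep p.1 * ep p.2 * (a p.1 * b p.2 * hh j ((p.1:ℝ)^2)⁻¹ ((p.2:ℝ)^2)⁻¹)) (coeff j (D a * D b)) := by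
  rw [coeff_mul]
  simp only [D, coeff_mk]
  have : ∀ q ∈ antidiagonal j, HasSum (fun p : ℕ × ℕ => (ep p.1 * a p.1 * (((p.1:ℝ)^2)⁻¹)^q.1) * (ep p.2 * b p.2 * (((p.2:ℝ)^2)⁻¹)^q.2))
      ((∑' n, ep n * a n * (((n:ℝ)^2)⁻¹)^q.1) * (∑' n, ep n * b n * (((n:ℝ)^2)⁻¹)^q.2)) := by
    intro q _
    have h1 := D_summable a K ha q.1
    have h2 := D_summable b L hb q.2
    have h3 := summable_mul_of_summable_norm h1.norm h2.norm
    exact h1.hasSum.mul h2.hasSum h3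
  refine (hasSum_sum this).congr_fun fun p => ?_
  unfold hh
  rw [mul_sum, mul_sum]
  exact sum_congr rfl fun q _ => by ring

lemma iv_bound (n : ℕ) (hn : 1 ≤ n) : |iv n| ≤ 1 / (n:ℝ)^2 := by
  unfold iv
  rw [abs_of_nonneg (by positivity)]; simp
lemma ZZ_bound (n : ℕ) (hn : 1 ≤ n) : |Z n * Z n| ≤ 4 / (n:ℝ)^2 := by
  have h := Z_bound n hn
  have h2 := two_le_two n hn
  rw [abs_mul]
  calc |Z n| * |Z n| ≤ (2 / (n:ℝ)^2) * 2 := by gcongr; exact h.trans h2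
    _ = _ := by ring
lemma etaQ (j : ℕ) : HasSum (fun p : ℕ × ℕ => ep p.1 * ep p.2 * (Z p.2 ^ 2 * (hh j ((p.1:ℝ)^2)⁻¹ ((p.2:ℝ)^2)⁻¹ - (((p.2:ℝ)^2)⁻¹)^j)))
    (coeff j (X * (D iv * Qq))) := by
  cases j with
  | zero => simp [hh_zero]
  | succ j =>
    rw [mul_comm X, coeff_succ_mul_X]
    refine (D_mul iv (fun n => Z n * Z n) 1 4 iv_bound ZZ_bound j).congr_fun fun p => ?_
    rw [hh_succ, iv]; ring

noncomputable def Af (n m : ℕ) : ℝ := (Z n * Z m * (m:ℝ)^2 - Z m ^ 2 * (m:ℝ)^2) / ((m:ℝ)^2 - (n:ℝ)^2)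
noncomputable def Bf (n m : ℕ) : ℝ := (- (Z n * Z m * (n:ℝ)^2) + Z m ^ 2 * (m:ℝ)^2) / ((m:ℝ)^2 - (n:ℝ)^2)

lemma pair (j n m : ℕ) (hn : 1 ≤ n) (hm : 1 ≤ m) :
    Z n * Z m * hh j ((n:ℝ)^2)⁻¹ ((m:ℝ)^2)⁻¹ - Z m ^ 2 * (hh j ((n:ℝ)^2)⁻¹ ((m:ℝ)^2)⁻¹ - (((m:ℝ)^2)⁻¹)^j)
    = Af n m * (((n:ℝ)^2)⁻¹)^j + Bf n m * (((m:ℝ)^2)⁻¹)^j + if m = n then Z n ^ 2 * (((n:ℝ)^2)⁻¹)^j else 0 := by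
  rcases eq_or_ne m n with rfl | hmn
  · rw [if_pos rfl, Af, Bf]; simp; ring
  · rw [if_neg hmn, add_zero, Af, Bf]
    have hn' : (n:ℝ) ≠ 0 := by positivity
    have hm' : (m:ℝ) ≠ 0 := by positivity
    have hd : (m:ℝ)^2 - (n:ℝ)^2 ≠ 0 := by
      rw [show (m:ℝ)^2 - (n:ℝ)^2 = (m-n)*(m+n) by ring]
      exact mul_ne_zero (sub_ne_zero.2 (by exact_mod_cast hmn)) (by positivity)
    have h := hh_mul j ((n:ℝ)^2)⁻¹ ((m:ℝ)^2)⁻¹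
    have h2 : hh j ((n:ℝ)^2)⁻¹ ((m:ℝ)^2)⁻¹ = ((m:ℝ)^2 * (((n:ℝ)^2)⁻¹)^j - (n:ℝ)^2 * (((m:ℝ)^2)⁻¹)^j) / ((m:ℝ)^2 - (n:ℝ)^2) := by
      rw [eq_div_iff hd]
      have hx : ((n:ℝ)^2)⁻¹ * (n:ℝ)^2 = 1 := inv_mul_cancel₀ (by positivity)
      have hy : ((m:ℝ)^2)⁻¹ * (m:ℝ)^2 = 1 := inv_mul_cancel₀ (by positivity)
      generalize ((n:ℝ)^2)⁻¹ = x at *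
      generalize ((m:ℝ)^2)⁻¹ = y at *
      linear_combination (n:ℝ)^2 * (m:ℝ)^2 * h + (m:ℝ)^2 * (x^j - hh j x y) * hx + (n:ℝ)^2 * (hh j x y - y^j) * hy
    rw [h2]
    field_simp
    ring

lemma dist_bd (n m : ℕ) (hm : 1 ≤ m) (hmn : m ≠ n) :
    1 ≤ |(m:ℝ)^2 - (n:ℝ)^2| ∧ (n:ℝ)^2 ≤ 2 * (m:ℝ)^2 * |(m:ℝ)^2 - (n:ℝ)^2| := by
  have h1 : 1 ≤ |(m:ℝ)^2 - (n:ℝ)^2| := by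
    have : (1:ℤ) ≤ |(m:ℤ)^2 - (n:ℤ)^2| := by
      refine Int.one_le_abs (sub_ne_zero.2 fun h => hmn ?_)
      have h' : m^2 = n^2 := by exact_mod_cast h
      exact Nat.pow_left_injective (by norm_num : 2 ≠ 0) h'
    exact_mod_cast this
  refine ⟨h1, ?_⟩
  have hm' : (1:ℝ) ≤ (m:ℝ)^2 := by
    have : (1:ℝ) ≤ m := by exact_mod_cast hm
    nlinarith
  have := neg_abs_le ((m:ℝ)^2 - (n:ℝ)^2)
  nlinarith

lemma core_bd (n m : ℕ) (hn : 1 ≤ n) (hm : 1 ≤ m) (hmn : m ≠ n) (u : ℝ) (v : ℝ) 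
    (hu : |u| ≤ 4 / ((n:ℝ)^2 * (m:ℝ)^2)) (hv : |v| ≤ 4 / ((m:ℝ)^2)^3) :
    |(u + v) / ((m:ℝ)^2 - (n:ℝ)^2)| ≤ 12 / ((n:ℝ)^2 * (m:ℝ)^2) := by
  obtain ⟨h1, h2⟩ := dist_bd n m hm hmn
  have hn' : (0:ℝ) < (n:ℝ)^2 := by positivity
  have hm' : (1:ℝ) ≤ (m:ℝ)^2 := by
    have : (1:ℝ) ≤ m := by exact_mod_cast hm
    nlinarith
  rw [abs_div]
  generalize |(m:ℝ)^2 - (n:ℝ)^2| = d at *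
  generalize (n:ℝ)^2 = a at *
  generalize (m:ℝ)^2 = b at *
  have hb : 0 < b := by linarith
  have hd : 0 < d := by linarith
  have e1 : 4 / (a * b) ≤ 4 / (a * b) * d := le_mul_of_one_le_right (by positivity) h1
  have e2 : 4 / b^3 ≤ 8 / (a * b) * d := by
    rw [div_mul_eq_mul_div, div_le_div_iff₀ (by positivity) (by positivity)]
    have : a * b ≤ 2 * b * d * b := by gcongr
    have h3 : 2 * b * d * b ≤ 2 * b * d * b * b := le_mul_of_one_le_right (by positivity) hm'
    nlinarith
  rw [div_le_iff₀ hd]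
  calc |u + v| ≤ |u| + |v| := abs_add_le _ _
    _ ≤ 4 / (a * b) * d + 8 / (a * b) * d := by linarith
    _ = _ := by ring

lemma Z4 (n : ℕ) (hn : 1 ≤ n) : |Z n| ≤ 2 / ((n:ℝ)^2)^2 := by
  rw [abs_of_nonneg (Z_nonneg n)]
  refine (Z_le n hn).trans (le_of_eq ?_)
  ring
lemma sq1 (n : ℕ) (hn : 1 ≤ n) : (1:ℝ) ≤ (n:ℝ)^2 := by
  have : (1:ℝ) ≤ n := by exact_mod_cast hn
  nlinarith
lemma ab_bd (a b x y : ℝ) (ha : 1 ≤ a) (hb : 1 ≤ b) (hx : |x| ≤ 2 / a^2) (hy : |y| ≤ 2 / b^2) :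
    |x * y * b| ≤ 4 / (a * b) ∧ |x * y * a| ≤ 4 / (a * b) ∧ |y^2 * b| ≤ 4 / b^3 := by
  have ha0 : 0 < a := by linarith
  have hb0 : 0 < b := by linarith
  have hxy : |x| * |y| ≤ 2 / a^2 * (2 / b^2) := by gcongr
  have hyy : |y| * |y| ≤ 2 / b^2 * (2 / b^2) := by gcongr
  rw [abs_mul, abs_mul, abs_mul, abs_mul, abs_mul, abs_of_pos ha0, abs_of_pos hb0, pow_two y, abs_mul]
  refine ⟨?_, ?_, ?_⟩
  · calc |x| * |y| * b ≤ 2 / a^2 * (2 / b^2) * b := by gcongr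
      _ = 4 / (a * b) / a := by field_simp; ring
      _ ≤ _ := div_le_self (by positivity) ha
  · calc |x| * |y| * a ≤ 2 / a^2 * (2 / b^2) * a := by gcongr
      _ = 4 / (a * b) / b := by field_simp; ring
      _ ≤ _ := div_le_self (by positivity) hb
  · calc |y| * |y| * b ≤ 2 / b^2 * (2 / b^2) * b := by gcongr
      _ = _ := by field_simp; ring
lemma Af_bd (n m : ℕ) (hn : 1 ≤ n) (hm : 1 ≤ m) : |Af n m| ≤ 12 / ((n:ℝ)^2 * (m:ℝ)^2) := by
  rcases eq_or_ne m n with rfl | hmn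
  · rw [Af, sub_self, div_zero, abs_zero]; positivity
  obtain ⟨h1, h2, h3⟩ := ab_bd _ _ _ _ (sq1 n hn) (sq1 m hm) (Z4 n hn) (Z4 m hm)
  rw [Af, sub_eq_add_neg]
  exact core_bd n m hn hm hmn _ _ h1 (by rw [abs_neg]; exact h3)
lemma Bf_bd (n m : ℕ) (hn : 1 ≤ n) (hm : 1 ≤ m) : |Bf n m| ≤ 12 / ((n:ℝ)^2 * (m:ℝ)^2) := by
  rcases eq_or_ne m n with rfl | hmn
  · rw [Bf, sub_self, div_zero, abs_zero]; positivity
  obtain ⟨h1, h2, h3⟩ := ab_bd _ _ _ _ (sq1 n hn) (sq1 m hm) (Z4 n hn) (Z4 m hm)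
  rw [Bf]
  exact core_bd n m hn hm hmn _ _ (by rw [abs_neg]; exact h2) h3

lemma dbl_summable (F : ℕ → ℕ → ℝ) (x : ℕ → ℕ → ℝ) (hx : ∀ n m, |x n m| ≤ 1)
    (hF : ∀ n m, 1 ≤ n → 1 ≤ m → |F n m| ≤ 12 / ((n:ℝ)^2 * (m:ℝ)^2)) :
    Summable (fun p : ℕ × ℕ => ep p.1 * ep p.2 * (F p.1 p.2 * x p.1 p.2)) := by
  have h0 : Summable (fun n : ℕ => 1 / (n:ℝ)^2) := Real.summable_one_div_nat_pow.2 (by norm_num : 1 < 2)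
  have h1 := (h0.mul_of_nonneg h0 (fun n => by positivity) (fun n => by positivity)).mul_left 48
  refine Summable.of_norm_bounded h1 fun p => ?_
  obtain ⟨n, m⟩ := p
  simp only [Real.norm_eq_abs]
  rcases Nat.eq_zero_or_pos n with rfl | hn
  · simp [ep_zero]
  rcases Nat.eq_zero_or_pos m with rfl | hm
  · simp [ep_zero]
  rw [abs_mul, abs_mul, abs_mul]
  calc |ep n| * |ep m| * (|F n m| * |x n m|) ≤ 2 * 2 * (12 / ((n:ℝ)^2 * (m:ℝ)^2) * 1) := by
        gcongr
        · exact ep_abs n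
        · exact ep_abs m
        · exact hF n m hn hm
        · exact hx n m
    _ = _ := by field_simp; norm_num

lemma xabs (n j : ℕ) : |(((n:ℝ)^2)⁻¹)^j| ≤ 1 := by
  rw [abs_of_nonneg (by positivity)]; exact inv_pow_le n j

lemma main_coeff (j : ℕ) : HasSum (fun n => ep n * gam n * (((n:ℝ)^2)⁻¹)^j) (coeff j (Ee * Ee - eta * Qq)) := by
  have hE := D_mul Z Z 2 2 Z_bound Z_bound j
  have hQ := etaQ j
  have hA := dbl_summable Af (fun n m => (((n:ℝ)^2)⁻¹)^j) (fun n m => xabs n j) Af_bd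
  have hB := dbl_summable Bf (fun n m => (((m:ℝ)^2)⁻¹)^j) (fun n m => xabs m j) Bf_bd
  have hB' := (Equiv.prodComm ℕ ℕ).hasSum_iff.2 hB.hasSum
  have hd := (hE.sub hQ).sub (hA.hasSum.add hB.hasSum)
  have hd' : HasSum (fun p : ℕ × ℕ => if p.2 = p.1 then ep p.1 * ep p.1 * (Z p.1 ^ 2 * (((p.1:ℝ)^2)⁻¹)^j) else 0) _ := hd.congr_fun fun p => by
    obtain ⟨n, m⟩ := p
    simp only
    rcases Nat.eq_zero_or_pos n with rfl | hn
    · simp [ep_zero]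
    rcases Nat.eq_zero_or_pos m with rfl | hm
    · have : (0:ℕ) ≠ n := by omega
      simp [ep_zero, this]
    have h := pair j n m hn hm
    split_ifs at h ⊢ with hmn
    · subst hmn
      linear_combination (-(ep m * ep m)) * h
    · linear_combination (-(ep n * ep m)) * h
  have hdd := hd'.prod_fiberwise (g := fun n => ep n * ep n * (Z n ^ 2 * (((n:ℝ)^2)⁻¹)^j)) (fun n => hasSum_ite_eq n _)
  have hF := (hA.hasSum.add hB')
  have hFF := hF.prod_fiberwise (fun n => (hF.summable.prod_factor n).hasSum)
  have hq : HasSum (fun n => ep n * (Z n * Z n) * (((n:ℝ)^2)⁻¹)^j) (coeff j Qq) := by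
    have := (D_summable (fun n => Z n * Z n) 4 ZZ_bound j).hasSum
    simpa [Qq, D] using this
  have hT := (hdd.add hFF).sub hq
  have hval : coeff j (Ee * Ee - eta * Qq) = coeff j (Ee * Ee) - coeff j (X * (D iv * Qq)) - coeff j Qq := by
    rw [eta, add_mul, one_mul, map_sub, map_add, mul_assoc]; ring
  rw [hval]
  have hT' := hT.congr_fun (g := fun n => ep n * gam n * (((n:ℝ)^2)⁻¹)^j) (fun n => by
    simp only [Function.comp, Equiv.prodComm_apply, Prod.swap]
    rw [gam]
    have : ∀ m : ℕ, ep n * ep m * (Af n m * (((n:ℝ)^2)⁻¹)^j) + ep m * ep n * (Bf m n * (((n:ℝ)^2)⁻¹)^j)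
      = (ep n * (((n:ℝ)^2)⁻¹)^j) * (ep m * ((2 * Z n * Z m * (m:ℝ)^2 - Z m ^2 * (m:ℝ)^2 - Z n ^2 * (n:ℝ)^2) / ((m:ℝ)^2 - (n:ℝ)^2))) := by
      intro m
      rw [Af, Bf, show (n:ℝ)^2 - (m:ℝ)^2 = -((m:ℝ)^2 - (n:ℝ)^2) by ring, div_neg, div_eq_mul_inv, div_eq_mul_inv, div_eq_mul_inv]
      ring
    rw [tsum_congr this, tsum_mul_left]
    ring)
  refine Eq.mp ?_ hT'
  congr 1
  simp only [Ee]; ring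

lemma H_coeff (j : ℕ) : coeff j (Ee * Ee - eta * Qq) = 2 * coeff j Ph + coeff (j+3) eta - z2 * coeff (j+2) eta + (z2^2 - coeff 2 eta) * coeff (j+1) eta := by
  rw [← (main_coeff j).tsum_eq, coeff_eta_succ j, coeff_eta_succ (j+1), coeff_eta_succ (j+2)]
  have h (i : ℕ) : Summable (fun n : ℕ => ep n * (((n:ℝ)^2)⁻¹)^(i+1)) :=
    (D_summable iv 1 iv_bound i).congr fun n => by rw [iv]; ring
  have hG : Summable (fun n => ep n * G n * (((n:ℝ)^2)⁻¹)^j) := by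
    refine D_summable G (z3 * 2) (fun n hn => ?_) j
    rw [abs_of_nonneg (G_nonneg n)]
    refine (G_le n).trans ?_
    rw [mul_div_assoc]
    exact mul_le_mul_of_nonneg_left ((le_abs_self _).trans (Z_bound n hn)) z3_nonneg
  have hh := (((hG.hasSum.mul_left 2).add (h (j+2)).hasSum).sub ((h (j+1)).hasSum.mul_left z2)).add ((h j).hasSum.mul_left (z2^2 - coeff 2 eta))
  simp only [Ph, D, coeff_mk]
  rw [← hh.tsum_eq]
  refine tsum_congr fun n => ?_
  rcases Nat.eq_zero_or_pos n with rfl | hn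
  · simp [ep_zero]
  · rw [gam_eq n hn]; ring

lemma key : X ^ 3 * (Ee * Ee - eta * Qq - C 2 * Ph) = eta * (1 - C z2 * X + C (z2^2 - coeff 2 eta) * X ^ 2) - 1 := by
  have e0 : coeff 0 eta = 1 := by rw [coeff_zero_eq_constantCoeff_apply, eta_cc]
  rw [show eta * (1 - C z2 * X + C (z2^2 - coeff 2 eta) * X ^ 2) - 1 = eta - C z2 * (eta * X) + C (z2^2 - coeff 2 eta) * (eta * X ^ 2) - 1 by ring]
  generalize hw' : z2^2 - coeff 2 eta = w
  ext j
  simp only [map_sub, map_add, coeff_C_mul]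
  rcases j with _ | _ | _ | j
  · simp [coeff_X_pow_mul', coeff_mul_X_pow', e0, coeff_one, eta_cc]
  · have : coeff 1 (eta * X) = coeff 0 eta := coeff_succ_mul_X 0 eta
    rw [zero_add, this]
    simp [coeff_X_pow_mul', coeff_mul_X_pow', e0, coeff_one, eta_one, eta_cc]
  · have : coeff 2 (eta * X) = coeff 1 eta := coeff_succ_mul_X 1 eta
    rw [show 0 + 1 + 1 = 2 by rfl, this]
    simp [coeff_X_pow_mul', coeff_mul_X_pow', e0, coeff_one, eta_one, eta_cc]
    linear_combination hw'
  · have h1 : coeff (j+1+1+1) (eta * X) = coeff (j+2) eta := coeff_succ_mul_X _ eta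
    have h2 : coeff (j+1+1+1) (eta * X^2) = coeff (j+1) eta := coeff_mul_X_pow eta 2 (j+1)
    have h3 : coeff (j+1+1+1) (X^3 * (Ee * Ee - eta * Qq - C 2 * Ph)) = coeff j (Ee * Ee - eta * Qq - C 2 * Ph) := coeff_X_pow_mul _ 3 j
    rw [h1, h2, h3, map_sub, H_coeff, coeff_C_mul, coeff_one, if_neg (by omega), hw']
    ring

lemma key_s (j : ℕ) : coeff j (s * Ee * Ee - Qq) - 2 * coeff j (s * Ph) = - coeff (j+3) s := by
  have h : X ^ 3 * (s * Ee * Ee - Qq - C 2 * (s * Ph)) = 1 - C z2 * X + C (z2^2 - coeff 2 eta) * X ^ 2 - s := by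
    linear_combination s * key + (1 - C z2 * X + C (z2^2 - coeff 2 eta) * X ^ 2 + X ^ 3 * Qq) * eta_s
  have h2 := congrArg (coeff (j+3)) h
  rw [coeff_X_pow_mul, map_sub, coeff_C_mul] at h2
  rw [h2, map_sub, map_add, map_sub, coeff_C_mul, coeff_C_mul, coeff_one, coeff_X, coeff_X_pow, if_neg (by omega), if_neg (by omega), if_neg (by omega)]
  ring
end Hof
theorem hoffman_identity (c : ℕ) (hc : 0 < c) :
    mzv ([3] ++ List.replicate (c - 1) 2 ++ [1, 2])
      = mzv (List.replicate (c + 2) 2) + 2 * mzv ([3, 3] ++ List.replicate (c - 1) 2) := by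
  obtain ⟨j, rfl⟩ : ∃ j, c = j + 1 := ⟨c - 1, by omega⟩
  rw [Nat.add_sub_cancel, Hof.mzv_12, Hof.mzv_33, Hof.mzv_two]
  have h := Hof.key_s j
  rw [show j + 1 + 2 = j + 3 by ring, pow_add]
  linear_combination (-1)^j * h
end

section
/- Let p be a prime, s a positive integer, and a_1,...,a_s, b_1,...,b_s positive integers. With l = a_1+···+a_s − s, one has the congruence Σ over 0<n_{i,1}≤···≤n_{i,a_i}≤m_{i,1}≤···≤m_{i,b_i}<p (for i∈[s]) with m_{i,b_i}<n_{i+1,1}, of Π_i 1/((p−n_{i,1})···(p−n_{i,a_i}) m_{i,1}···m_{i,b_i}) ≡ (−1)^l · Σ_{0<n_1<···<n_s<p} 1/(n_1^{a_1+b_1}···n_s^{a_s+b_s}) (mod p), as an identity of elements of ℤ/pℤ obtained from rationals whose denominators are prime to p. -/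
namespace Dia
open Finset

variable {K : Type*} [Field K]

def E (p : ℕ) (g : ℕ → K) (F : ℕ → K) (x : ℕ) : K := ∑ k ∈ Ico x p, g k * F k

lemma fin_ico (p x : ℕ) (f : ℕ → K) :
    (∑ k : Fin p, if x ≤ (k : ℕ) then f k else 0) = ∑ k ∈ Ico x p, f k := by
  rw [Fin.sum_univ_eq_sum_range (fun k => if x ≤ k then f k else 0) p, ← sum_filter]
  apply sum_congr _ (fun _ _ => rfl)
  ext k; simp; omega

lemma chain (p : ℕ) (g F : ℕ → K) : ∀ k x : ℕ,
    (∑ c : Fin (k+1) → Fin p, if (x ≤ (c 0 : ℕ) ∧ ∀ i j, i ≤ j → (c i : ℕ) ≤ (c j : ℕ))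
      then (∏ j, g (c j)) * F (c (Fin.last k)) else 0) = (E p g)^[k+1] F x := by
  intro k
  induction k with
  | zero =>
    intro x
    rw [← (Equiv.funUnique (Fin 1) (Fin p)).symm.sum_comp]
    simp only [Function.iterate_one, zero_add, E]
    rw [← fin_ico]
    apply sum_congr rfl; intro c _
    simp
  | succ k ih =>
    intro x
    rw [Function.iterate_succ_apply', E, ← fin_ico,
      ← (Fin.consEquiv (fun _ : Fin (k+2) => Fin p)).sum_comp, Fintype.sum_prod_type]
    apply sum_congr rfl; intro c _
    rw [← ih]
    split_ifs with h
    · rw [mul_sum]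
      apply sum_congr rfl; intro d _
      have : (x ≤ ((Fin.consEquiv (fun _ : Fin (k+2) => Fin p)) (c, d) 0 : ℕ) ∧
          ∀ i j, i ≤ j → ((Fin.consEquiv (fun _ : Fin (k+2) => Fin p)) (c, d) i : ℕ) ≤
            ((Fin.consEquiv (fun _ : Fin (k+2) => Fin p)) (c, d) j : ℕ)) ↔
          ((c : ℕ) ≤ (d 0 : ℕ) ∧ ∀ i j, i ≤ j → (d i : ℕ) ≤ (d j : ℕ)) := by
        simp only [Fin.consEquiv, Equiv.coe_fn_mk, Fin.cons_zero, Fin.forall_fin_succ (n := k+1),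
          Fin.cons_succ, Fin.succ_le_succ_iff]
        constructor
        · rintro ⟨_, ⟨_, h1⟩, h2⟩
          exact ⟨h1 0 (Fin.zero_le _), fun i => (h2 i).2⟩
        · rintro ⟨h1, h2⟩
          refine ⟨h, ⟨fun _ => le_rfl, fun i _ => h1.trans (h2 0 i (Fin.zero_le _))⟩,
            fun i => ⟨fun hi => ?_, h2 i⟩⟩
          exact absurd hi (by simp)
      simp only [this]
      split_ifs
      · rw [Fin.prod_univ_succ]
        simp [Fin.consEquiv, ← Fin.succ_last, mul_assoc]
      · simp
    · apply sum_eq_zero; intro d _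
      rw [if_neg]
      rintro ⟨h1, _⟩
      exact h h1

lemma chain' (p : ℕ) (g F : ℕ → K) (w : ℕ) (hw : 0 < w) (x : ℕ) :
    (∑ c : Fin w → Fin p, if (x ≤ (c ⟨0, hw⟩ : ℕ) ∧ ∀ i j, i ≤ j → (c i : ℕ) ≤ (c j : ℕ))
      then (∏ j, g (c j)) * F (c ⟨w - 1, Nat.sub_lt hw Nat.one_pos⟩) else 0)
      = (E p g)^[w] F x := by
  obtain ⟨k, rfl⟩ : ∃ k, w = k + 1 := ⟨w - 1, by omega⟩
  exact chain p g F k x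

def U (p : ℕ) (g h : ℕ → K) (s : ℕ) (a b : Fin s → ℕ) (ha : ∀ i, 0 < a i) (hb : ∀ i, 0 < b i)
    (L : ℕ) : K :=
  (∑ n : (i : Fin s) → Fin (a i) → Fin p, ∑ m : (i : Fin s) → Fin (b i) → Fin p,
      if (∀ i, L < (n i ⟨0, ha i⟩ : ℕ))
          ∧ (∀ i, ∀ j k : Fin (a i), j ≤ k → (n i j : ℕ) ≤ (n i k : ℕ))
          ∧ (∀ i, ∀ j k : Fin (b i), j ≤ k → (m i j : ℕ) ≤ (m i k : ℕ))
          ∧ (∀ i, (n i ⟨a i - 1, Nat.sub_lt (ha i) Nat.one_pos⟩ : ℕ) ≤ (m i ⟨0, hb i⟩ : ℕ))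
          ∧ (∀ i : Fin s, ∀ h : (i : ℕ) + 1 < s,
              (m i ⟨b i - 1, Nat.sub_lt (hb i) Nat.one_pos⟩ : ℕ)
                < (n ⟨(i : ℕ) + 1, h⟩ ⟨0, ha _⟩ : ℕ))
      then ∏ i, ((∏ j, g (n i j)) * ∏ j, h (m i j))
      else 0)

def Z (p : ℕ) (h : ℕ → K) (s : ℕ) (w : Fin s → ℕ) (L : ℕ) : K :=
  ∑ n : Fin s → Fin p,
          if (∀ i j : Fin s, i < j → (n i : ℕ) < (n j : ℕ)) ∧ (∀ i, L < (n i : ℕ))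
          then ∏ i, h (n i) ^ (w i)
          else 0

lemma Z_succ (p : ℕ) (h : ℕ → K) (s : ℕ) (w : Fin (s+1) → ℕ) (L : ℕ) :
    Z p h (s+1) w L = ∑ k ∈ Ico (L+1) p, h k ^ w 0 * Z p h s (fun i => w i.succ) k := by
  rw [← fin_ico, Z, ← (Fin.consEquiv (fun _ : Fin (s+1) => Fin p)).sum_comp,
    Fintype.sum_prod_type]
  apply sum_congr rfl; intro c _
  split_ifs with hc
  · rw [Z, mul_sum]
    apply sum_congr rfl; intro d _
    have : ((∀ i j : Fin (s+1), i < j → ((Fin.consEquiv (fun _ : Fin (s+1) => Fin p)) (c, d) i : ℕ) <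
            ((Fin.consEquiv (fun _ : Fin (s+1) => Fin p)) (c, d) j : ℕ)) ∧
          ∀ i, L < ((Fin.consEquiv (fun _ : Fin (s+1) => Fin p)) (c, d) i : ℕ)) ↔
          ((∀ i j : Fin s, i < j → (d i : ℕ) < (d j : ℕ)) ∧ ∀ i, (c : ℕ) < (d i : ℕ)) := by
      simp only [Fin.consEquiv, Equiv.coe_fn_mk, Fin.cons_zero, Fin.forall_fin_succ (n := s),
          Fin.cons_succ, Fin.succ_lt_succ_iff]
      constructor
      · rintro ⟨⟨⟨_, h1⟩, h2⟩, _, h3⟩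
        exact ⟨fun i => (h2 i).2, fun i => h1 i (Fin.succ_pos _)⟩
      · rintro ⟨h1, h2⟩
        refine ⟨⟨⟨fun h => absurd h (lt_irrefl _), fun i _ => h2 i⟩, fun i => ⟨fun hi => ?_, h1 i⟩⟩,
          hc, fun i => lt_of_lt_of_le hc (h2 i).le⟩
        exact absurd hi (by simp)
    simp only [this]
    split_ifs
    · rw [Fin.prod_univ_succ]
      simp [Fin.consEquiv]
    · simp
  · apply sum_eq_zero; intro d _
    rw [if_neg]
    rintro ⟨_, h1⟩
    exact hc (h1 0)

lemma U_succ (p : ℕ) (g h : ℕ → K) (s : ℕ) (a b : Fin (s+1) → ℕ) (ha : ∀ i, 0 < a i)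
    (hb : ∀ i, 0 < b i) (L : ℕ) :
    U p g h (s+1) a b ha hb L = (E p g)^[a 0] ((E p h)^[b 0]
      (U p g h s (fun i => a i.succ) (fun i => b i.succ) (fun i => ha _) (fun i => hb _))) (L+1) := by
  rw [← chain' p g _ _ (ha 0)]
  simp only [← chain' p h _ _ (hb 0)]
  rw [U, ← (Fin.consEquiv (fun i : Fin (s+1) => Fin (a i) → Fin p)).sum_comp,
    Fintype.sum_prod_type]
  apply sum_congr rfl; intro c _
  simp only [← (Fin.consEquiv (fun i : Fin (s+1) => Fin (b i) → Fin p)).sum_comp,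
    Fintype.sum_prod_type]
  rw [sum_comm]
  have key : ∀ (d : Fin (b 0) → Fin p) (n : (i : Fin s) → Fin (a i.succ) → Fin p)
     (m : (i : Fin s) → Fin (b i.succ) → Fin p),
     ((∀ i, L < ((Fin.consEquiv (fun i : Fin (s+1) => Fin (a i) → Fin p)) (c, n) i ⟨0, ha i⟩ : ℕ))
          ∧ (∀ i, ∀ j k : Fin (a i), j ≤ k → ((Fin.consEquiv (fun i : Fin (s+1) => Fin (a i) → Fin p)) (c, n) i j : ℕ) ≤ ((Fin.consEquiv (fun i : Fin (s+1) => Fin (a i) → Fin p)) (c, n) i k : ℕ))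
          ∧ (∀ i, ∀ j k : Fin (b i), j ≤ k → ((Fin.consEquiv (fun i : Fin (s+1) => Fin (b i) → Fin p)) (d, m) i j : ℕ) ≤ ((Fin.consEquiv (fun i : Fin (s+1) => Fin (b i) → Fin p)) (d, m) i k : ℕ))
          ∧ (∀ i, ((Fin.consEquiv (fun i : Fin (s+1) => Fin (a i) → Fin p)) (c, n) i ⟨a i - 1, Nat.sub_lt (ha i) Nat.one_pos⟩ : ℕ) ≤ ((Fin.consEquiv (fun i : Fin (s+1) => Fin (b i) → Fin p)) (d, m) i ⟨0, hb i⟩ : ℕ))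
          ∧ (∀ i : Fin (s+1), ∀ h : (i : ℕ) + 1 < s+1,
              ((Fin.consEquiv (fun i : Fin (s+1) => Fin (b i) → Fin p)) (d, m) i ⟨b i - 1, Nat.sub_lt (hb i) Nat.one_pos⟩ : ℕ)
                < ((Fin.consEquiv (fun i : Fin (s+1) => Fin (a i) → Fin p)) (c, n) ⟨(i : ℕ) + 1, h⟩ ⟨0, ha _⟩ : ℕ))) ↔
      ((L + 1 ≤ (c ⟨0, ha 0⟩ : ℕ) ∧ ∀ i j, i ≤ j → (c i : ℕ) ≤ (c j : ℕ)) ∧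
       ((c ⟨a 0 - 1, Nat.sub_lt (ha 0) Nat.one_pos⟩ : ℕ) ≤ (d ⟨0, hb 0⟩ : ℕ) ∧
          ∀ i j, i ≤ j → (d i : ℕ) ≤ (d j : ℕ)) ∧
       ((∀ i, (d ⟨b 0 - 1, Nat.sub_lt (hb 0) Nat.one_pos⟩ : ℕ) < (n i ⟨0, ha i.succ⟩ : ℕ))
          ∧ (∀ i, ∀ j k : Fin (a i.succ), j ≤ k → (n i j : ℕ) ≤ (n i k : ℕ))
          ∧ (∀ i, ∀ j k : Fin (b i.succ), j ≤ k → (m i j : ℕ) ≤ (m i k : ℕ))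
          ∧ (∀ i, (n i ⟨a i.succ - 1, Nat.sub_lt (ha i.succ) Nat.one_pos⟩ : ℕ) ≤ (m i ⟨0, hb i.succ⟩ : ℕ))
          ∧ (∀ i : Fin s, ∀ h : (i : ℕ) + 1 < s,
              (m i ⟨b i.succ - 1, Nat.sub_lt (hb i.succ) Nat.one_pos⟩ : ℕ)
                < (n ⟨(i : ℕ) + 1, h⟩ ⟨0, ha _⟩ : ℕ)))) := by
    intro d n m
    constructor
    · rintro ⟨h1, h2, h3, h4, h5⟩
      have h2' : ∀ i, ∀ j k : Fin (a i.succ), j ≤ k → (n i j : ℕ) ≤ (n i k : ℕ) := fun i => h2 i.succ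
      have h3' : ∀ i, ∀ j k : Fin (b i.succ), j ≤ k → (m i j : ℕ) ≤ (m i k : ℕ) := fun i => h3 i.succ
      have h4' : ∀ i, (n i ⟨a i.succ - 1, Nat.sub_lt (ha i.succ) Nat.one_pos⟩ : ℕ) ≤ (m i ⟨0, hb i.succ⟩ : ℕ) := fun i => h4 i.succ
      have h5' : ∀ i : Fin s, ∀ h : (i : ℕ) + 1 < s,
              (m i ⟨b i.succ - 1, Nat.sub_lt (hb i.succ) Nat.one_pos⟩ : ℕ)
                < (n ⟨(i : ℕ) + 1, h⟩ ⟨0, ha _⟩ : ℕ) := fun i h => h5 i.succ (by simpa using h)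
      refine ⟨⟨h1 0, h2 0⟩, ⟨h4 0, h3 0⟩, ?_, h2', h3', h4', h5'⟩
      rintro ⟨i, hi⟩
      induction i with
      | zero => exact h5 0 (by simpa using hi)
      | succ i ih =>
        have hi' : i < s := by omega
        refine (ih hi').trans (lt_of_le_of_lt ?_ (h5' ⟨i, hi'⟩ hi))
        exact (h2' ⟨i, hi'⟩ _ _ (by simp [Fin.le_def])).trans ((h4' ⟨i, hi'⟩).trans
          (h3' ⟨i, hi'⟩ _ _ (by simp [Fin.le_def])))
    · rintro ⟨⟨c1, c2⟩, ⟨d1, d2⟩, h1, h2, h3, h4, h5⟩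
      refine ⟨?_, ?_, ?_, ?_, ?_⟩
      · intro i
        refine Fin.cases c1 (fun i => ?_) i
        refine lt_of_lt_of_le c1 (le_trans ?_ (h1 i).le)
        exact (c2 _ _ (by simp [Fin.le_def])).trans (d1.trans (d2 _ _ (by simp [Fin.le_def])))
      · exact fun i => Fin.cases c2 h2 i
      · exact fun i => Fin.cases d2 h3 i
      · exact fun i => Fin.cases d1 h4 i
      · intro i
        refine Fin.cases ?_ ?_ i
        · intro h
          exact h1 ⟨0, by simpa using h⟩
        · intro i h
          exact h5 i (by simpa using h)
  simp only [key]
  by_cases hc : (L + 1 ≤ (c ⟨0, ha 0⟩ : ℕ) ∧ ∀ i j, i ≤ j → (c i : ℕ) ≤ (c j : ℕ))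
  swap
  · simp only [hc, false_and, if_false, sum_const_zero]
  rw [if_pos hc, mul_sum]
  apply sum_congr rfl; intro d _
  by_cases hd : ((c ⟨a 0 - 1, Nat.sub_lt (ha 0) Nat.one_pos⟩ : ℕ) ≤ (d ⟨0, hb 0⟩ : ℕ) ∧
          ∀ i j, i ≤ j → (d i : ℕ) ≤ (d j : ℕ))
  swap
  · simp only [hd, false_and, and_false, if_false, sum_const_zero, mul_zero]
  rw [if_pos hd, U, mul_sum, mul_sum]
  apply sum_congr rfl; intro n _
  rw [mul_sum, mul_sum]
  apply sum_congr rfl; intro m _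
  simp only [eq_true hc, eq_true hd, true_and]
  split_ifs
  · rw [Fin.prod_univ_succ]
    simp [Fin.consEquiv, mul_assoc]
  · simp

def S (p : ℕ) (u : ℕ → K) (x : ℕ) : K := ∑ n ∈ Ico x p, u n

def Bt (p : ℕ) (u : ℕ → K) (k : ℕ) : K := (k : K)⁻¹ * ∑ n ∈ Ico k p, u n

def T (p : ℕ) (u : ℕ → K) (k : ℕ) : K := ∑ n ∈ range p, u n * ((-1) ^ k * (n.choose k : K))

lemma E_S (p w : ℕ) (u : ℕ → K) :
    (E p (fun k => (k : K)⁻¹))^[w] (S p u) = S p ((Bt p)^[w] u) := by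
  have : Function.Semiconj (S p) (Bt p) (E p (fun k => (k : K)⁻¹)) := fun u => rfl
  exact (this.iterate_right w u).symm

lemma E_smul (p w : ℕ) (g : ℕ → K) (c : K) (F : ℕ → K) :
    (E p g)^[w] (fun x => c * F x) = fun x => c * (E p g)^[w] F x := by
  have : Function.Commute (fun (F : ℕ → K) x => c * F x) (E p g) := by
    intro F; funext x
    simp only [E, mul_sum]
    exact sum_congr rfl fun _ _ => by ring
  exact (this.iterate_right w F).symm

lemma E_neg (p w : ℕ) (g : ℕ → K) (F : ℕ → K) :
    (E p (fun k => - g k))^[w] F = fun x => (-1) ^ w * (E p g)^[w] F x := by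
  induction w with
  | zero => simp
  | succ w ih =>
    rw [Function.iterate_succ_apply', ih, Function.iterate_succ_apply']
    funext x
    simp only [E, mul_sum]
    exact sum_congr rfl fun _ _ => by ring

lemma E_congr (p w : ℕ) (hw : 0 < w) (g F F' : ℕ → K) (h : ∀ k < p, F k = F' k) :
    (E p g)^[w] F = (E p g)^[w] F' := by
  obtain ⟨k, rfl⟩ : ∃ k, w = k + 1 := ⟨w - 1, by omega⟩
  rw [Function.iterate_succ_apply, Function.iterate_succ_apply]
  congr 1
  funext x
  exact sum_congr rfl fun k hk => by rw [h k (mem_Ico.1 hk).2]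

lemma Bt_p (p w : ℕ) (hw : 0 < w) (u : ℕ → K) : (Bt p)^[w] u p = 0 := by
  obtain ⟨k, rfl⟩ : ∃ k, w = k + 1 := ⟨w - 1, by omega⟩
  rw [Function.iterate_succ_apply']
  simp [Bt]

lemma S_shift (p : ℕ) (v : ℕ → K) (hv : v p = 0) (L : ℕ) (hL : L < p) :
    S p v (L+1) = S p (fun n => v (n+1)) L := by
  rw [S, S, sum_Ico_add' v L p 1, sum_Ico_succ_top (by omega), hv, add_zero]

lemma choose_sum (p : ℕ) (hp : ∀ k, 0 < k → k < p → (k : K) ≠ 0) (k : ℕ) (hk : 0 < k) (hkp : k < p)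
    (n : ℕ) (hn : n < p) :
    ∑ m ∈ range (n+1), (m : K)⁻¹ * (m.choose k : K) = (k : K)⁻¹ * (n.choose k : K) := by
  obtain ⟨j, rfl⟩ : ∃ j, k = j + 1 := ⟨k - 1, by omega⟩
  induction n with
  | zero => simp
  | succ n ih =>
    rw [sum_range_succ, ih (by omega)]
    have h1 := hp (j+1) hk hkp
    have h2 := hp (n+1) (by omega) hn
    have h3 : ((n+1 : ℕ) : K) * (n.choose j : K) = ((n+1).choose (j+1) : K) * ((j+1 : ℕ) : K) := by
      exact_mod_cast congrArg (Nat.cast (R := K)) (Nat.add_one_mul_choose_eq n j)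
    have h4 : ((n+1).choose (j+1) : K) = (n.choose j : K) + (n.choose (j+1) : K) := by
      rw [Nat.choose_succ_succ' n j, Nat.cast_add]
    have h5 : ((n+1 : ℕ) : K)⁻¹ * ((n+1).choose (j+1) : K) = ((j+1 : ℕ) : K)⁻¹ * (n.choose j : K) := by
      field_simp
      rw [h3]
    rw [h5, h4]; ring

lemma TA (p : ℕ) (hp : ∀ k, 0 < k → k < p → (k : K) ≠ 0) (k : ℕ) (hk : 0 < k) (hkp : k < p)
    (u : ℕ → K) : (k : K)⁻¹ * T p u k = T p (Bt p u) k := by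
  have h1 : T p (Bt p u) k = ∑ m ∈ range p, ∑ n ∈ Ico m p,
      (-1) ^ k * u n * ((m : K)⁻¹ * (m.choose k : K)) := by
    refine sum_congr rfl fun m _ => ?_
    rw [Bt, mul_sum, sum_mul]
    exact sum_congr rfl fun _ _ => by ring
  have h2 : ∑ m ∈ range p, ∑ n ∈ Ico m p,
      (-1) ^ k * u n * ((m : K)⁻¹ * (m.choose k : K)) = ∑ n ∈ range p, ∑ m ∈ range (n+1),
      (-1) ^ k * u n * ((m : K)⁻¹ * (m.choose k : K)) := by
    apply sum_comm'
    intro x y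
    simp; omega
  rw [h1, h2, T, mul_sum]
  refine sum_congr rfl fun n hn => ?_
  rw [← mul_sum, choose_sum p hp k hk hkp n (mem_range.1 hn)]
  ring

lemma TAw (p : ℕ) (hp : ∀ k, 0 < k → k < p → (k : K) ≠ 0) (k : ℕ) (hk : 0 < k) (hkp : k < p)
    (u : ℕ → K) (w : ℕ) : ((k : K)⁻¹) ^ w * T p u k = T p ((Bt p)^[w] u) k := by
  induction w with
  | zero => simp
  | succ w ih =>
    rw [Function.iterate_succ_apply', ← TA p hp k hk hkp, ← ih]; ring

lemma alt_sum (L m t : ℕ) : ∑ k ∈ Ico (L+1) (L+1+t), ((-1) ^ k * ((m+1).choose k : K)) =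
    (-1) ^ (L+t) * (m.choose (L+t) : K) - (-1) ^ L * (m.choose L : K) := by
  induction t with
  | zero => simp
  | succ t ih =>
    rw [← add_assoc, sum_Ico_succ_top (by omega), ih]
    have h4 : ((m+1).choose (L+t+1) : K) = (m.choose (L+t) : K) + (m.choose (L+t+1) : K) := by
      rw [Nat.choose_succ_succ' m (L+t), Nat.cast_add]
    have : L + 1 + t = L + t + 1 := by ring
    rw [this, h4, ← add_assoc]; ring

lemma TP (p : ℕ) (v : ℕ → K) (hv : v p = 0) (L : ℕ) (hL : L < p) :
    ∑ k ∈ Ico (L+1) p, T p v k = - T p (fun n => v (n+1)) L := by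
  simp only [T]
  rw [sum_comm]
  simp only [← mul_sum]
  obtain ⟨q, rfl⟩ : ∃ q, p = q + 1 := ⟨p - 1, by omega⟩
  rw [sum_range_succ', sum_range_succ, hv, zero_mul, add_zero, ← sum_neg_distrib]
  have h0 : ∑ k ∈ Ico (L+1) (q+1), ((-1) ^ k * (Nat.choose 0 k : K)) = 0 := by
    refine sum_eq_zero fun k hk => ?_
    rw [Nat.choose_eq_zero_of_lt (by have := (mem_Ico.1 hk).1; omega)]; simp
  rw [h0, mul_zero, add_zero]
  refine sum_congr rfl fun m hm => ?_
  have h := alt_sum (K := K) L m (q - L)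
  rw [show L + 1 + (q - L) = q + 1 by omega, show L + (q - L) = q by omega,
    Nat.choose_eq_zero_of_lt (mem_range.1 hm)] at h
  rw [h]; simp

lemma main (p : ℕ) (hp0 : 0 < p) (hp : ∀ k, 0 < k → k < p → (k : K) ≠ 0)
    (hc : ∀ L < p, (-1) ^ L * ((p-1).choose L : K) = 1) : ∀ (s : ℕ)
    (a b : Fin s → ℕ) (ha : ∀ i, 0 < a i) (hb : ∀ i, 0 < b i),
    ∃ u : ℕ → K, (∀ L < p, U p (fun k => -(k : K)⁻¹) (fun k => (k : K)⁻¹) s a b ha hb L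
        = (-1) ^ (∑ i, a i) * S p u L) ∧
      ∀ L < p, Z p (fun k => (k : K)⁻¹) s (fun i => a i + b i) L = (-1) ^ s * T p u L := by
  intro s
  induction s with
  | zero =>
    intro a b ha hb
    refine ⟨fun n => if n = p - 1 then 1 else 0, fun L hL => ?_, fun L hL => ?_⟩
    · simp [U, S]; omega
    · simp only [Z, T, ite_mul, zero_mul, one_mul]
      rw [sum_ite_eq', if_pos (by simp; omega), hc L hL]
      simp
  | succ s ih =>
    intro a b ha hb
    obtain ⟨u, hU, hZ⟩ := ih (fun i => a i.succ) (fun i => b i.succ) (fun i => ha _) (fun i => hb _)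
    have hw : 0 < a 0 + b 0 := by have := ha 0; omega
    refine ⟨fun n => (Bt p)^[a 0 + b 0] u (n+1), fun L hL => ?_, fun L hL => ?_⟩
    · rw [U_succ, E_neg, E_congr p _ (hb 0) _ _ _ hU, E_smul, E_smul]
      simp only []
      rw [← Function.iterate_add_apply, E_S, S_shift p _ (Bt_p p _ hw u) L hL, Fin.sum_univ_succ]
      ring
    · rw [Z_succ]
      have : ∀ k ∈ Ico (L+1) p, ((k : K)⁻¹) ^ (a 0 + b 0) * Z p (fun k => (k : K)⁻¹) s
          (fun i => a i.succ + b i.succ) k = (-1) ^ s * T p ((Bt p)^[a 0 + b 0] u) k := by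
        intro k hk
        have hk := mem_Ico.1 hk
        rw [hZ k hk.2, ← TAw p hp k (by omega) hk.2]; ring
      rw [sum_congr rfl this, ← mul_sum, TP p _ (Bt_p p _ hw u) L hL]
      ring

end Dia

/-- Hirose–Maesaka–Seki–Watanabe-type congruence: for a prime `p`, positive integers
`a₁,…,a_s, b₁,…,b_s` and `l = a₁+⋯+a_s − s`, the sum over
`0<n_{i,1}≤⋯≤n_{i,a_i}≤m_{i,1}≤⋯≤m_{i,b_i}<p` (`i ∈ [s]`) with `m_{i,b_i} < n_{i+1,1}`
of `∏_i 1/((p−n_{i,1})⋯(p−n_{i,a_i}) m_{i,1}⋯m_{i,b_i})` is congruent mod `p` to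
`(−1)^l ∑_{0<n₁<⋯<n_s<p} 1/(n₁^{a₁+b₁}⋯n_s^{a_s+b_s})`, as elements of `ℤ/pℤ`. -/
theorem diamond_congruence (p : ℕ) (hp : p.Prime) (s : ℕ) (hs : 0 < s)
    (a b : Fin s → ℕ) (ha : ∀ i, 0 < a i) (hb : ∀ i, 0 < b i) :
    (∑ n : (i : Fin s) → Fin (a i) → Fin p, ∑ m : (i : Fin s) → Fin (b i) → Fin p,
      if (∀ i, 0 < (n i ⟨0, ha i⟩ : ℕ))
          ∧ (∀ i, ∀ j k : Fin (a i), j ≤ k → (n i j : ℕ) ≤ (n i k : ℕ))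
          ∧ (∀ i, ∀ j k : Fin (b i), j ≤ k → (m i j : ℕ) ≤ (m i k : ℕ))
          ∧ (∀ i, (n i ⟨a i - 1, Nat.sub_lt (ha i) Nat.one_pos⟩ : ℕ) ≤ (m i ⟨0, hb i⟩ : ℕ))
          ∧ (∀ i : Fin s, ∀ h : (i : ℕ) + 1 < s,
              (m i ⟨b i - 1, Nat.sub_lt (hb i) Nat.one_pos⟩ : ℕ)
                < (n ⟨(i : ℕ) + 1, h⟩ ⟨0, ha _⟩ : ℕ))
      then ∏ i, ((∏ j, ((p : ZMod p) - ((n i j : ℕ) : ZMod p))⁻¹)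
            * ∏ j, (((m i j : ℕ) : ZMod p))⁻¹)
      else 0)
    = (-1) ^ ((∑ i, a i) - s)
      * ∑ n : Fin s → Fin p,
          if (∀ i j : Fin s, i < j → (n i : ℕ) < (n j : ℕ)) ∧ (∀ i, 0 < (n i : ℕ))
          then ∏ i, (((n i : ℕ) : ZMod p) ^ (a i + b i))⁻¹
          else 0 := by
  haveI : Fact p.Prime := ⟨hp⟩
  have hne : ∀ k, 0 < k → k < p → (k : ZMod p) ≠ 0 := by
    intro k h1 h2 h
    rw [ZMod.natCast_eq_zero_iff] at h
    exact absurd (Nat.le_of_dvd h1 h) (by omega)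
  have hc : ∀ L < p, (-1) ^ L * ((p-1).choose L : ZMod p) = 1 := by
    intro L
    induction L with
    | zero => simp
    | succ L ih =>
      intro hL
      have h1 := ih (by omega)
      have h2 : ((p.choose (L+1) : ℕ) : ZMod p) = 0 :=
        (ZMod.natCast_eq_zero_iff _ _).2 (hp.dvd_choose_self (by omega) hL)
      have h3 : p.choose (L+1) = (p-1).choose L + (p-1).choose (L+1) := by
        conv_lhs => rw [show p = (p - 1) + 1 by omega]
        exact Nat.choose_succ_succ' _ _
      rw [h3, Nat.cast_add] at h2
      rw [eq_neg_of_add_eq_zero_right h2]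
      refine Eq.trans ?_ h1
      ring
  obtain ⟨u, hU, hZ⟩ := Dia.main (K := ZMod p) p hp.pos hne hc s a b ha hb
  have hU := hU 0 hp.pos
  have hZ := hZ 0 hp.pos
  have hST : Dia.S p u 0 = Dia.T p u 0 := by
    simp [Dia.S, Dia.T]
  simp only [Dia.U, Dia.Z] at hU hZ
  simp only [CharP.cast_eq_zero, zero_sub, inv_neg, ← inv_pow]
  have hs' : s ≤ ∑ i, a i := by
    calc s = ∑ i : Fin s, 1 := by simp
      _ ≤ _ := Finset.sum_le_sum fun i _ => ha i
  rw [hU, hZ, hST, ← mul_assoc, ← pow_add, Nat.sub_add_cancel hs']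
end
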